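/- arXiv:2302.09773 — 4 statements merged into one kernel-verified Lean document; each statement's English description precedes it below -/
import Mathlib

section
/- Let 1 ≤ s ≤ N, 1 ≤ t ≤ n − 1 with t even, and set P = x11^{2s}χ11^t, Q = x11^{2s}χ22^t, R = x12^{2s}χ12^t, T = x12^{2s}χ21^t in A = A_{Nn}^{μλ}. For scalars a1, a2, a3, b1, b2, b3, d1, d2, d3, e1, e2, e3 ∈ k put y = a1·P + (1−a1)·Q + a2·R + a3·T, z = b1·P + (1−b1)·Q + b2·R + b3·T, u = d1·P − d1·Q + d2·R + d3·T, v = e1·P − e1·Q + e2·R + e3·T. Then: (i) y·u = 0 iff (1−2a1)d1 = 0, a2d3 + a3d2 = 0, and, when 2t ≠ n, also d1 = 0, a2d2 = 0, a3d3 = 0, while when 2t = n, also a2d2 + λ·a3d3 = 0; (ii) z·u = 0 iff the same conditions hold with (a1,a2,a3) replaced by (b1,b2,b3); (iii) y·v = 0 iff the conditions of (i) hold with (d1,d2,d3) replaced by (e1,e2,e3); (iv) z·v = 0 iff the conditions of (i) hold with (a1,a2,a3) replaced by (b1,b2,b3) and (d1,d2,d3) replaced by (e1,e2,e3). -/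
/-!
The relations `x_{ij} x_{kl} = 0` for `i + j + k + l` odd make the subalgebras generated by
`{x₁₁, x₂₂}` and by `{x₁₂, x₂₁}` annihilate each other, and `x₁₁^{2N} + μ x₁₂^{2N} = 1` splits `1`
between them. So a product vanishes iff both of its block components vanish.

In a block, generated by `a` and `b` with `a² = b²`, put `t = 2h`, `P = a^{2s} (ab)^h` and
`Q = a^{2s} (ba)^h`. As `(ab)(ba) = a⁴`, the product of two combinations of `P` and `Q` is a
combination of `P² = a^{4s} (ab)^t`, `Q² = a^{4s} (ba)^t` and `PQ = QP = a^{4s+2t}`. For `2t < n`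
these are, up to scalars, distinct basis elements. Multiplication by `a^{4(n-t)}` exchanges the
words `(ab)^t`, `(ba)^t` with `(ba)^{n-t}`, `(ab)^{n-t}`, up to a common power of `a` and a scalar,
which reduces `2t > n` to the previous case. For `2t = n` the only coincidence is `Q² = c P²`, where
`χ_b^n = c χ_a^n`.
-/

open scoped TensorProduct

noncomputable section

/-- The alternating product `x i j * x (i+1) (j+1) * x i j * ⋯` with `m` factors,
    i.e. `χ_{ij}^m` for the Suzuki presentation (indices taken in `Fin 2`). -/
def chi {A : Type*} [Ring A] (x : Fin 2 → Fin 2 → A) : Fin 2 → Fin 2 → ℕ → A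
  | _, _, 0 => 1
  | i, j, (m + 1) => x i j * chi x (i + 1) (j + 1) (m)

/-- A presentation of the Suzuki Hopf algebra `A_{Nn}^{μλ}` over `k`:
`x 0 0 = x₁₁`, `x 0 1 = x₁₂`, `x 1 0 = x₂₁`, `x 1 1 = x₂₂`. -/
structure Suzuki (k A : Type*) [Field k] [CharZero k] [IsAlgClosed k]
    [Ring A] [HopfAlgebra k A] where
  N : ℕ
  n : ℕ
  hN : 1 ≤ N
  hn : 2 ≤ n
  μ : k
  lam : k
  hμ : μ = 1 ∨ μ = -1
  hlam : lam = 1 ∨ lam = -1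
  x : Fin 2 → Fin 2 → A
  gen : Algebra.adjoin k (Set.range fun p : Fin 2 × Fin 2 => x p.1 p.2) = ⊤
  rel_sq1 : x 0 0 ^ 2 = x 1 1 ^ 2
  rel_sq2 : x 0 1 ^ 2 = x 1 0 ^ 2
  rel_chi1 : chi x 1 0 n = lam • chi x 0 1 n
  rel_chi2 : chi x 0 0 n = chi x 1 1 n
  rel_mu : x 0 0 ^ (2 * N) + μ • x 0 1 ^ (2 * N) = 1
  rel_odd : ∀ i j i' j' : Fin 2, Odd ((i : ℕ) + j + i' + j') → x i j * x i' j' = 0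
  comul_chi : ∀ (i j : Fin 2) (m : ℕ), 1 ≤ m →
    Coalgebra.comul (R := k) (chi x i j m)
      = chi x i 0 m ⊗ₜ[k] chi x 0 j m + chi x i 1 m ⊗ₜ[k] chi x 1 j m
  counit_x : ∀ i j : Fin 2,
    Coalgebra.counit (R := k) (x i j) = if i = j then (1 : k) else 0
  antipode_x : ∀ i j : Fin 2,
    HopfAlgebra.antipode (R := k) (x i j) = x j i ^ (4 * N - 1)
  basis_indep : LinearIndependent k (fun p : Fin 2 × Fin (2 * N) × Fin n =>
      if p.1 = 0 then x 0 0 ^ ((p.2.1 : ℕ) + 1) * chi x 1 1 (p.2.2 : ℕ)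
      else x 0 1 ^ ((p.2.1 : ℕ) + 1) * chi x 1 0 (p.2.2 : ℕ))
  basis_span : Submodule.span k (Set.range fun p : Fin 2 × Fin (2 * N) × Fin n =>
      if p.1 = 0 then x 0 0 ^ ((p.2.1 : ℕ) + 1) * chi x 1 1 (p.2.2 : ℕ)
      else x 0 1 ^ ((p.2.1 : ℕ) + 1) * chi x 1 0 (p.2.2 : ℕ)) = ⊤

/-- A Hopf algebra automorphism of `A`: a bijective `k`-linear map `A → A` that is
both an algebra homomorphism and a coalgebra homomorphism. -/
def IsHopfAut (k : Type*) {A : Type*} [Field k] [Ring A] [HopfAlgebra k A]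
    (ψ : A ≃ₗ[k] A) : Prop :=
  (∀ a b : A, ψ (a * b) = ψ a * ψ b) ∧ ψ 1 = 1 ∧
  (∀ a : A, Coalgebra.comul (R := k) (ψ a)
      = TensorProduct.map ψ.toLinearMap ψ.toLinearMap (Coalgebra.comul (R := k) a)) ∧
  (∀ a : A, Coalgebra.counit (R := k) (ψ a) = Coalgebra.counit (R := k) a)

/-! ### Alternating words in two elements with equal squares -/

/-- The alternating product `a * b * a * ⋯` with `m` factors; it is `chi` with the two letters as
arguments in place of a matrix of generators and a position in it. -/
def altProd {M : Type*} [Monoid M] : M → M → ℕ → M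
  | _, _, 0 => 1
  | a, b, m + 1 => a * altProd b a m

lemma chi_eq_altProd {A : Type*} [Ring A] (x : Fin 2 → Fin 2 → A) (i j : Fin 2) (m : ℕ) :
    chi x i j m = altProd (x i j) (x (i + 1) (j + 1)) m := by
  have add_one_add_one : ∀ i : Fin 2, i + 1 + 1 = i := by decide
  induction m generalizing i j with
  | zero => rfl
  | succ m ih => rw [chi, altProd, ih, add_one_add_one, add_one_add_one]

section Words

variable {M : Type*} [Monoid M] {a b : M}

lemma altProd_two_mul (a b : M) (h : ℕ) : altProd a b (2 * h) = (a * b) ^ h := by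
  induction h with
  | zero => rw [mul_zero, altProd, pow_zero]
  | succ h ih => rw [mul_add, mul_one, altProd, altProd, ih, pow_succ', mul_assoc]

lemma altProd_two_mul_add_one (a b : M) (h : ℕ) :
    altProd a b (2 * h + 1) = (a * b) ^ h * a := by
  rw [altProd, altProd_two_mul, mul_pow_mul]

lemma pow_mul_mul_pow_succ (a b : M) (m i : ℕ) :
    a ^ m * (a * b) ^ (i + 1) = a ^ (m + 1) * altProd b a (2 * i + 1) := by
  rw [← altProd_two_mul, mul_add, mul_one, altProd, ← mul_assoc, ← pow_succ]

lemma pow_two_mul_eq_of_sq_eq (hab : a ^ 2 = b ^ 2) (m : ℕ) : a ^ (2 * m) = b ^ (2 * m) := by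
  rw [pow_mul, pow_mul, hab]

lemma commute_pow_two_mul_mul_pow (hab : a ^ 2 = b ^ 2) (m j : ℕ) :
    Commute (a ^ (2 * m)) ((a * b) ^ j) := by
  have sq_right : Commute (a ^ 2) b := hab ▸ Commute.pow_self b 2
  rw [pow_mul]
  exact ((Commute.pow_self a 2).mul_right sq_right).pow_pow m j

lemma mul_mul_mul_swap (hab : a ^ 2 = b ^ 2) : a * b * (b * a) = a ^ 4 := by
  calc a * b * (b * a) = a * b ^ 2 * a := by simp only [pow_two, mul_assoc]
    _ = a ^ 4 := by rw [← hab, ← pow_succ', ← pow_succ]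

lemma mul_pow_mul_mul_pow_swap (hab : a ^ 2 = b ^ 2) (h : ℕ) :
    (a * b) ^ h * (b * a) ^ h = a ^ (4 * h) := by
  have comm : Commute (a * b) (b * a) := by
    rw [Commute, SemiconjBy, mul_mul_mul_swap hab, mul_mul_mul_swap hab.symm]
    exact pow_two_mul_eq_of_sq_eq hab 2
  rw [← comm.mul_pow, mul_mul_mul_swap hab, pow_mul]

lemma commute_mul_pow_mul_pow_swap (hab : a ^ 2 = b ^ 2) (h : ℕ) :
    Commute ((a * b) ^ h) ((b * a) ^ h) := by
  rw [Commute, SemiconjBy, mul_pow_mul_mul_pow_swap hab, mul_pow_mul_mul_pow_swap hab.symm,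
    show 4 * h = 2 * (2 * h) by ring, pow_two_mul_eq_of_sq_eq hab]

lemma altProd_two_mul_add_one_sq (hab : a ^ 2 = b ^ 2) (h : ℕ) :
    altProd a b (2 * h + 1) ^ 2 = a ^ (2 * (2 * h + 1)) := by
  have comm : Commute (a ^ 2) ((a * b) ^ h) := by
    simpa only [mul_one] using commute_pow_two_mul_mul_pow hab 1 h
  calc altProd a b (2 * h + 1) ^ 2 = (a * b) ^ h * a * (a * (b * a) ^ h) := by
        rw [pow_two, altProd_two_mul_add_one, mul_pow_mul, ← mul_pow_mul]
    _ = (a * b) ^ h * a ^ 2 * (b * a) ^ h := by simp only [pow_two, mul_assoc]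
    _ = a ^ 2 * ((a * b) ^ h * (b * a) ^ h) := by rw [← comm.eq, mul_assoc]
    _ = a ^ (2 * (2 * h + 1)) := by
        rw [mul_pow_mul_mul_pow_swap hab, ← pow_add]; congr 1; ring

end Words

section ScalarRelation

variable {k A : Type*} [CommSemiring k] [Semiring A] [Algebra k A] {a b : A} {n : ℕ} {c : k}

lemma mul_pow_eq_smul_of_altProd_eq_smul (hab : a ^ 2 = b ^ 2)
    (hn : altProd b a n = c • altProd a b n) : (b * a) ^ n = c • a ^ (2 * n) := by
  obtain ⟨h, rfl | rfl⟩ := Nat.even_or_odd' n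
  · rw [altProd_two_mul, altProd_two_mul] at hn
    calc (b * a) ^ (2 * h) = c • ((a * b) ^ h * (b * a) ^ h) := by
          rw [two_mul, pow_add, ← smul_mul_assoc, ← hn]
      _ = c • a ^ (2 * (2 * h)) := by
          rw [mul_pow_mul_mul_pow_swap hab]; congr 2; ring
  · calc (b * a) ^ (2 * h + 1) = (b * a) ^ h * b * (a * (b * a) ^ h) := by
          rw [show 2 * h + 1 = h + 1 + h by ring, pow_add, pow_succ]
          simp only [mul_assoc]
      _ = altProd b a (2 * h + 1) * altProd a b (2 * h + 1) := by
          rw [altProd_two_mul_add_one, altProd_two_mul_add_one, mul_pow_mul a]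
      _ = c • a ^ (2 * (2 * h + 1)) := by
          rw [hn, smul_mul_assoc, ← pow_two, altProd_two_mul_add_one_sq hab]

lemma pow_mul_mul_pow_eq_smul (hab : a ^ 2 = b ^ 2) (hn : (a * b) ^ n = c • a ^ (2 * n))
    {j : ℕ} (hj : j ≤ n) :
    a ^ (4 * (n - j)) * (a * b) ^ j = c • (a ^ (2 * n) * (b * a) ^ (n - j)) := by
  have comm : Commute (a ^ (4 * (n - j))) ((a * b) ^ j) := by
    rw [show 4 * (n - j) = 2 * (2 * (n - j)) by ring]
    exact commute_pow_two_mul_mul_pow hab _ j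
  calc a ^ (4 * (n - j)) * (a * b) ^ j
      = (a * b) ^ j * ((a * b) ^ (n - j) * (b * a) ^ (n - j)) := by
        rw [comm.eq, mul_pow_mul_mul_pow_swap hab]
    _ = (a * b) ^ n * (b * a) ^ (n - j) := by
        rw [← mul_assoc, ← pow_add, Nat.add_sub_cancel' hj]
    _ = c • (a ^ (2 * n) * (b * a) ^ (n - j)) := by rw [hn, smul_mul_assoc]

lemma combination_mul_combination (hab : a ^ 2 = b ^ 2) (s h : ℕ)
    (α₁ α₂ δ₁ δ₂ : k) :
    (α₁ • (a ^ (2 * s) * (a * b) ^ h) + α₂ • (a ^ (2 * s) * (b * a) ^ h)) *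
        (δ₁ • (a ^ (2 * s) * (a * b) ^ h) + δ₂ • (a ^ (2 * s) * (b * a) ^ h)) =
      (α₁ * δ₁) • (a ^ (4 * s) * (a * b) ^ (2 * h)) +
        (α₂ * δ₂) • (a ^ (4 * s) * (b * a) ^ (2 * h)) +
        (α₁ * δ₂ + α₂ * δ₁) • a ^ (4 * s + 4 * h) := by
  have word_mul (p q : A) (comm : Commute (a ^ (2 * s)) p) :
      a ^ (2 * s) * p * (a ^ (2 * s) * q) = a ^ (4 * s) * (p * q) := by
    rw [comm.symm.mul_mul_mul_comm, ← pow_add, ← add_mul]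
  have comm_ab := commute_pow_two_mul_mul_pow hab s h
  have comm_ba : Commute (a ^ (2 * s)) ((b * a) ^ h) := by
    rw [pow_two_mul_eq_of_sq_eq hab]
    exact commute_pow_two_mul_mul_pow hab.symm s h
  simp only [add_mul, mul_add, smul_mul_smul_comm, word_mul _ _ comm_ab, word_mul _ _ comm_ba,
    ← (commute_mul_pow_mul_pow_swap hab h).eq, mul_pow_mul_mul_pow_swap hab, ← pow_add, ← two_mul]
  module

end ScalarRelation

lemma linearIndependent_of_mul_eq_smul {k A ι : Type*} [Field k] [Ring A] [Algebra k A]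
    {v w : ι → A} (hw : LinearIndependent k w) {q : A} {r : ι → k} (hr : ∀ i, r i ≠ 0)
    (hv : ∀ i, q * v i = r i • w i) : LinearIndependent k v := by
  refine .of_comp (LinearMap.mulLeft k q) ?_
  rw [show LinearMap.mulLeft k q ∘ v = (fun i => Units.mk0 (r i) (hr i)) • w from funext hv]
  exact hw.units_smul _

/-! ### The criterion in one block -/

/-- The relations of one block of the Suzuki algebra, between its two generators `a` and `b`: the
pair `(x₁₁, x₂₂)` with `ν = c = 1`, or `(x₁₂, x₂₁)` with `ν = μ⁻¹` and `c = λ`. The scalar `ν` is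
the one by which `a^{2N}` acts on the block. -/
structure IsSuzukiPair {k A : Type*} [Field k] [Ring A] [Algebra k A] (N n : ℕ) (ν c : k)
    (a b : A) : Prop where
  N_ne_zero : N ≠ 0
  scalar_ne_zero : ν ≠ 0
  mul_self_eq_one : c * c = 1
  sq_eq_sq : a ^ 2 = b ^ 2
  pow_mul_self : a ^ (2 * N) * a = ν • a
  altProd_eq_smul : altProd b a n = c • altProd a b n
  linearIndependent : LinearIndependent k fun p : Fin (2 * N) × Fin n =>
    a ^ ((p.1 : ℕ) + 1) * altProd b a p.2

namespace IsSuzukiPair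

variable {k A : Type*} [Field k] [Ring A] [Algebra k A] {N n : ℕ} {ν c : k} {a b : A}

lemma pow_succ_eq_smul (hab : IsSuzukiPair N n ν c a b) (m : ℕ) :
    a ^ (m + 1) = ν ^ (m / (2 * N)) • a ^ (m % (2 * N) + 1) := by
  have periods (q : ℕ) : (a ^ (2 * N)) ^ q * a = ν ^ q • a := by
    induction q with
    | zero => rw [pow_zero, pow_zero, one_mul, one_smul]
    | succ q ih =>
      rw [pow_succ, mul_assoc, hab.pow_mul_self, mul_smul_comm, ih, smul_smul, pow_succ']
  calc a ^ (m + 1) = (a ^ (2 * N)) ^ (m / (2 * N)) * a * a ^ (m % (2 * N)) := by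
        rw [mul_assoc, ← pow_succ', ← pow_mul, ← pow_add, ← add_assoc, Nat.div_add_mod]
    _ = ν ^ (m / (2 * N)) • a ^ (m % (2 * N) + 1) := by
        rw [periods, smul_mul_assoc, pow_succ']

lemma linearIndependent_pow_mul_altProd (hab : IsSuzukiPair N n ν c a b) {ι : Type*}
    {j : ι → ℕ} (hj : Function.Injective j) (hjn : ∀ i, j i < n) (m : ι → ℕ) :
    LinearIndependent k fun i => a ^ m i * altProd b a (j i) := by
  have mod_lt (i : ι) : m i % (2 * N) < 2 * N :=
    Nat.mod_lt _ (Nat.mul_pos two_pos (Nat.pos_of_ne_zero hab.N_ne_zero))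
  have basis_elements := hab.linearIndependent.comp
    (fun i => (⟨m i % (2 * N), mod_lt i⟩, ⟨j i, hjn i⟩))
    fun i i' h => hj (congrArg (fun p => (p.2 : ℕ)) h)
  refine linearIndependent_of_mul_eq_smul basis_elements (q := a)
    (fun i => pow_ne_zero (m i / (2 * N)) hab.scalar_ne_zero) fun i => ?_
  rw [← mul_assoc, ← pow_succ', hab.pow_succ_eq_smul, smul_mul_assoc]
  rfl

lemma linearIndependent_of_two_mul_lt (hab : IsSuzukiPair N n ν c a b) {j : ℕ} (hj0 : 0 < j)
    (hj : 2 * j < n) (m₁ m₂ m₃ : ℕ) :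
    LinearIndependent k ![a ^ m₁ * (a * b) ^ j, a ^ m₂ * (b * a) ^ j, a ^ m₃] := by
  obtain ⟨i, rfl⟩ := Nat.exists_eq_add_one_of_ne_zero hj0.ne'
  have lengths_injective : Function.Injective ![2 * i + 1, 2 * (i + 1), 0] := by
    intro p q
    fin_cases p <;> fin_cases q <;> simp <;> omega
  have lengths_lt (p : Fin 3) : ![2 * i + 1, 2 * (i + 1), 0] p < n := by
    fin_cases p <;> simp <;> omega
  convert hab.linearIndependent_pow_mul_altProd lengths_injective lengths_lt ![m₁ + 1, m₂, m₃]
    using 1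
  funext p
  fin_cases p
  · exact pow_mul_mul_pow_succ a b m₁ i
  · exact congrArg (a ^ m₂ * ·) (altProd_two_mul b a (i + 1)).symm
  · exact (mul_one _).symm

lemma linearIndependent_of_two_mul_eq (hab : IsSuzukiPair N n ν c a b) {j : ℕ} (hj0 : 0 < j)
    (hj : 2 * j = n) (m₁ m₂ : ℕ) : LinearIndependent k ![a ^ m₁ * (a * b) ^ j, a ^ m₂] := by
  obtain ⟨i, rfl⟩ := Nat.exists_eq_add_one_of_ne_zero hj0.ne'
  have lengths_injective : Function.Injective ![2 * i + 1, 0] := by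
    intro p q
    fin_cases p <;> fin_cases q <;> simp
  have lengths_lt (p : Fin 2) : ![2 * i + 1, 0] p < n := by
    fin_cases p <;> simp <;> omega
  convert hab.linearIndependent_pow_mul_altProd lengths_injective lengths_lt ![m₁ + 1, m₂]
    using 1
  funext p
  fin_cases p
  · exact pow_mul_mul_pow_succ a b m₁ i
  · exact (mul_one _).symm

lemma pow_mul_mul_pow_eq (hab : IsSuzukiPair N n ν c a b) {j : ℕ} (hj : j ≤ n) :
    a ^ (4 * (n - j)) * (a * b) ^ j = c • (a ^ (2 * n) * (b * a) ^ (n - j)) := by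
  have altProd_eq : altProd a b n = c • altProd b a n := by
    rw [hab.altProd_eq_smul, smul_smul, hab.mul_self_eq_one, one_smul]
  have ab_pow := mul_pow_eq_smul_of_altProd_eq_smul hab.sq_eq_sq.symm altProd_eq
  rw [← pow_two_mul_eq_of_sq_eq hab.sq_eq_sq] at ab_pow
  exact pow_mul_mul_pow_eq_smul hab.sq_eq_sq ab_pow hj

lemma pow_mul_mul_pow_swap_eq (hab : IsSuzukiPair N n ν c a b) {j : ℕ} (hj : j ≤ n) :
    a ^ (4 * (n - j)) * (b * a) ^ j = c • (a ^ (2 * n) * (a * b) ^ (n - j)) := by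
  have ba_pow := mul_pow_eq_smul_of_altProd_eq_smul hab.sq_eq_sq hab.altProd_eq_smul
  rw [pow_two_mul_eq_of_sq_eq hab.sq_eq_sq] at ba_pow
  have := pow_mul_mul_pow_eq_smul hab.sq_eq_sq.symm ba_pow hj
  rwa [show 4 * (n - j) = 2 * (2 * (n - j)) by ring, ← pow_two_mul_eq_of_sq_eq hab.sq_eq_sq,
    ← pow_two_mul_eq_of_sq_eq hab.sq_eq_sq, show 2 * (2 * (n - j)) = 4 * (n - j) by ring] at this

lemma linearIndependent_of_lt_two_mul (hab : IsSuzukiPair N n ν c a b) {j : ℕ} (hjn : j < n)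
    (hj : n < 2 * j) (m₁ m₂ m₃ : ℕ) :
    LinearIndependent k ![a ^ m₁ * (a * b) ^ j, a ^ m₂ * (b * a) ^ j, a ^ m₃] := by
  have c_ne_zero : c ≠ 0 := left_ne_zero_of_mul_eq_one hab.mul_self_eq_one
  have short_words := hab.linearIndependent_of_two_mul_lt (j := n - j) (by omega) (by omega)
    (m₂ + 2 * n) (m₁ + 2 * n) (4 * (n - j) + m₃)
  have swapped_words := short_words.comp _ (Equiv.swap (0 : Fin 3) 1).injective
  have absorb {m : ℕ} {p q : A} (h : a ^ (4 * (n - j)) * p = c • (a ^ (2 * n) * q)) :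
      a ^ (4 * (n - j)) * (a ^ m * p) = c • (a ^ (m + 2 * n) * q) := by
    rw [← mul_assoc, ← pow_add, add_comm, pow_add, mul_assoc, h, mul_smul_comm, pow_add, mul_assoc]
  have scalars_ne_zero (p : Fin 3) : ![c, c, 1] p ≠ 0 := by
    fin_cases p <;> simp [c_ne_zero]
  refine linearIndependent_of_mul_eq_smul swapped_words scalars_ne_zero
    (q := a ^ (4 * (n - j))) fun p => ?_
  fin_cases p
  · exact absorb (hab.pow_mul_mul_pow_eq hjn.le)
  · exact absorb (hab.pow_mul_mul_pow_swap_eq hjn.le)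
  · exact (pow_add ..).symm.trans (one_smul k _).symm

theorem mul_eq_zero_iff (hab : IsSuzukiPair N n ν c a b) (s : ℕ) {t : ℕ} (ht0 : 0 < t)
    (htn : t < n) (ht : Even t) (α₁ α₂ δ₁ δ₂ : k) :
    (α₁ • (a ^ (2 * s) * altProd a b t) + α₂ • (a ^ (2 * s) * altProd b a t)) *
        (δ₁ • (a ^ (2 * s) * altProd a b t) + δ₂ • (a ^ (2 * s) * altProd b a t)) = 0 ↔
      α₁ * δ₂ + α₂ * δ₁ = 0 ∧ (2 * t ≠ n → α₁ * δ₁ = 0 ∧ α₂ * δ₂ = 0) ∧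
        (2 * t = n → α₁ * δ₁ + c * (α₂ * δ₂) = 0) := by
  obtain ⟨h, rfl⟩ := even_iff_exists_two_mul.mp ht
  rw [altProd_two_mul, altProd_two_mul, combination_mul_combination hab.sq_eq_sq]
  obtain heq | hne := eq_or_ne (2 * (2 * h)) n
  · have ba_pow : (b * a) ^ (2 * h) = c • (a * b) ^ (2 * h) := by
      rw [← altProd_two_mul, ← altProd_two_mul, heq, hab.altProd_eq_smul]
    have indep := LinearIndependent.pair_iff.mp
      (hab.linearIndependent_of_two_mul_eq ht0 heq (4 * s) (4 * s + 4 * h))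
    rw [ba_pow, mul_smul_comm, smul_smul, ← add_smul, mul_comm _ c]
    refine ⟨fun H => ?_, ?_⟩
    · obtain ⟨r₁, r₂⟩ := indep _ _ H
      exact ⟨r₂, fun hne => absurd heq hne, fun _ => r₁⟩
    · rintro ⟨r₂, -, r₁⟩
      rw [r₁ heq, r₂, zero_smul, zero_smul, add_zero]
  · have indep : LinearIndependent k ![a ^ (4 * s) * (a * b) ^ (2 * h),
        a ^ (4 * s) * (b * a) ^ (2 * h), a ^ (4 * s + 4 * h)] :=
      hne.lt_or_gt.elim (hab.linearIndependent_of_two_mul_lt ht0 · ..)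
        (hab.linearIndependent_of_lt_two_mul htn · ..)
    refine ⟨fun H => ?_, ?_⟩
    · have coeff_eq_zero := Fintype.linearIndependent_iff.mp indep
        ![α₁ * δ₁, α₂ * δ₂, α₁ * δ₂ + α₂ * δ₁] (by simpa [Fin.sum_univ_three] using H)
      exact ⟨coeff_eq_zero 2, fun _ => ⟨coeff_eq_zero 0, coeff_eq_zero 1⟩,
        fun heq => absurd heq hne⟩
    · rintro ⟨r₃, r, -⟩
      rw [(r hne).1, (r hne).2, r₃, zero_smul, zero_smul, zero_smul, add_zero, add_zero]

end IsSuzukiPair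

/-! ### Splitting into two blocks -/

section OrthogonalSubalgebras

variable {k A : Type*} [CommRing k] [Ring A] [Algebra k A]

lemma pow_mul_mem {B : NonUnitalSubalgebra k A} {a p : A} (ha : a ∈ B) (hp : p ∈ B) (m : ℕ) :
    a ^ m * p ∈ B := by
  induction m with
  | zero => rwa [pow_zero, one_mul]
  | succ m ih => rw [pow_succ', mul_assoc]; exact mul_mem ha ih

lemma altProd_succ_mem {B : NonUnitalSubalgebra k A} {a b : A} (ha : a ∈ B) (hb : b ∈ B)
    (m : ℕ) : altProd a b (m + 1) ∈ B := by
  induction m generalizing a b with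
  | zero => rwa [altProd, altProd, mul_one]
  | succ m ih => rw [altProd]; exact mul_mem ha (ih hb ha)

lemma mul_eq_zero_of_mem_adjoin {s t : Set A} (hst : ∀ a ∈ s, ∀ b ∈ t, a * b = 0) {p q : A}
    (hp : p ∈ NonUnitalAlgebra.adjoin k s) (hq : q ∈ NonUnitalAlgebra.adjoin k t) :
    p * q = 0 := by
  induction hp using NonUnitalAlgebra.adjoin_induction with
  | mem a ha =>
    induction hq using NonUnitalAlgebra.adjoin_induction with
    | mem b hb => exact hst a ha b hb
    | add _ _ _ _ h₁ h₂ => rw [mul_add, h₁, h₂, add_zero]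
    | zero => exact mul_zero a
    | mul _ _ _ _ h₁ _ => rw [← mul_assoc, h₁, zero_mul]
    | smul _ _ _ h => rw [mul_smul_comm, h, smul_zero]
  | add _ _ _ _ h₁ h₂ => rw [add_mul, h₁, h₂, add_zero]
  | zero => exact zero_mul q
  | mul _ _ _ _ _ h₂ => rw [mul_assoc, h₂, mul_zero]
  | smul _ _ _ h => rw [smul_mul_assoc, h, smul_zero]

variable {B C : NonUnitalSubalgebra k A} {e f : A}

lemma mul_eq_self_of_add_eq_one (hCB : ∀ q ∈ C, ∀ p ∈ B, q * p = 0) (hf : f ∈ C)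
    (hef : e + f = 1) {p : A} (hp : p ∈ B) : e * p = p := by
  calc e * p = (e + f) * p := by rw [add_mul, hCB f hf p hp, add_zero]
    _ = p := by rw [hef, one_mul]

lemma add_mul_add_eq_zero_iff (hBC : ∀ p ∈ B, ∀ q ∈ C, p * q = 0)
    (hCB : ∀ q ∈ C, ∀ p ∈ B, q * p = 0) (he : e ∈ B) (hf : f ∈ C) (hef : e + f = 1)
    {p₁ p₂ q₁ q₂ : A} (hp₁ : p₁ ∈ B) (hp₂ : p₂ ∈ B) (hq₁ : q₁ ∈ C) (hq₂ : q₂ ∈ C) :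
    (p₁ + q₁) * (p₂ + q₂) = 0 ↔ p₁ * p₂ = 0 ∧ q₁ * q₂ = 0 := by
  have split : (p₁ + q₁) * (p₂ + q₂) = p₁ * p₂ + q₁ * q₂ := by
    rw [add_mul, mul_add, mul_add, hBC p₁ hp₁ q₂ hq₂, hCB q₁ hq₁ p₂ hp₂, add_zero, zero_add]
  rw [split]
  refine ⟨fun h => ?_, fun ⟨h₁, h₂⟩ => by rw [h₁, h₂, add_zero]⟩
  have h₁ : p₁ * p₂ = 0 := by
    calc p₁ * p₂ = e * (p₁ * p₂ + q₁ * q₂) := by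
          rw [mul_add, mul_eq_self_of_add_eq_one hCB hf hef (mul_mem hp₁ hp₂),
            hBC e he _ (mul_mem hq₁ hq₂), add_zero]
      _ = 0 := by rw [h, mul_zero]
  exact ⟨h₁, by rwa [h₁, zero_add] at h⟩

end OrthogonalSubalgebras

section Blocks

variable {k A : Type*} [CommRing k] [Ring A] [Algebra k A]

/-- The block of index `i`: the non-unital subalgebra generated by `x 0 i` and `x 1 (i + 1)`, that
is by `x₁₁` and `x₂₂` for `i = 0` and by `x₁₂` and `x₂₁` for `i = 1`. The elements `y` and `u` of
the criterion are decomposed along the two blocks. -/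
def suzukiBlock (k : Type*) {A : Type*} [CommRing k] [Ring A] [Algebra k A]
    (x : Fin 2 → Fin 2 → A) (i : Fin 2) : NonUnitalSubalgebra k A :=
  NonUnitalAlgebra.adjoin k (Set.range fun r => x r (i + r))

lemma mem_suzukiBlock (x : Fin 2 → Fin 2 → A) (i r : Fin 2) : x r (i + r) ∈ suzukiBlock k x i :=
  NonUnitalAlgebra.subset_adjoin k ⟨r, rfl⟩

lemma chi_mem_suzukiBlock (x : Fin 2 → Fin 2 → A) (i r : Fin 2) {m : ℕ} (hm : m ≠ 0) :
    chi x r (i + r) m ∈ suzukiBlock k x i := by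
  obtain ⟨m, rfl⟩ := Nat.exists_eq_add_one_of_ne_zero hm
  rw [chi_eq_altProd, add_assoc]
  exact altProd_succ_mem (mem_suzukiBlock x i r) (mem_suzukiBlock x i (r + 1)) m

lemma combination_mem_suzukiBlock (x : Fin 2 → Fin 2 → A) (i : Fin 2) (s : ℕ) {t : ℕ}
    (ht : t ≠ 0) (α₁ α₂ : k) :
    α₁ • (x 0 i ^ (2 * s) * chi x 0 i t) + α₂ • (x 0 i ^ (2 * s) * chi x 1 (i + 1) t) ∈
      suzukiBlock k x i := by
  have x_mem : x 0 i ∈ suzukiBlock k x i := by simpa using mem_suzukiBlock (k := k) x i 0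
  have chi_mem : chi x 0 i t ∈ suzukiBlock k x i := by
    simpa using chi_mem_suzukiBlock (k := k) x i 0 ht
  exact add_mem (SMulMemClass.smul_mem _ (pow_mul_mem x_mem chi_mem _))
    (SMulMemClass.smul_mem _ (pow_mul_mem x_mem (chi_mem_suzukiBlock x i 1 ht) _))

end Blocks

/-- A family `x` of elements of an algebra that satisfies the algebra relations of `A_{Nn}^{μλ}`,
with `μ` any nonzero scalar, and for which the standard basis is linearly independent. The coalgebra
structure of the Suzuki Hopf algebra and the spanning property of its basis are left out. -/
structure IsSuzukiFamily {k A : Type*} [Field k] [Ring A] [Algebra k A] (N n : ℕ) (μ lam : k)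
    (x : Fin 2 → Fin 2 → A) : Prop where
  N_ne_zero : N ≠ 0
  μ_ne_zero : μ ≠ 0
  lam_mul_self : lam * lam = 1
  rel_sq1 : x 0 0 ^ 2 = x 1 1 ^ 2
  rel_sq2 : x 0 1 ^ 2 = x 1 0 ^ 2
  rel_chi1 : chi x 1 0 n = lam • chi x 0 1 n
  rel_chi2 : chi x 0 0 n = chi x 1 1 n
  rel_mu : x 0 0 ^ (2 * N) + μ • x 0 1 ^ (2 * N) = 1
  rel_odd : ∀ i j i' j' : Fin 2, Odd ((i : ℕ) + j + i' + j') → x i j * x i' j' = 0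
  basis_indep : LinearIndependent k (fun p : Fin 2 × Fin (2 * N) × Fin n =>
      if p.1 = 0 then x 0 0 ^ ((p.2.1 : ℕ) + 1) * chi x 1 1 (p.2.2 : ℕ)
      else x 0 1 ^ ((p.2.1 : ℕ) + 1) * chi x 1 0 (p.2.2 : ℕ))

lemma Suzuki.isSuzukiFamily {k A : Type*} [Field k] [CharZero k] [IsAlgClosed k] [Ring A]
    [HopfAlgebra k A] (S : Suzuki k A) : IsSuzukiFamily S.N S.n S.μ S.lam S.x where
  N_ne_zero := Nat.one_le_iff_ne_zero.mp S.hN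
  μ_ne_zero := by rcases S.hμ with h | h <;> simp [h]
  lam_mul_self := mul_self_eq_one_iff.mpr S.hlam
  rel_sq1 := S.rel_sq1
  rel_sq2 := S.rel_sq2
  rel_chi1 := S.rel_chi1
  rel_chi2 := S.rel_chi2
  rel_mu := S.rel_mu
  rel_odd := S.rel_odd
  basis_indep := S.basis_indep

namespace IsSuzukiFamily

variable {k A : Type*} [Field k] [Ring A] [Algebra k A] {N n : ℕ} {μ lam : k}
  {x : Fin 2 → Fin 2 → A}

lemma pow_mem_suzukiBlock (hx : IsSuzukiFamily N n μ lam x) (i : Fin 2) :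
    x 0 i ^ (2 * N) ∈ suzukiBlock k x i := by
  obtain ⟨m, hm⟩ := Nat.exists_eq_add_one_of_ne_zero (mul_ne_zero two_ne_zero hx.N_ne_zero)
  have x_mem : x 0 i ∈ suzukiBlock k x i := by simpa using mem_suzukiBlock (k := k) x i 0
  rw [hm, pow_succ]
  exact pow_mul_mem x_mem x_mem m

lemma mul_eq_zero_of_mem_suzukiBlock (hx : IsSuzukiFamily N n μ lam x) {i j : Fin 2}
    (hij : i ≠ j) : ∀ p ∈ suzukiBlock k x i, ∀ q ∈ suzukiBlock k x j, p * q = 0 := by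
  have parity : ∀ i j r r' : Fin 2, i ≠ j →
      Odd ((r : ℕ) + (i + r : Fin 2) + r' + (j + r' : Fin 2)) := by decide
  intro p hp q hq
  refine mul_eq_zero_of_mem_adjoin ?_ hp hq
  rintro _ ⟨r, rfl⟩ _ ⟨r', rfl⟩
  exact hx.rel_odd _ _ _ _ (parity i j r r' hij)

lemma isSuzukiPair_zero (hx : IsSuzukiFamily N n μ lam x) :
    IsSuzukiPair N n (1 : k) 1 (x 0 0) (x 1 1) where
  N_ne_zero := hx.N_ne_zero
  scalar_ne_zero := one_ne_zero
  mul_self_eq_one := one_mul 1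
  sq_eq_sq := hx.rel_sq1
  pow_mul_self := by
    rw [one_smul]
    exact mul_eq_self_of_add_eq_one (hx.mul_eq_zero_of_mem_suzukiBlock (k := k) one_ne_zero)
      (SMulMemClass.smul_mem μ (hx.pow_mem_suzukiBlock 1)) hx.rel_mu (mem_suzukiBlock x 0 0)
  altProd_eq_smul := by
    have := hx.rel_chi2
    rw [chi_eq_altProd, chi_eq_altProd] at this
    rw [one_smul]
    exact this.symm
  linearIndependent := by
    simpa [Function.comp_def, chi_eq_altProd] using
      hx.basis_indep.comp _ (Prod.mk_right_injective (0 : Fin 2))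

lemma isSuzukiPair_one (hx : IsSuzukiFamily N n μ lam x) :
    IsSuzukiPair N n μ⁻¹ lam (x 0 1) (x 1 0) where
  N_ne_zero := hx.N_ne_zero
  scalar_ne_zero := inv_ne_zero hx.μ_ne_zero
  mul_self_eq_one := hx.lam_mul_self
  sq_eq_sq := hx.rel_sq2
  pow_mul_self := by
    rw [eq_inv_smul_iff₀ hx.μ_ne_zero, ← smul_mul_assoc]
    exact mul_eq_self_of_add_eq_one (hx.mul_eq_zero_of_mem_suzukiBlock (k := k) zero_ne_one)
      (hx.pow_mem_suzukiBlock 0) ((add_comm ..).trans hx.rel_mu) (mem_suzukiBlock x 1 0)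
  altProd_eq_smul := by
    have := hx.rel_chi1
    rwa [chi_eq_altProd, chi_eq_altProd] at this
  linearIndependent := by
    simpa [Function.comp_def, chi_eq_altProd] using
      hx.basis_indep.comp _ (Prod.mk_right_injective (1 : Fin 2))

theorem mul_eq_zero_iff (hx : IsSuzukiFamily N n μ lam x) (s : ℕ) {t : ℕ} (ht0 : 0 < t)
    (htn : t < n) (ht : Even t) {P Q R T : A}
    (hP : P = x 0 0 ^ (2 * s) * chi x 0 0 t) (hQ : Q = x 0 0 ^ (2 * s) * chi x 1 1 t)
    (hR : R = x 0 1 ^ (2 * s) * chi x 0 1 t) (hT : T = x 0 1 ^ (2 * s) * chi x 1 0 t)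
    (α₁ α₂ α₃ α₄ δ₁ δ₂ δ₃ δ₄ : k) :
    (α₁ • P + α₂ • Q + α₃ • R + α₄ • T) * (δ₁ • P + δ₂ • Q + δ₃ • R + δ₄ • T) = 0 ↔
      (α₁ * δ₂ + α₂ * δ₁ = 0 ∧ (2 * t ≠ n → α₁ * δ₁ = 0 ∧ α₂ * δ₂ = 0) ∧
        (2 * t = n → α₁ * δ₁ + α₂ * δ₂ = 0)) ∧
      (α₃ * δ₄ + α₄ * δ₃ = 0 ∧ (2 * t ≠ n → α₃ * δ₃ = 0 ∧ α₄ * δ₄ = 0) ∧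
        (2 * t = n → α₃ * δ₃ + lam * (α₄ * δ₄) = 0)) := by
  have mem₀ (γ₁ γ₂ : k) : γ₁ • P + γ₂ • Q ∈ suzukiBlock k x 0 := by
    rw [hP, hQ]; exact combination_mem_suzukiBlock x 0 s ht0.ne' γ₁ γ₂
  have mem₁ (γ₁ γ₂ : k) : γ₁ • R + γ₂ • T ∈ suzukiBlock k x 1 := by
    rw [hR, hT]; exact combination_mem_suzukiBlock x 1 s ht0.ne' γ₁ γ₂
  have block₀ := hx.isSuzukiPair_zero.mul_eq_zero_iff s ht0 htn ht α₁ α₂ δ₁ δ₂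
  have block₁ := hx.isSuzukiPair_one.mul_eq_zero_iff s ht0 htn ht α₃ α₄ δ₃ δ₄
  rw [chi_eq_altProd] at hP hQ hR hT
  rw [one_mul] at block₀
  rw [add_assoc (_ + _), add_assoc (_ + _), add_mul_add_eq_zero_iff
    (hx.mul_eq_zero_of_mem_suzukiBlock zero_ne_one) (hx.mul_eq_zero_of_mem_suzukiBlock one_ne_zero)
    (hx.pow_mem_suzukiBlock 0) (SMulMemClass.smul_mem μ (hx.pow_mem_suzukiBlock 1)) hx.rel_mu
    (mem₀ α₁ α₂) (mem₀ δ₁ δ₂) (mem₁ α₃ α₄) (mem₁ δ₃ δ₄), hP, hQ, hR, hT]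
  exact and_congr block₀ block₁

end IsSuzukiFamily

theorem stmt9_general {k A : Type*} [Field k] [Ring A] [Algebra k A] {N n : ℕ} {μ lam : k}
    {x : Fin 2 → Fin 2 → A} (hx : IsSuzukiFamily N n μ lam x) (s : ℕ) {t : ℕ} (ht0 : 0 < t)
    (htn : t < n) (ht : Even t) {P Q R T : A}
    (hP : P = x 0 0 ^ (2 * s) * chi x 0 0 t) (hQ : Q = x 0 0 ^ (2 * s) * chi x 1 1 t)
    (hR : R = x 0 1 ^ (2 * s) * chi x 0 1 t) (hT : T = x 0 1 ^ (2 * s) * chi x 1 0 t)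
    (a1 a2 a3 d1 d2 d3 : k) :
    (a1 • P + (1 - a1) • Q + a2 • R + a3 • T) * (d1 • P - d1 • Q + d2 • R + d3 • T) = 0 ↔
      (1 - 2 * a1) * d1 = 0 ∧ a2 * d3 + a3 * d2 = 0 ∧
        (2 * t ≠ n → d1 = 0 ∧ a2 * d2 = 0 ∧ a3 * d3 = 0) ∧
        (2 * t = n → a2 * d2 + lam * (a3 * d3) = 0) := by
  have cross : a1 * -d1 + (1 - a1) * d1 = (1 - 2 * a1) * d1 := by ring
  have diagonal : a1 * d1 + (1 - a1) * -d1 = -((1 - 2 * a1) * d1) := by ring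
  have squares : a1 * d1 = 0 ∧ (1 - a1) * -d1 = 0 ↔ d1 = 0 :=
    ⟨fun ⟨h₁, h₂⟩ => by linear_combination h₁ - h₂, fun h => by simp [h]⟩
  rw [sub_eq_add_neg (d1 • P), ← neg_smul, hx.mul_eq_zero_iff s ht0 htn ht hP hQ hR hT, cross,
    diagonal, squares, neg_eq_zero]
  tauto

/-- t even: criteria for `y·u = 0`, `z·u = 0`, `y·v = 0`, `z·v = 0`. -/
theorem stmt9 (k A : Type*) [Field k] [CharZero k] [IsAlgClosed k]
    [Ring A] [HopfAlgebra k A] (S : Suzuki k A)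
    (s t : ℕ) (hs1 : 1 ≤ s) (hs2 : s ≤ S.N) (ht1 : 1 ≤ t) (ht2 : t ≤ S.n - 1)
    (hteven : Even t)
    (P Q R T : A)
    (hP : P = S.x 0 0 ^ (2 * s) * chi S.x 0 0 t)
    (hQ : Q = S.x 0 0 ^ (2 * s) * chi S.x 1 1 t)
    (hR : R = S.x 0 1 ^ (2 * s) * chi S.x 0 1 t)
    (hT : T = S.x 0 1 ^ (2 * s) * chi S.x 1 0 t)
    (a1 a2 a3 b1 b2 b3 d1 d2 d3 e1 e2 e3 : k)
    (y z u v : A)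
    (hy : y = a1 • P + (1 - a1) • Q + a2 • R + a3 • T)
    (hz : z = b1 • P + (1 - b1) • Q + b2 • R + b3 • T)
    (hu : u = d1 • P - d1 • Q + d2 • R + d3 • T)
    (hv : v = e1 • P - e1 • Q + e2 • R + e3 • T) :
    (y * u = 0
      ↔ (1 - 2 * a1) * d1 = 0 ∧ a2 * d3 + a3 * d2 = 0 ∧
        (2 * t ≠ S.n → d1 = 0 ∧ a2 * d2 = 0 ∧ a3 * d3 = 0) ∧
        (2 * t = S.n → a2 * d2 + S.lam * (a3 * d3) = 0))
    ∧ (z * u = 0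
      ↔ (1 - 2 * b1) * d1 = 0 ∧ b2 * d3 + b3 * d2 = 0 ∧
        (2 * t ≠ S.n → d1 = 0 ∧ b2 * d2 = 0 ∧ b3 * d3 = 0) ∧
        (2 * t = S.n → b2 * d2 + S.lam * (b3 * d3) = 0))
    ∧ (y * v = 0
      ↔ (1 - 2 * a1) * e1 = 0 ∧ a2 * e3 + a3 * e2 = 0 ∧
        (2 * t ≠ S.n → e1 = 0 ∧ a2 * e2 = 0 ∧ a3 * e3 = 0) ∧
        (2 * t = S.n → a2 * e2 + S.lam * (a3 * e3) = 0))
    ∧ (z * v = 0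
      ↔ (1 - 2 * b1) * e1 = 0 ∧ b2 * e3 + b3 * e2 = 0 ∧
        (2 * t ≠ S.n → e1 = 0 ∧ b2 * e2 = 0 ∧ b3 * e3 = 0) ∧
        (2 * t = S.n → b2 * e2 + S.lam * (b3 * e3) = 0)) := by
  have hx := S.isSuzukiFamily
  have htn : t < S.n := by omega
  subst hy hz hu hv
  exact ⟨stmt9_general hx s ht1 htn hteven hP hQ hR hT a1 a2 a3 d1 d2 d3,
    stmt9_general hx s ht1 htn hteven hP hQ hR hT b1 b2 b3 d1 d2 d3,
    stmt9_general hx s ht1 htn hteven hP hQ hR hT a1 a2 a3 e1 e2 e3,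
    stmt9_general hx s ht1 htn hteven hP hQ hR hT b1 b2 b3 e1 e2 e3⟩
end
end

section
/- Assume n = 2, λ = 1, μ = 1, and let 1 ≤ s ≤ N with gcd(2s + 1, N) = 1, and θ1, θ2 ∈ {1, −1}. Then there exists a Hopf algebra automorphism Γ of A = A_{N2}^{++} with Γ(x11) = (1/2)·[x11^{2s}(x11 + x22) + θ2·x12^{2s}(x12 + x21)], Γ(x22) = (1/2)·[x11^{2s}(x11 + x22) − θ2·x12^{2s}(x12 + x21)], Γ(x12) = (θ1/2)·[x11^{2s}(x11 − x22) − θ2·x12^{2s}(x12 − x21)], and Γ(x21) = (θ1/2)·[x11^{2s}(x11 − x22) + θ2·x12^{2s}(x12 − x21)]. -/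
/-!
The generators form a multiplicative matrix `x`, that is `Δ(x) = x ⊗ x` and `ε(x) = 1`, and the
standard basis is a normal form for the relations. Hence an algebra endomorphism of `A` is the same
as a matrix `y` satisfying the relations, it is a coalgebra map as soon as `y` is multiplicative,
and it is bijective once the generators are recovered by a second such matrix.

For `n = 2` and `λ = μ = 1` the algebra is commutative, and `Γ_{θ₁,θ₂,s}` is the composite of two
automorphisms of this kind.
* The power map `xᵢⱼ ↦ xᵢⱼ ^ (2 * s + 1)`: it preserves the relations and `Δ` because the products
  of a diagonal with an off-diagonal generator vanish, so that powers are additive on such sums. As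
  `xᵢⱼ ^ (2 * N)` acts as `1` on `xᵢⱼ`, it is inverted by the `e`-th power map for
  `(2 * s + 1) * e ≡ 1` modulo `2 * N`.
* The case `s = 0`: the change of basis `x ↦ P x P⁻¹` with `P = (1, θ₂; θ₁, -θ₁θ₂)`, inverted by the
  same construction with `θ₁` and `θ₂` exchanged.
-/

open scoped TensorProduct

noncomputable section

/-! ### Multiplicative matrices -/

/-- A multiplicative matrix over a bialgebra, in the sense of Manin: `Δ(xᵢⱼ) = ∑ₗ xᵢₗ ⊗ xₗⱼ` and
`ε(xᵢⱼ) = δᵢⱼ`, written as equations between matrices over `A ⊗ A` and over `k`. The generators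
of the Suzuki algebra form such a matrix. -/
structure IsMultiplicativeMatrix (k : Type*) {A ι : Type*} [CommSemiring k] [Semiring A]
    [Bialgebra k A] [Fintype ι] [DecidableEq ι] (x : Matrix ι ι A) : Prop where
  map_comul : x.map (Bialgebra.comulAlgHom k A) =
    x.map (Algebra.TensorProduct.includeLeft : A →ₐ[k] A ⊗[k] A) *
      x.map (Algebra.TensorProduct.includeRight : A →ₐ[k] A ⊗[k] A)
  map_counit : x.map (Bialgebra.counitAlgHom k A) = 1

section ScalarMulMul

variable {k A B ι : Type*} [CommSemiring k] [Semiring A] [Semiring B] [Fintype ι]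

/-- The product `P x Q` of a matrix `x` over a `k`-algebra with matrices `P`, `Q` over `k`; for
`Q = P⁻¹` this is the effect of a change of basis on a multiplicative matrix. -/
def scalarMulMul [Algebra k A] (P Q : Matrix ι ι k) (x : Matrix ι ι A) : Matrix ι ι A :=
  P.map (algebraMap k A) * x * Q.map (algebraMap k A)

lemma map_scalarMulMul [Algebra k A] [Algebra k B] (f : A →ₐ[k] B) (P Q : Matrix ι ι k)
    (x : Matrix ι ι A) : (scalarMulMul P Q x).map f = scalarMulMul P Q (x.map f) := by
  simp only [scalarMulMul, Matrix.map_mul, Matrix.map_map, AlgHom.comp_algebraMap,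
    ← AlgHom.coe_toRingHom, ← RingHom.coe_comp]

lemma scalarMulMul_apply [Algebra k A] (P Q : Matrix ι ι k) (x : Matrix ι ι A) (i j : ι) :
    scalarMulMul P Q x i j = ∑ m, ∑ l, (P i l * Q m j) • x l m := by
  have hterm (a b : k) (c : A) : algebraMap k A a * c * algebraMap k A b = (a * b) • c := by
    rw [← Algebra.smul_def, ← Algebra.commutes, ← Algebra.smul_def, smul_smul, mul_comm]
  simp only [scalarMulMul, Matrix.mul_apply, Matrix.map_apply, Finset.sum_mul, hterm]

lemma scalarMulMul_smul_right [Algebra k A] (c : k) (P Q : Matrix ι ι k) (x : Matrix ι ι A) :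
    scalarMulMul P (c • Q) x = scalarMulMul (c • P) Q x := by
  ext i j
  simp only [scalarMulMul_apply, Matrix.smul_apply, smul_eq_mul, mul_left_comm, mul_assoc]

variable [DecidableEq ι]

lemma map_algebraMap_mul_eq_one (A : Type*) [Semiring A] [Algebra k A] {P Q : Matrix ι ι k}
    (h : P * Q = 1) : P.map (algebraMap k A) * Q.map (algebraMap k A) = 1 := by
  rw [← Matrix.map_mul, h, Matrix.map_one _ (map_zero _) (map_one _)]

lemma scalarMulMul_scalarMulMul_cancel [Algebra k A] {P Q P' Q' : Matrix ι ι k}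
    (hP : P * P' = 1) (hQ : Q' * Q = 1) (x : Matrix ι ι A) :
    scalarMulMul P Q (scalarMulMul P' Q' x) = x := by
  rw [scalarMulMul, scalarMulMul, mul_assoc, mul_assoc, map_algebraMap_mul_eq_one A hQ, mul_one,
    ← mul_assoc, map_algebraMap_mul_eq_one A hP, one_mul]

variable [Bialgebra k A] {x : Matrix ι ι A}

namespace IsMultiplicativeMatrix

lemma comulAlgHom_apply (hx : IsMultiplicativeMatrix k x) (i j : ι) :
    Bialgebra.comulAlgHom k A (x i j) = ∑ l, x i l ⊗ₜ[k] x l j := by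
  simpa [Matrix.mul_apply] using congr_fun₂ hx.map_comul i j

lemma counitAlgHom_apply (hx : IsMultiplicativeMatrix k x) (i j : ι) :
    Bialgebra.counitAlgHom k A (x i j) = (1 : Matrix ι ι k) i j :=
  congr_fun₂ hx.map_counit i j

lemma changeBasis (hx : IsMultiplicativeMatrix k x) {P Q : Matrix ι ι k} (hPQ : P * Q = 1)
    (hQP : Q * P = 1) : IsMultiplicativeMatrix k (scalarMulMul P Q x) where
  map_comul := by
    have hQP' := map_algebraMap_mul_eq_one (A ⊗[k] A) hQP
    rw [map_scalarMulMul, map_scalarMulMul, map_scalarMulMul, hx.map_comul]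
    simp only [scalarMulMul, mul_assoc]
    rw [← mul_assoc (Q.map _) (P.map _), hQP', one_mul]
  map_counit := by
    rw [map_scalarMulMul, hx.map_counit, scalarMulMul, mul_one,
      map_algebraMap_mul_eq_one k hPQ]

end IsMultiplicativeMatrix

end ScalarMulMul

lemma add_pow_of_mul_eq_zero {R : Type*} [CommSemiring R] {a b : R} (hab : a * b = 0) {m : ℕ}
    (hm : m ≠ 0) : (a + b) ^ m = a ^ m + b ^ m := by
  obtain ⟨m, rfl⟩ := Nat.exists_eq_succ_of_ne_zero hm
  induction m with
  | zero => simp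
  | succ m ih =>
    have ham : a ^ (m + 1) * b = 0 := by rw [pow_succ, mul_assoc, hab, mul_zero]
    have hbm : b ^ (m + 1) * a = 0 := by rw [pow_succ, mul_assoc, mul_comm b, hab, mul_zero]
    rw [pow_succ, ih m.succ_ne_zero, mul_add, add_mul, add_mul, ham, hbm, add_zero, zero_add,
      ← pow_succ, ← pow_succ]

lemma sum_pow_of_pairwise_mul_eq_zero {R ι : Type*} [CommSemiring R] (s : Finset ι) {f : ι → R}
    (hf : Pairwise fun i j ↦ f i * f j = 0) {m : ℕ} (hm : m ≠ 0) :
    (∑ i ∈ s, f i) ^ m = ∑ i ∈ s, f i ^ m := by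
  classical
  induction s using Finset.induction_on with
  | empty => simp [hm]
  | insert a s ha ih =>
    have horth : f a * ∑ i ∈ s, f i = 0 := by
      rw [Finset.mul_sum]
      exact Finset.sum_eq_zero fun i hi ↦ hf (ne_of_mem_of_not_mem hi ha).symm
    rw [Finset.sum_insert ha, add_pow_of_mul_eq_zero horth hm, ih, Finset.sum_insert ha]

protected lemma IsMultiplicativeMatrix.map_pow {k A ι : Type*} [CommSemiring k] [CommSemiring A]
    [Bialgebra k A] [Fintype ι] [DecidableEq ι] {x : Matrix ι ι A}
    (hx : IsMultiplicativeMatrix k x) (hrow : ∀ i, Pairwise fun j l ↦ x i j * x i l = 0) {e : ℕ}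
    (he : e ≠ 0) : IsMultiplicativeMatrix k (x.map (· ^ e)) where
  map_comul := by
    ext i j
    have horth : Pairwise fun l m ↦ x i l ⊗ₜ[k] x l j * x i m ⊗ₜ[k] x m j = 0 := by
      intro l m hlm
      rw [Algebra.TensorProduct.tmul_mul_tmul, hrow i hlm, TensorProduct.zero_tmul]
    rw [Matrix.map_apply, Matrix.map_apply, map_pow, hx.comulAlgHom_apply,
      sum_pow_of_pairwise_mul_eq_zero _ horth he]
    simp [Matrix.mul_apply, Algebra.TensorProduct.tmul_pow]
  map_counit := by
    ext i j
    rw [Matrix.map_apply, Matrix.map_apply, map_pow, hx.counitAlgHom_apply]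
    obtain rfl | hij := eq_or_ne i j
    · simp
    · simp [hij, he]

/-! ### The relations of the Suzuki algebra -/

/-- The relations of `A_{N2}^{++}` for a matrix `x` of generators: for `n = 2` and `λ = 1` the
relations between the `χ`'s say that `x₁₁` commutes with `x₂₂` and `x₁₂` with `x₂₁`. The index
`j + 1` is taken in `Fin 2`, so that `x 0 j` and `x 1 (j + 1)` are the two diagonal or the two
off-diagonal generators, and `i + j ≠ i' + j'` holds if exactly one of `x i j`, `x i' j'` is
diagonal. -/
structure SuzukiTwoRel {A : Type*} [Ring A] (N : ℕ) (x : Matrix (Fin 2) (Fin 2) A) : Prop where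
  N_ne_zero : N ≠ 0
  sq_eq_sq : ∀ j, x 0 j ^ 2 = x 1 (j + 1) ^ 2
  commute : ∀ j, Commute (x 0 j) (x 1 (j + 1))
  mul_eq_zero : ∀ i j i' j', i + j ≠ i' + j' → x i j * x i' j' = 0
  pow_add_pow : x 0 0 ^ (2 * N) + x 0 1 ^ (2 * N) = 1

namespace SuzukiTwoRel

section Ring

variable {A : Type*} [Ring A] {N : ℕ} {x : Matrix (Fin 2) (Fin 2) A}

lemma commute_all (h : SuzukiTwoRel N x) (i j i' j' : Fin 2) : Commute (x i j) (x i' j') := by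
  by_cases hij : i + j = i' + j'
  · obtain ⟨rfl, rfl⟩ | ⟨rfl, rfl⟩ : (i' = i ∧ j' = j) ∨ (i' = i + 1 ∧ j' = j + 1) := by
      decide +revert
    · exact .refl _
    · fin_cases i <;> fin_cases j
      exacts [h.commute 0, h.commute 1, (h.commute 1).symm, (h.commute 0).symm]
  · exact (h.mul_eq_zero _ _ _ _ hij).trans (h.mul_eq_zero _ _ _ _ (Ne.symm hij)).symm

lemma pow_two_mul_eq (h : SuzukiTwoRel N x) (j : Fin 2) (m : ℕ) :
    x 1 (j + 1) ^ (2 * m) = x 0 j ^ (2 * m) := by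
  rw [pow_mul, pow_mul, h.sq_eq_sq]

lemma sum_pow_eq_one (h : SuzukiTwoRel N x) (i : Fin 2) : ∑ j, x i j ^ (2 * N) = 1 := by
  rw [← h.pow_add_pow, Fin.sum_univ_two]
  fin_cases i
  · rfl
  · exact (congrArg₂ _ (h.pow_two_mul_eq 1 N) (h.pow_two_mul_eq 0 N)).trans (add_comm _ _)

lemma pow_mul_self (h : SuzukiTwoRel N x) (i j : Fin 2) : x i j ^ (2 * N) * x i j = x i j := by
  have hzero : ∀ l ≠ j, x i l ^ (2 * N) * x i j = 0 := fun l hl ↦ by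
    rw [← Nat.sub_add_cancel (show 1 ≤ 2 * N by have := h.N_ne_zero; lia), pow_succ, mul_assoc,
      h.mul_eq_zero _ _ _ _ (by simpa using hl), mul_zero]
  calc x i j ^ (2 * N) * x i j = (∑ l, x i l ^ (2 * N)) * x i j := by
        rw [Finset.sum_mul, Fintype.sum_eq_single j hzero]
    _ = x i j := by rw [h.sum_pow_eq_one, one_mul]

lemma pow_mul_pow_self (h : SuzukiTwoRel N x) (i j : Fin 2) (q : ℕ) :
    x i j ^ (2 * N * q) * x i j = x i j := by
  induction q with
  | zero => simp
  | succ q ih => rw [mul_add_one, pow_add, mul_assoc, h.pow_mul_self, ih]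

lemma pow_mod_add_one (h : SuzukiTwoRel N x) (i j : Fin 2) (m : ℕ) :
    x i j ^ (m % (2 * N) + 1) = x i j ^ (m + 1) := by
  conv_rhs => rw [← Nat.div_add_mod m (2 * N), add_assoc, pow_add, pow_succ' _ (m % (2 * N)),
    ← mul_assoc, h.pow_mul_pow_self, ← pow_succ']

lemma pow_eq_self (h : SuzukiTwoRel N x) (i j : Fin 2) {m : ℕ} (hm : m % (2 * N) = 1) :
    x i j ^ m = x i j := by
  rw [← Nat.div_add_mod m (2 * N), hm, pow_succ, h.pow_mul_pow_self]

end Ring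

section CommRing

variable {A : Type*} [CommRing A] {N : ℕ} {x : Matrix (Fin 2) (Fin 2) A}

lemma sq_add_sq_pow (h : SuzukiTwoRel N x) : (x 0 0 ^ 2 + x 0 1 ^ 2) ^ N = 1 := by
  have horth : x 0 0 ^ 2 * x 0 1 ^ 2 = 0 := by
    rw [← mul_pow, h.mul_eq_zero _ _ _ _ (by decide), zero_pow two_ne_zero]
  rw [add_pow_of_mul_eq_zero horth h.N_ne_zero, ← pow_mul, ← pow_mul, h.pow_add_pow]

protected lemma map_pow (h : SuzukiTwoRel N x) {e : ℕ} (he : e ≠ 0) :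
    SuzukiTwoRel N (x.map (· ^ e)) where
  N_ne_zero := h.N_ne_zero
  sq_eq_sq j := by simp only [Matrix.map_apply, pow_right_comm _ e, h.sq_eq_sq]
  commute _ := .all _ _
  mul_eq_zero i j i' j' hij := by
    rw [Matrix.map_apply, Matrix.map_apply, ← mul_pow, h.mul_eq_zero _ _ _ _ hij, zero_pow he]
  pow_add_pow := by
    have hN := h.N_ne_zero
    have horth : x 0 0 ^ (2 * N) * x 0 1 ^ (2 * N) = 0 := by
      rw [← mul_pow, h.mul_eq_zero _ _ _ _ (by decide), zero_pow (by lia)]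
    simp only [Matrix.map_apply, pow_right_comm _ e]
    rw [← add_pow_of_mul_eq_zero horth he, h.pow_add_pow, one_pow]

end CommRing

end SuzukiTwoRel

/-! ### The universal property -/

/-- The standard basis `x₁₁^{s} χ₂₂^{t}`, `x₁₂^{s} χ₂₁^{t}` of `A_{N2}^{++}`. The index `(j, m, t)`
stands for `s = m + 1` and for the first (`j = 0`) or the second (`j = 1`) family; as `t ≤ 1`, each
`χ^t` is a power of a generator. -/
def suzukiMonomial {A : Type*} [Ring A] (N : ℕ) (x : Matrix (Fin 2) (Fin 2) A)
    (p : Fin 2 × Fin (2 * N) × Fin 2) : A :=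
  x 0 p.1 ^ ((p.2.1 : ℕ) + 1) * x 1 (p.1 + 1) ^ (p.2.2 : ℕ)

/-- A presentation of a `k`-algebra as the algebra underlying `A_{N2}^{++}`, over an arbitrary
commutative ring `k`: the generators satisfy the relations, and the standard monomials form a
basis. -/
structure IsSuzukiTwo (k : Type*) {A : Type*} [CommRing k] [Ring A] [Algebra k A] (N : ℕ)
    (x : Matrix (Fin 2) (Fin 2) A) : Prop extends SuzukiTwoRel N x where
  linearIndependent : LinearIndependent k (suzukiMonomial N x)
  span_eq_top : Submodule.span k (Set.range (suzukiMonomial N x)) = ⊤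

namespace SuzukiTwoRel

variable {A : Type*} [CommRing A] {N : ℕ} {x : Matrix (Fin 2) (Fin 2) A}

lemma pow_mul_pow_eq_suzukiMonomial (h : SuzukiTwoRel N x) (j : Fin 2) (m t : ℕ) :
    x 0 j ^ (m + 1) * x 1 (j + 1) ^ t =
      suzukiMonomial N x (j, ⟨(m + 2 * (t / 2)) % (2 * N),
        Nat.mod_lt _ (by have := h.N_ne_zero; lia)⟩, ⟨t % 2, Nat.mod_lt _ two_pos⟩) := by
  calc x 0 j ^ (m + 1) * x 1 (j + 1) ^ t
      = x 0 j ^ (m + 1) * (x 1 (j + 1) ^ (2 * (t / 2)) * x 1 (j + 1) ^ (t % 2)) := by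
        rw [← pow_add, Nat.div_add_mod]
    _ = x 0 j ^ ((m + 2 * (t / 2)) % (2 * N) + 1) * x 1 (j + 1) ^ (t % 2) := by
        rw [h.pow_two_mul_eq, ← mul_assoc, ← pow_add, add_right_comm, h.pow_mod_add_one]

lemma suzukiMonomial_mul_of_ne (h : SuzukiTwoRel N x) {p q : Fin 2 × Fin (2 * N) × Fin 2}
    (hpq : p.1 ≠ q.1) : suzukiMonomial N x p * suzukiMonomial N x q = 0 := by
  rw [suzukiMonomial, suzukiMonomial, mul_mul_mul_comm, pow_succ', pow_succ' (x 0 q.1),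
    mul_mul_mul_comm (x 0 p.1), h.mul_eq_zero _ _ _ _ (by simpa using hpq), zero_mul, zero_mul]

end SuzukiTwoRel

namespace IsSuzukiTwo

section Lift

variable {k A B : Type*} [CommRing k] [CommRing A] [Algebra k A] [CommRing B] [Algebra k B]
  {N : ℕ} {x : Matrix (Fin 2) (Fin 2) A} {y : Matrix (Fin 2) (Fin 2) B}

/-- The linear map sending the standard monomials in `x` to those in `y`; it is the linear map
underlying `IsSuzukiTwo.lift`. -/
def liftLinear (h : IsSuzukiTwo k N x) (y : Matrix (Fin 2) (Fin 2) B) : A →ₗ[k] B :=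
  (Module.Basis.mk h.linearIndependent h.span_eq_top.ge).constr k (suzukiMonomial N y)

lemma liftLinear_suzukiMonomial (h : IsSuzukiTwo k N x) (y : Matrix (Fin 2) (Fin 2) B)
    (p : Fin 2 × Fin (2 * N) × Fin 2) :
    h.liftLinear y (suzukiMonomial N x p) = suzukiMonomial N y p := by
  rw [liftLinear, ← Module.Basis.mk_apply h.linearIndependent h.span_eq_top.ge p,
    Module.Basis.constr_basis]

lemma liftLinear_pow_mul_pow (h : IsSuzukiTwo k N x) (hy : SuzukiTwoRel N y) (j : Fin 2)
    (m t : ℕ) :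
    h.liftLinear y (x 0 j ^ (m + 1) * x 1 (j + 1) ^ t) = y 0 j ^ (m + 1) * y 1 (j + 1) ^ t := by
  rw [h.pow_mul_pow_eq_suzukiMonomial, hy.pow_mul_pow_eq_suzukiMonomial, liftLinear_suzukiMonomial]

lemma liftLinear_mul_suzukiMonomial (h : IsSuzukiTwo k N x) (hy : SuzukiTwoRel N y)
    (p q : Fin 2 × Fin (2 * N) × Fin 2) :
    h.liftLinear y (suzukiMonomial N x p * suzukiMonomial N x q) =
      suzukiMonomial N y p * suzukiMonomial N y q := by
  obtain ⟨j, m, t⟩ := p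
  obtain ⟨j', m', t'⟩ := q
  obtain rfl | hj := eq_or_ne j j'
  · simpa only [suzukiMonomial, mul_mul_mul_comm, ← pow_add, ← add_assoc] using
      h.liftLinear_pow_mul_pow hy j (m + 1 + m') (t + t')
  · rw [h.suzukiMonomial_mul_of_ne hj, hy.suzukiMonomial_mul_of_ne hj, map_zero]

lemma liftLinear_mul (h : IsSuzukiTwo k N x) (hy : SuzukiTwoRel N y) (a b : A) :
    h.liftLinear y (a * b) = h.liftLinear y a * h.liftLinear y b := by
  let basis := Module.Basis.mk h.linearIndependent h.span_eq_top.ge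
  have hmul : (LinearMap.mul k A).compr₂ (h.liftLinear y) =
      (LinearMap.mul k B).compl₁₂ (h.liftLinear y) (h.liftLinear y) := by
    refine basis.ext fun p ↦ basis.ext fun q ↦ ?_
    simp [basis, liftLinear_mul_suzukiMonomial h hy, liftLinear_suzukiMonomial]
  exact LinearMap.congr_fun₂ hmul a b

lemma liftLinear_one (h : IsSuzukiTwo k N x) (hy : SuzukiTwoRel N y) : h.liftLinear y 1 = 1 := by
  have hN : 2 * N - 1 + 1 = 2 * N := by have := h.N_ne_zero; lia
  have hpow (j : Fin 2) : h.liftLinear y (x 0 j ^ (2 * N)) = y 0 j ^ (2 * N) := by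
    simpa [hN] using h.liftLinear_pow_mul_pow hy j (2 * N - 1) 0
  rw [← h.pow_add_pow, map_add, hpow, hpow, hy.pow_add_pow]

lemma liftLinear_gen (h : IsSuzukiTwo k N x) (hy : SuzukiTwoRel N y) (i j : Fin 2) :
    h.liftLinear y (x i j) = y i j := by
  have hN : 2 * N - 1 + 1 = 2 * N := by have := h.N_ne_zero; lia
  have hrow₀ (j : Fin 2) : h.liftLinear y (x 0 j) = y 0 j := by
    simpa using h.liftLinear_pow_mul_pow hy j 0 0
  have hrow₁ (j : Fin 2) : h.liftLinear y (x 1 (j + 1)) = y 1 (j + 1) := by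
    simpa only [hN, pow_one, ← h.pow_two_mul_eq, ← hy.pow_two_mul_eq, h.pow_mul_self,
      hy.pow_mul_self] using h.liftLinear_pow_mul_pow hy j (2 * N - 1) 1
  fin_cases i <;> fin_cases j
  exacts [hrow₀ 0, hrow₀ 1, hrow₁ 1, hrow₁ 0]

/-- The universal property of `A_{N2}^{++}`: a matrix satisfying the defining relations is the
image of the matrix of generators under an algebra map. -/
def lift (h : IsSuzukiTwo k N x) (hy : SuzukiTwoRel N y) : A →ₐ[k] B :=
  .ofLinearMap (h.liftLinear y) (h.liftLinear_one hy) (h.liftLinear_mul hy)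

lemma lift_gen (h : IsSuzukiTwo k N x) (hy : SuzukiTwoRel N y) (i j : Fin 2) :
    h.lift hy (x i j) = y i j :=
  h.liftLinear_gen hy i j

lemma map_lift (h : IsSuzukiTwo k N x) (hy : SuzukiTwoRel N y) : x.map (h.lift hy) = y :=
  Matrix.ext (h.lift_gen hy)

end Lift

section Ring

variable {k A B : Type*} [CommRing k] [Ring A] [Algebra k A] {N : ℕ}
  {x : Matrix (Fin 2) (Fin 2) A}

lemma adjoin_eq_top (h : IsSuzukiTwo k N x) :
    Algebra.adjoin k (Set.range fun p : Fin 2 × Fin 2 ↦ x p.1 p.2) = ⊤ := by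
  set S := Algebra.adjoin k (Set.range fun p : Fin 2 × Fin 2 ↦ x p.1 p.2)
  have hmem (i j : Fin 2) : x i j ∈ S := Algebra.subset_adjoin ⟨(i, j), rfl⟩
  rw [← Algebra.toSubmodule_eq_top, eq_top_iff, ← h.span_eq_top, Submodule.span_le]
  rintro _ ⟨p, rfl⟩
  exact S.mul_mem (S.pow_mem (hmem _ _) _) (S.pow_mem (hmem _ _) _)

lemma algHom_ext [Semiring B] [Algebra k B] (h : IsSuzukiTwo k N x) {f g : A →ₐ[k] B}
    (hfg : x.map f = x.map g) : f = g := by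
  refine AlgHom.ext_of_adjoin_eq_top h.adjoin_eq_top ?_
  rintro _ ⟨p, rfl⟩
  exact congr_fun₂ hfg p.1 p.2

protected lemma mul_comm (h : IsSuzukiTwo k N x) (a b : A) : a * b = b * a := by
  have hgen (i j : Fin 2) (b : A) : Commute (x i j) b := by
    refine Algebra.commute_of_mem_adjoin_of_forall_mem_commute
      (h.adjoin_eq_top ▸ Algebra.mem_top) ?_
    rintro _ ⟨p, rfl⟩
    exact h.commute_all _ _ _ _
  refine Algebra.commute_of_mem_adjoin_of_forall_mem_commute
      (h.adjoin_eq_top ▸ Algebra.mem_top) ?_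
  rintro _ ⟨p, rfl⟩
  exact (hgen _ _ _).symm

end Ring

section Bialgebra

variable {k A : Type*} [CommRing k] [CommRing A] [Bialgebra k A] {N : ℕ}
  {x y z : Matrix (Fin 2) (Fin 2) A}

lemma exists_bialgEquiv_map_eq (h : IsSuzukiTwo k N x) (hx : IsMultiplicativeMatrix k x)
    (hy : SuzukiTwoRel N y) (hy' : IsMultiplicativeMatrix k y) (hz : SuzukiTwoRel N z)
    (hyz : y.map (h.lift hz) = x) (hzy : z.map (h.lift hy) = x) :
    ∃ Γ : A ≃ₐc[k] A, x.map Γ = y := by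
  have hinv {v w} (hv : SuzukiTwoRel N v) (hw : SuzukiTwoRel N w) (hvw : v.map (h.lift hw) = x) :
      (h.lift hw).comp (h.lift hv) = .id k A :=
    h.algHom_ext <| by
      rw [AlgHom.coe_comp, ← Matrix.map_map, h.map_lift, hvw, AlgHom.coe_id, Matrix.map_id]
  let Γ : A ≃ₐ[k] A := .ofAlgHom (h.lift hy) (h.lift hz) (hinv hz hy hzy) (hinv hy hz hyz)
  refine ⟨.ofAlgEquiv Γ (h.algHom_ext ?_) (h.algHom_ext ?_), h.map_lift hy⟩
  · change x.map ((Bialgebra.counitAlgHom k A).comp (h.lift hy)) = _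
    rw [AlgHom.coe_comp, ← Matrix.map_map, h.map_lift, hy'.map_counit, hx.map_counit]
  · change x.map ((Algebra.TensorProduct.map (h.lift hy) (h.lift hy)).comp
      (Bialgebra.comulAlgHom k A)) = x.map ((Bialgebra.comulAlgHom k A).comp (h.lift hy))
    ext i j
    simp only [Matrix.map_apply, AlgHom.comp_apply, h.lift_gen, hx.comulAlgHom_apply,
      hy'.comulAlgHom_apply, map_sum, Algebra.TensorProduct.map_tmul]

lemma exists_bialgEquiv_map_eq_pow (h : IsSuzukiTwo k N x) (hx : IsMultiplicativeMatrix k x)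
    {e : ℕ} (he : e.Coprime (2 * N)) : ∃ Γ : A ≃ₐc[k] A, x.map Γ = x.map (· ^ e) := by
  have hN := h.N_ne_zero
  obtain ⟨e', -, he'⟩ := Nat.exists_mul_mod_eq_one_of_coprime he (by lia)
  have hne : e ≠ 0 := by rintro rfl; simp at he'
  have hne' : e' ≠ 0 := by rintro rfl; simp at he'
  have hinv {m m'} (hm : m * m' % (2 * N) = 1) (hm' : SuzukiTwoRel N (x.map (· ^ m'))) :
      (x.map (· ^ m)).map (h.lift hm') = x := by
    ext i j
    rw [Matrix.map_apply, Matrix.map_apply, map_pow, h.lift_gen, Matrix.map_apply, ← pow_mul',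
      h.pow_eq_self _ _ hm]
  have hrow (i : Fin 2) : Pairwise fun j l ↦ x i j * x i l = 0 :=
    fun j l hjl ↦ h.mul_eq_zero _ _ _ _ (by simpa using hjl)
  exact h.exists_bialgEquiv_map_eq hx (h.map_pow hne) (hx.map_pow hrow hne) (h.map_pow hne')
    (hinv he' _) (hinv (mul_comm e e' ▸ he') _)

end Bialgebra

end IsSuzukiTwo

/-! ### The change of basis -/

section SignChange

variable {k : Type*} [CommRing k] {θ₁ θ₂ : k}

/-- The matrix of the change of basis behind `Γ_{θ₁,θ₂,s}`. -/
def signMatrix (θ₁ θ₂ : k) : Matrix (Fin 2) (Fin 2) k :=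
  !![1, θ₂; θ₁, -(θ₁ * θ₂)]

lemma signMatrix_mul_signMatrix (hθ₁ : θ₁ ^ 2 = 1) (hθ₂ : θ₂ ^ 2 = 1) :
    signMatrix θ₁ θ₂ * signMatrix θ₂ θ₁ = (2 : k) • 1 := by
  ext i j
  fin_cases i <;> fin_cases j <;> simp [signMatrix] <;> grind

variable [Invertible (2 : k)]

lemma signMatrix_mul_half_smul (hθ₁ : θ₁ ^ 2 = 1) (hθ₂ : θ₂ ^ 2 = 1) :
    signMatrix θ₁ θ₂ * (⅟2 : k) • signMatrix θ₂ θ₁ = 1 := by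
  rw [mul_smul_comm, signMatrix_mul_signMatrix hθ₁ hθ₂, invOf_smul_smul]

lemma half_smul_mul_signMatrix (hθ₁ : θ₁ ^ 2 = 1) (hθ₂ : θ₂ ^ 2 = 1) :
    (⅟2 : k) • signMatrix θ₁ θ₂ * signMatrix θ₂ θ₁ = 1 := by
  rw [smul_mul_assoc, signMatrix_mul_signMatrix hθ₁ hθ₂, invOf_smul_smul]

variable {A B : Type*}

/-- The images of the generators under `Γ_{θ₁,θ₂,0}`. -/
def signChange [Ring A] [Algebra k A] (θ₁ θ₂ : k) (x : Matrix (Fin 2) (Fin 2) A) :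
    Matrix (Fin 2) (Fin 2) A :=
  scalarMulMul (signMatrix θ₁ θ₂) ((⅟2 : k) • signMatrix θ₂ θ₁) x

lemma map_signChange [Ring A] [Algebra k A] [Ring B] [Algebra k B] (f : A →ₐ[k] B) (θ₁ θ₂ : k)
    (x : Matrix (Fin 2) (Fin 2) A) :
    (signChange θ₁ θ₂ x).map f = signChange θ₁ θ₂ (x.map f) :=
  map_scalarMulMul ..

lemma signChange_signChange [Ring A] [Algebra k A] (hθ₁ : θ₁ ^ 2 = 1) (hθ₂ : θ₂ ^ 2 = 1)
    (x : Matrix (Fin 2) (Fin 2) A) : signChange θ₁ θ₂ (signChange θ₂ θ₁ x) = x := by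
  have hP := signMatrix_mul_half_smul hθ₁ hθ₂
  rw [signChange, signChange, scalarMulMul_smul_right _ (signMatrix θ₂ θ₁),
    scalarMulMul_scalarMulMul_cancel hP hP]

/-- The element `x₁₁ + x₂₂ + ε (x₁₂ + x₂₁)`; up to a scalar, the images of the diagonal
generators under `Γ_{θ₁,θ₂,0}` are of this form. -/
def signSum [Ring A] [Algebra k A] (ε : k) (x : Matrix (Fin 2) (Fin 2) A) : A :=
  x 0 0 + x 1 1 + ε • (x 0 1 + x 1 0)

/-- The counterpart `x₁₁ - x₂₂ + ε (x₁₂ - x₂₁)` of `signSum` for the off-diagonal generators. -/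
def signDiff [Ring A] [Algebra k A] (ε : k) (x : Matrix (Fin 2) (Fin 2) A) : A :=
  x 0 0 - x 1 1 + ε • (x 0 1 - x 1 0)

lemma signChange_eq [Ring A] [Algebra k A] (hθ₁ : θ₁ ^ 2 = 1) (hθ₂ : θ₂ ^ 2 = 1)
    (x : Matrix (Fin 2) (Fin 2) A) :
    signChange θ₁ θ₂ x =
      !![(⅟2 : k) • signSum θ₂ x, (θ₁ * ⅟2) • signDiff (-θ₂) x;
        (θ₁ * ⅟2) • signDiff θ₂ x, (⅟2 : k) • signSum (-θ₂) x] := by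
  ext i j
  rw [signChange, scalarMulMul_apply]
  fin_cases i <;> fin_cases j <;>
    simp only [signMatrix, signSum, signDiff, Fin.sum_univ_two, Matrix.smul_apply, Matrix.of_apply,
      smul_eq_mul, Matrix.cons_val', Matrix.cons_val, Matrix.cons_val_fin_one, Fin.zero_eta,
      Fin.mk_one] <;>
    match_scalars <;> grind

end SignChange

namespace SuzukiTwoRel

variable {k A : Type*} [CommRing k] [CommRing A] [Algebra k A] {N : ℕ}
  {x : Matrix (Fin 2) (Fin 2) A}

lemma signSum_mul_signDiff (h : SuzukiTwoRel N x) (ε δ : k) :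
    signSum ε x * signDiff δ x = 0 := by
  have hdiag : x 0 0 ^ 2 = x 1 1 ^ 2 := h.sq_eq_sq 0
  have hoff : x 0 1 ^ 2 = x 1 0 ^ 2 := h.sq_eq_sq 1
  have huv : (x 0 0 + x 1 1) * (x 0 0 - x 1 1) = 0 := by linear_combination hdiag
  have hwz : (x 0 1 + x 1 0) * (x 0 1 - x 1 0) = 0 := by linear_combination hoff
  have huz : (x 0 0 + x 1 1) * (x 0 1 - x 1 0) = 0 := by simp [add_mul, mul_sub, h.mul_eq_zero]
  have hwv : (x 0 1 + x 1 0) * (x 0 0 - x 1 1) = 0 := by simp [add_mul, mul_sub, h.mul_eq_zero]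
  rw [signSum, signDiff, add_mul, mul_add, mul_add, huv, mul_smul_comm, huz, smul_mul_assoc, hwv,
    smul_mul_smul_comm, hwz]
  simp only [smul_zero, add_zero]

lemma signSum_sq (h : SuzukiTwoRel N x) {ε : k} (hε : ε ^ 2 = 1) :
    signSum ε x ^ 2 = 2 * (x 0 0 ^ 2 + x 0 1 ^ 2 + (x 0 0 * x 1 1 + x 0 1 * x 1 0)) := by
  have hdiag : x 0 0 ^ 2 = x 1 1 ^ 2 := h.sq_eq_sq 0
  have hoff : x 0 1 ^ 2 = x 1 0 ^ 2 := h.sq_eq_sq 1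
  have huw : (x 0 0 + x 1 1) * (x 0 1 + x 1 0) = 0 := by simp [add_mul, mul_add, h.mul_eq_zero]
  rw [signSum, add_sq, mul_assoc, mul_smul_comm, huw, smul_pow, hε, one_smul, smul_zero]
  linear_combination -hdiag - hoff

lemma signDiff_sq (h : SuzukiTwoRel N x) {ε : k} (hε : ε ^ 2 = 1) :
    signDiff ε x ^ 2 = 2 * (x 0 0 ^ 2 + x 0 1 ^ 2 - (x 0 0 * x 1 1 + x 0 1 * x 1 0)) := by
  have hdiag : x 0 0 ^ 2 = x 1 1 ^ 2 := h.sq_eq_sq 0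
  have hoff : x 0 1 ^ 2 = x 1 0 ^ 2 := h.sq_eq_sq 1
  have hvz : (x 0 0 - x 1 1) * (x 0 1 - x 1 0) = 0 := by simp [sub_mul, mul_sub, h.mul_eq_zero]
  rw [signDiff, add_sq, mul_assoc, mul_smul_comm, hvz, smul_pow, hε, one_smul, smul_zero]
  linear_combination -hdiag - hoff

variable [Invertible (2 : k)] {θ₁ θ₂ : k}

lemma signChange_sq_add_sq (h : SuzukiTwoRel N x) (hθ₁ : θ₁ ^ 2 = 1) (hθ₂ : θ₂ ^ 2 = 1) :
    signChange θ₁ θ₂ x 0 0 ^ 2 + signChange θ₁ θ₂ x 0 1 ^ 2 = x 0 0 ^ 2 + x 0 1 ^ 2 := by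
  have hneg : (-θ₂) ^ 2 = 1 := by rw [neg_sq, hθ₂]
  calc signChange θ₁ θ₂ x 0 0 ^ 2 + signChange θ₁ θ₂ x 0 1 ^ 2
      = (⅟2 : k) ^ 2 • (signSum θ₂ x ^ 2 + signDiff (-θ₂) x ^ 2) := by
        simp [signChange_eq hθ₁ hθ₂, smul_pow, mul_pow, hθ₁]
    _ = (⅟2 : k) ^ 2 • (2 : k) ^ 2 • (x 0 0 ^ 2 + x 0 1 ^ 2) := by
        rw [h.signSum_sq hθ₂, h.signDiff_sq hneg, Algebra.smul_def ((2 : k) ^ 2), map_pow,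
          map_ofNat]
        ring_nf
    _ = x 0 0 ^ 2 + x 0 1 ^ 2 := by
        rw [smul_smul, ← mul_pow, invOf_mul_self, one_pow, one_smul]

protected lemma signChange (h : SuzukiTwoRel N x) (hθ₁ : θ₁ ^ 2 = 1) (hθ₂ : θ₂ ^ 2 = 1) :
    SuzukiTwoRel N (signChange θ₁ θ₂ x) := by
  have hneg : (-θ₂) ^ 2 = 1 := by rw [neg_sq, hθ₂]
  have horth (i j : Fin 2) :
      signChange θ₁ θ₂ x i i * signChange θ₁ θ₂ x j (j + 1) = 0 := by
    rw [signChange_eq hθ₁ hθ₂]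
    fin_cases i <;> fin_cases j <;> simp [h.signSum_mul_signDiff]
  refine ⟨h.N_ne_zero, fun j ↦ ?_, fun _ ↦ .all _ _, fun i j i' j' hij ↦ ?_, ?_⟩
  · rw [signChange_eq hθ₁ hθ₂]
    fin_cases j <;>
      simp [smul_pow, h.signSum_sq hθ₂, h.signSum_sq hneg, h.signDiff_sq hθ₂, h.signDiff_sq hneg]
  · obtain ⟨rfl, rfl⟩ | ⟨rfl, rfl⟩ : (j = i ∧ j' = i' + 1) ∨ (j = i + 1 ∧ j' = i') := by
      decide +revert
    · exact horth _ _
    · rw [mul_comm, horth]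
  · have hsq_orth : signChange θ₁ θ₂ x 0 0 ^ 2 * signChange θ₁ θ₂ x 0 1 ^ 2 = 0 := by
      rw [← mul_pow]
      exact (congrArg (· ^ 2) (horth 0 0)).trans (zero_pow two_ne_zero)
    rw [pow_mul, pow_mul, ← add_pow_of_mul_eq_zero hsq_orth h.N_ne_zero,
      h.signChange_sq_add_sq hθ₁ hθ₂, h.sq_add_sq_pow]

end SuzukiTwoRel

protected lemma IsMultiplicativeMatrix.signChange {k A : Type*} [CommRing k] [Invertible (2 : k)]
    [Ring A] [Bialgebra k A] {x : Matrix (Fin 2) (Fin 2) A} (hx : IsMultiplicativeMatrix k x)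
    {θ₁ θ₂ : k} (hθ₁ : θ₁ ^ 2 = 1) (hθ₂ : θ₂ ^ 2 = 1) :
    IsMultiplicativeMatrix k (signChange θ₁ θ₂ x) :=
  hx.changeBasis (signMatrix_mul_half_smul hθ₁ hθ₂) (half_smul_mul_signMatrix hθ₂ hθ₁)

/-! ### Automorphisms -/

namespace IsSuzukiTwo

variable {k A : Type*} [CommRing k] [CommRing A] [Bialgebra k A] {N : ℕ}
  {x : Matrix (Fin 2) (Fin 2) A}

lemma exists_bialgEquiv_map_eq_signChange [Invertible (2 : k)] (h : IsSuzukiTwo k N x)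
    (hx : IsMultiplicativeMatrix k x) {θ₁ θ₂ : k} (hθ₁ : θ₁ ^ 2 = 1) (hθ₂ : θ₂ ^ 2 = 1) :
    ∃ Γ : A ≃ₐc[k] A, x.map Γ = signChange θ₁ θ₂ x := by
  have hrel {ε δ : k} (hε : ε ^ 2 = 1) (hδ : δ ^ 2 = 1) : SuzukiTwoRel N (signChange ε δ x) :=
    h.toSuzukiTwoRel.signChange hε hδ
  have hinv {ε δ : k} (hε : ε ^ 2 = 1) (hδ : δ ^ 2 = 1) :
      (signChange ε δ x).map (h.lift (hrel hδ hε)) = x := by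
    rw [map_signChange, h.map_lift, signChange_signChange hε hδ]
  exact h.exists_bialgEquiv_map_eq hx (hrel hθ₁ hθ₂) (hx.signChange hθ₁ hθ₂) (hrel hθ₂ hθ₁)
    (hinv hθ₁ hθ₂) (hinv hθ₂ hθ₁)

lemma exists_bialgEquiv_map_eq_signChange_pow [Invertible (2 : k)] (h : IsSuzukiTwo k N x)
    (hx : IsMultiplicativeMatrix k x) {e : ℕ} (he : e.Coprime (2 * N)) {θ₁ θ₂ : k}
    (hθ₁ : θ₁ ^ 2 = 1) (hθ₂ : θ₂ ^ 2 = 1) :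
    ∃ Γ : A ≃ₐc[k] A, x.map Γ = signChange θ₁ θ₂ (x.map (· ^ e)) := by
  obtain ⟨Φ, hΦ⟩ := h.exists_bialgEquiv_map_eq_signChange hx hθ₁ hθ₂
  obtain ⟨Ψ, hΨ⟩ := h.exists_bialgEquiv_map_eq_pow hx he
  refine ⟨Φ.trans Ψ, ?_⟩
  calc x.map (Φ.trans Ψ) = (x.map Φ).map (Ψ : A →ₐ[k] A) := rfl
    _ = signChange θ₁ θ₂ (x.map Ψ) := by rw [hΦ, map_signChange]; rfl
    _ = signChange θ₁ θ₂ (x.map (· ^ e)) := by rw [hΨ]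

end IsSuzukiTwo

theorem stmt14_general {k A : Type*} [CommRing k] [Invertible (2 : k)] [Ring A] [Bialgebra k A]
    {N : ℕ} {x : Matrix (Fin 2) (Fin 2) A} (h : IsSuzukiTwo k N x)
    (hx : IsMultiplicativeMatrix k x) {s : ℕ} (hs : (2 * s + 1).Coprime N) {θ₁ θ₂ : k}
    (hθ₁ : θ₁ ^ 2 = 1) (hθ₂ : θ₂ ^ 2 = 1) :
    ∃ Γ : A ≃ₐc[k] A,
      Γ (x 0 0) = (⅟2 : k) • (x 0 0 ^ (2 * s) * (x 0 0 + x 1 1) +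
        θ₂ • (x 0 1 ^ (2 * s) * (x 0 1 + x 1 0))) ∧
      Γ (x 1 1) = (⅟2 : k) • (x 0 0 ^ (2 * s) * (x 0 0 + x 1 1) -
        θ₂ • (x 0 1 ^ (2 * s) * (x 0 1 + x 1 0))) ∧
      Γ (x 0 1) = (θ₁ * ⅟2) • (x 0 0 ^ (2 * s) * (x 0 0 - x 1 1) -
        θ₂ • (x 0 1 ^ (2 * s) * (x 0 1 - x 1 0))) ∧
      Γ (x 1 0) = (θ₁ * ⅟2) • (x 0 0 ^ (2 * s) * (x 0 0 - x 1 1) +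
        θ₂ • (x 0 1 ^ (2 * s) * (x 0 1 - x 1 0))) := by
  let _ : CommRing A := { ‹Ring A› with mul_comm := h.mul_comm }
  have hcop : (2 * s + 1).Coprime (2 * N) := .mul_right (by simp) hs
  have hdiag : x 1 1 ^ (2 * s) = x 0 0 ^ (2 * s) := h.pow_two_mul_eq 0 s
  have hoff : x 1 0 ^ (2 * s) = x 0 1 ^ (2 * s) := h.pow_two_mul_eq 1 s
  obtain ⟨Γ, hΓ⟩ :=
    IsSuzukiTwo.exists_bialgEquiv_map_eq_signChange_pow (A := A) h hx hcop hθ₁ hθ₂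
  rw [signChange_eq hθ₁ hθ₂] at hΓ
  have hgen (i j : Fin 2) := congr_fun₂ hΓ i j
  simp only [Matrix.map_apply, signSum, signDiff, pow_succ, hdiag, hoff, ← mul_add, ← mul_sub,
    neg_smul, ← sub_eq_add_neg] at hgen
  exact ⟨Γ, hgen 0 0, hgen 1 1, hgen 0 1, hgen 1 0⟩

lemma IsHopfAut.of_bialgEquiv {k A : Type*} [Field k] [Ring A] [HopfAlgebra k A]
    (Γ : A ≃ₐc[k] A) : IsHopfAut k (Γ : A ≃ₗ[k] A) :=
  ⟨map_mul Γ, map_one Γ, fun a ↦ (CoalgHomClass.map_comp_comul_apply Γ a).symm,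
    CoalgHomClass.counit_comp_apply Γ⟩

namespace Suzuki

variable {k A : Type*} [Field k] [CharZero k] [IsAlgClosed k] [Ring A] [HopfAlgebra k A]

lemma isMultiplicativeMatrix (S : Suzuki k A) : IsMultiplicativeMatrix k (Matrix.of S.x) where
  map_comul := by
    ext i j
    simpa [chi, Matrix.mul_apply] using S.comul_chi i j 1 le_rfl
  map_counit := by
    ext i j
    exact S.counit_x i j

lemma suzukiTwoRel (S : Suzuki k A) (hn : S.n = 2) (hlam : S.lam = 1) (hμ : S.μ = 1) :
    SuzukiTwoRel S.N (Matrix.of S.x) where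
  N_ne_zero := Nat.one_le_iff_ne_zero.mp S.hN
  sq_eq_sq j := by
    fin_cases j
    exacts [S.rel_sq1, S.rel_sq2]
  commute j := by
    have hdiag := S.rel_chi2
    have hoff := S.rel_chi1
    simp only [hn, hlam, one_smul, chi, mul_one] at hdiag hoff
    fin_cases j
    exacts [hdiag, hoff.symm]
  mul_eq_zero i j i' j' hij := S.rel_odd i j i' j' <| by decide +revert
  pow_add_pow := by simpa only [hμ, one_smul, Matrix.of_apply] using S.rel_mu

lemma isSuzukiTwo (S : Suzuki k A) (hn : S.n = 2) (hlam : S.lam = 1) (hμ : S.μ = 1) :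
    IsSuzukiTwo k S.N (Matrix.of S.x) := by
  have hbasis : (fun p : Fin 2 × Fin (2 * S.N) × Fin 2 ↦
      if p.1 = 0 then S.x 0 0 ^ ((p.2.1 : ℕ) + 1) * chi S.x 1 1 (p.2.2 : ℕ)
      else S.x 0 1 ^ ((p.2.1 : ℕ) + 1) * chi S.x 1 0 (p.2.2 : ℕ)) =
        suzukiMonomial S.N (Matrix.of S.x) := by
    funext ⟨j, m, t⟩
    fin_cases j <;> fin_cases t <;> simp [suzukiMonomial, chi]
  have hli := S.basis_indep
  have hspan := S.basis_span
  rw [hn, hbasis] at hli hspan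
  exact ⟨S.suzukiTwoRel hn hlam hμ, hli, hspan⟩

end Suzuki

/-- for `n = 2`, `λ = μ = 1`, `gcd(2s+1, N) = 1` and `θ₁, θ₂ = ±1`, the
Hopf algebra automorphism `Γ_{θ₁,θ₂,s}` exists. -/
theorem stmt14 (k A : Type*) [Field k] [CharZero k] [IsAlgClosed k]
    [Ring A] [HopfAlgebra k A] (S : Suzuki k A)
    (hn : S.n = 2) (hlam : S.lam = 1) (hμ : S.μ = 1)
    (s : ℕ) (hs1 : 1 ≤ s) (hs2 : s ≤ S.N) (hgcd : Nat.gcd (2 * s + 1) S.N = 1)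
    (θ1 θ2 : k) (hθ1 : θ1 = 1 ∨ θ1 = -1) (hθ2 : θ2 = 1 ∨ θ2 = -1) :
    ∃ Γ : A ≃ₗ[k] A, IsHopfAut k Γ ∧
      Γ (S.x 0 0) = (2 : k)⁻¹ •
        (S.x 0 0 ^ (2 * s) * (S.x 0 0 + S.x 1 1)
          + θ2 • (S.x 0 1 ^ (2 * s) * (S.x 0 1 + S.x 1 0))) ∧
      Γ (S.x 1 1) = (2 : k)⁻¹ •
        (S.x 0 0 ^ (2 * s) * (S.x 0 0 + S.x 1 1)
          - θ2 • (S.x 0 1 ^ (2 * s) * (S.x 0 1 + S.x 1 0))) ∧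
      Γ (S.x 0 1) = (θ1 * (2 : k)⁻¹) •
        (S.x 0 0 ^ (2 * s) * (S.x 0 0 - S.x 1 1)
          - θ2 • (S.x 0 1 ^ (2 * s) * (S.x 0 1 - S.x 1 0))) ∧
      Γ (S.x 1 0) = (θ1 * (2 : k)⁻¹) •
        (S.x 0 0 ^ (2 * s) * (S.x 0 0 - S.x 1 1)
          + θ2 • (S.x 0 1 ^ (2 * s) * (S.x 0 1 - S.x 1 0))) := by
  obtain ⟨Γ, hΓ⟩ := stmt14_general (S.isSuzukiTwo hn hlam hμ) S.isMultiplicativeMatrix hgcd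
    (sq_eq_one_iff.mpr hθ1) (sq_eq_one_iff.mpr hθ2)
  rw [invOf_eq_inv] at hΓ
  exact ⟨_, .of_bialgEquiv Γ, hΓ⟩
end
end

section
/- Assume n = 2 and λ = 1, and let θ1, θ2 ∈ {1, −1} and 1 ≤ s ≤ N. If φ is a Hopf algebra automorphism of A = A_{N2}^{μ+} satisfying φ(x11) = (1/2)·[x11^{2s}(x11 + x22) + θ2·x12^{2s}(x12 + x21)], φ(x22) = (1/2)·[x11^{2s}(x11 + x22) − θ2·x12^{2s}(x12 + x21)], φ(x12) = (θ1/2)·[x11^{2s}(x11 − x22) − θ2·x12^{2s}(x12 − x21)], and φ(x21) = (θ1/2)·[x11^{2s}(x11 − x22) + θ2·x12^{2s}(x12 − x21)], then μ = 1 and gcd(2s + 1, N) = 1. -/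
/-!
For `n = 2` and `λ = 1` the algebra is commutative. Write `a = x₁₁`, `b = x₂₂`, `c = x₁₂`,
`d = x₂₁`, `z = a² + c²`, `g = (a + b + c + d) / 2` and `g' = (a - b + c - d) / 2`. Since `a` and
`b` annihilate `c` and `d`, one has `g g' = 0`, `g² + g'² = z`, `φ(a)² = z ^ (2s) g²` and
`φ(c)² = z ^ (2s) g'²`.

*The sign.* Applying `φ` to `a ^ (2N) + μ c ^ (2N) = 1` gives `z ^ ((2s+1)N) (g² + μ g'²) = z`.
Multiplying by the idempotent `a ^ (2N)`, which fixes `a` and `b` and kills `c` and `d`, turns this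
into `a (a + b) / 2 + μ a (a - b) / 2 = a²`, that is, `(1 - μ) (a² - a b) = 0`. But `a b ≠ a²`.

*The gcd.* Now `φ(z) = z ^ (2s+1)`, and for `μ = 1` the element `z` has order exactly `N`. As `φ` is
injective, `z ^ (2s+1)` has order `N` too, so `2s + 1` is prime to `N`.
-/

open scoped TensorProduct

noncomputable section

section Annihilation

variable {B : Type*} [CommSemiring B]

lemma pow_mul_eq_zero_of_mul_eq_zero {x y : B} (h : x * y = 0) {n : ℕ} (hn : n ≠ 0) :
    x ^ n * y = 0 := by
  rw [← pow_sub_one_mul hn, mul_assoc, h, mul_zero]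

lemma mul_add_pow_of_mul_eq_zero {w y : B} (h : w * y = 0) (x : B) (n : ℕ) :
    w * (x + y) ^ n = w * x ^ n := by
  induction n with
  | zero => simp only [pow_zero]
  | succ n ih =>
    calc w * (x + y) ^ (n + 1) = w * (x + y) ^ n * x + w * y * (x + y) ^ n := by ring
      _ = w * x ^ (n + 1) := by rw [ih, h]; ring

lemma add_pow_of_mul_eq_zero_s15 {x y : B} (h : x * y = 0) {n : ℕ} (hn : n ≠ 0) :
    (x + y) ^ n = x ^ n + y ^ n := by
  obtain ⟨n, rfl⟩ := Nat.exists_eq_succ_of_ne_zero hn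
  calc (x + y) ^ (n + 1) = x * (x + y) ^ n + y * (y + x) ^ n := by ring
    _ = x ^ (n + 1) + y ^ (n + 1) := by
      rw [mul_add_pow_of_mul_eq_zero h, mul_add_pow_of_mul_eq_zero (mul_comm x y ▸ h)]; ring

lemma add_mul_pow_of_mul_eq_zero {x y : B} (h : x * y = 0) {n : ℕ} (hn : n ≠ 0) :
    (x + y) * x ^ n = (x + y) ^ n * x := by
  have hy : x ^ n * y = 0 := pow_mul_eq_zero_of_mul_eq_zero h hn
  rw [add_mul, mul_comm y, hy, add_zero, mul_comm _ x, mul_add_pow_of_mul_eq_zero h]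

end Annihilation

section SumOfPowers

variable {R B : Type*} [CommSemiring R] [CommSemiring B] [Algebra R B] {a c : B} {μ : R}

lemma pow_mul_eq_self_of_mul_eq_zero {n : ℕ} (hn : n ≠ 0) (hrel : a ^ n + μ • c ^ n = 1) {w : B}
    (hw : w * c = 0) : a ^ n * w = w := by
  have hkill : c ^ n * w = 0 := pow_mul_eq_zero_of_mul_eq_zero (mul_comm w c ▸ hw) hn
  calc a ^ n * w = (a ^ n + μ • c ^ n) * w := by
        rw [add_mul, smul_mul_assoc, hkill, smul_zero, add_zero]
    _ = w := by rw [hrel, one_mul]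

lemma isIdempotentElem_pow_of_mul_eq_zero (hac : a * c = 0) {n : ℕ} (hn : n ≠ 0)
    (hrel : a ^ n + μ • c ^ n = 1) : IsIdempotentElem (a ^ n) :=
  pow_mul_eq_self_of_mul_eq_zero hn hrel (pow_mul_eq_zero_of_mul_eq_zero hac hn)

lemma pow_mul_sq_add_sq_pow (hac : a * c = 0) {N : ℕ} (hN : N ≠ 0)
    (hrel : a ^ (2 * N) + μ • c ^ (2 * N) = 1) (j : ℕ) :
    a ^ (2 * N) * (a ^ 2 + c ^ 2) ^ (j * N) = a ^ (2 * N) := by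
  have h2N : 2 * N ≠ 0 := mul_ne_zero two_ne_zero hN
  have hkill : a ^ (2 * N) * c ^ 2 = 0 := by
    rw [sq, ← mul_assoc, pow_mul_eq_zero_of_mul_eq_zero hac h2N, zero_mul]
  calc a ^ (2 * N) * (a ^ 2 + c ^ 2) ^ (j * N) = a ^ (2 * N) * (a ^ 2) ^ (j * N) :=
        mul_add_pow_of_mul_eq_zero hkill _ _
    _ = (a ^ (2 * N)) ^ (j + 1) := by ring
    _ = a ^ (2 * N) := (isIdempotentElem_pow_of_mul_eq_zero hac h2N hrel).pow_succ_eq j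

end SumOfPowers

lemma coprime_orderOf_of_map_eq_pow {M : Type*} [Monoid M] {φ : M →* M}
    (hφ : Function.Injective φ) {z : M} (hz : IsOfFinOrder z) {m : ℕ} (h : φ z = z ^ m) :
    (orderOf z).Coprime m := by
  have hdiv : orderOf z / (orderOf z).gcd m = orderOf z := by
    rw [← hz.orderOf_pow, ← h, orderOf_injective φ hφ]
  exact (Nat.div_eq_self.mp hdiv).resolve_left hz.orderOf_pos.ne'

lemma orderOf_sq_add_sq {B : Type*} [CommSemiring B] {a c : B} {N : ℕ} (hac : a * c = 0)
    (hN : N ≠ 0) (hrel : a ^ (2 * N) + c ^ (2 * N) = 1)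
    (ha : ∀ M, M < N → 0 < M → a ^ (2 * M + 1) ≠ a) : orderOf (a ^ 2 + c ^ 2) = N := by
  refine (orderOf_eq_iff (Nat.pos_of_ne_zero hN)).mpr ⟨?_, fun M hMN hM hone => ha M hMN hM ?_⟩
  · have hsq : a ^ 2 * c ^ 2 = 0 := by rw [← mul_pow, hac, zero_pow two_ne_zero]
    rw [add_pow_of_mul_eq_zero_s15 hsq hN, ← pow_mul, ← pow_mul, hrel]
  · have hac2 : a * c ^ 2 = 0 := by rw [sq, ← mul_assoc, hac, zero_mul]
    calc a ^ (2 * M + 1) = a * (a ^ 2) ^ M := by ring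
      _ = a * (a ^ 2 + c ^ 2) ^ M := (mul_add_pow_of_mul_eq_zero hac2 _ _).symm
      _ = a := by rw [hone, mul_one]

/-- The relations between `a = x₁₁`, `b = x₂₂`, `c = x₁₂`, `d = x₂₁` in a Suzuki algebra that
involve none of the parameters `N`, `n`, `μ`, `λ`. Of the two orders in which `{a, b}` and `{c, d}`
annihilate each other only one is recorded, as the notion is used in commutative rings. -/
structure SuzukiRelations {B : Type*} [Ring B] (a b c d : B) : Prop where
  sq_eq_left : a ^ 2 = b ^ 2
  sq_eq_right : c ^ 2 = d ^ 2
  ac : a * c = 0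
  ad : a * d = 0
  bc : b * c = 0
  bd : b * d = 0

/-- The element `(a + b + c + d) / 2`. Up to a power of `a² + c²`, its square is that of the image
of `x₁₁` under `Γ_{θ₁,θ₂,s}`; reversing the signs of `b` and `d` gives the same for `x₁₂`. -/
def halfSum (k : Type*) {B : Type*} [Field k] [Ring B] [Algebra k B] (a b c d : B) : B :=
  (2 : k)⁻¹ • ((a + b) + (c + d))

namespace SuzukiRelations

variable {k B : Type*} [Field k] [CommRing B] [Algebra k B] {a b c d : B}

lemma neg (h : SuzukiRelations a b c d) : SuzukiRelations a (-b) c (-d) where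
  sq_eq_left := by rw [neg_sq, h.sq_eq_left]
  sq_eq_right := by rw [neg_sq, h.sq_eq_right]
  ac := h.ac
  ad := by rw [mul_neg, h.ad, neg_zero]
  bc := by rw [neg_mul, h.bc, neg_zero]
  bd := by rw [neg_mul_neg, h.bd]

lemma add_mul_add_eq_zero (h : SuzukiRelations a b c d) : (a + b) * (c + d) = 0 := by
  linear_combination h.ac + h.ad + h.bc + h.bd

lemma halfSum_mul_halfSum_neg (h : SuzukiRelations a b c d) :
    halfSum k a b c d * halfSum k a (-b) c (-d) = 0 := by
  have hdiff : ((a + b) + (c + d)) * ((a + -b) + (c + -d)) = 0 := by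
    linear_combination h.sq_eq_left + h.sq_eq_right + 2 * h.ac - 2 * h.bd
  rw [halfSum, halfSum, smul_mul_smul_comm, hdiff, smul_zero]

lemma halfSum_sq [NeZero (2 : k)] (h : SuzukiRelations a b c d) :
    halfSum k a b c d ^ 2 = (2 : k)⁻¹ • (a * (a + b) + c * (c + d)) := by
  have hsq : ((a + b) + (c + d)) ^ 2 = (2 : k) • (a * (a + b) + c * (c + d)) := by
    rw [ofNat_smul_eq_nsmul, nsmul_eq_mul]
    push_cast
    linear_combination 2 * h.add_mul_add_eq_zero - h.sq_eq_left - h.sq_eq_right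
  rw [halfSum, smul_pow, hsq, smul_smul, sq, mul_assoc, inv_mul_cancel₀ two_ne_zero, mul_one]

lemma halfSum_sq_add_halfSum_neg_sq [NeZero (2 : k)] (h : SuzukiRelations a b c d) :
    halfSum k a b c d ^ 2 + halfSum k a (-b) c (-d) ^ 2 = a ^ 2 + c ^ 2 := by
  rw [h.halfSum_sq, h.neg.halfSum_sq, ← smul_add, inv_smul_eq_iff₀ two_ne_zero,
    ofNat_smul_eq_nsmul, nsmul_eq_mul]
  push_cast
  ring

lemma sq_smul_add (h : SuzukiRelations a b c d) {θ : k} (hθ : θ ^ 2 = 1) (m : ℕ) :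
    ((2 : k)⁻¹ • (a ^ m * (a + b) + θ • (c ^ m * (c + d)))) ^ 2
      = (a ^ 2 + c ^ 2) ^ m * halfSum k a b c d ^ 2 := by
  have hleft : (a + b) * (a ^ 2 + c ^ 2) ^ m = (a + b) * (a ^ 2) ^ m :=
    mul_add_pow_of_mul_eq_zero (by linear_combination c * (h.ac + h.bc)) _ _
  have hright : (c + d) * (c ^ 2 + a ^ 2) ^ m = (c + d) * (c ^ 2) ^ m :=
    mul_add_pow_of_mul_eq_zero (by linear_combination a * (h.ac + h.ad)) _ _
  have hsquare : (a ^ m * (a + b) + θ • (c ^ m * (c + d))) ^ 2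
      = (a ^ 2 + c ^ 2) ^ m * ((a + b) + (c + d)) ^ 2 := by
    have hθB : algebraMap k B θ ^ 2 = 1 := by rw [← map_pow, hθ, map_one]
    rw [Algebra.smul_def]
    linear_combination (c ^ m * (c + d)) ^ 2 * hθB - (a + b) * hleft - (c + d) * hright
      + 2 * (a ^ m * algebraMap k B θ * c ^ m - (a ^ 2 + c ^ 2) ^ m) * h.add_mul_add_eq_zero
  rw [smul_pow, hsquare, halfSum, smul_pow, mul_smul_comm]

lemma sq_smul_sub (h : SuzukiRelations a b c d) {η θ : k} (hη : η ^ 2 = 1) (hθ : θ ^ 2 = 1)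
    (m : ℕ) :
    ((η * (2 : k)⁻¹) • (a ^ m * (a - b) - θ • (c ^ m * (c - d)))) ^ 2
      = (a ^ 2 + c ^ 2) ^ m * halfSum k a (-b) c (-d) ^ 2 := by
  rw [← h.neg.sq_smul_add (θ := -θ) (by rw [neg_sq, hθ]), mul_smul, smul_pow, hη, one_smul,
    neg_smul, ← sub_eq_add_neg, ← sub_eq_add_neg, ← sub_eq_add_neg]

variable {N : ℕ} {μ : k}

lemma pow_mul_halfSum_sq [NeZero (2 : k)] (h : SuzukiRelations a b c d) (hN : N ≠ 0)
    (hrel : a ^ (2 * N) + μ • c ^ (2 * N) = 1) :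
    a ^ (2 * N) * halfSum k a b c d ^ 2 = (2 : k)⁻¹ • (a * (a + b)) := by
  have h2N : 2 * N ≠ 0 := mul_ne_zero two_ne_zero hN
  have hfix : a ^ (2 * N) * (a * (a + b)) = a * (a + b) :=
    pow_mul_eq_self_of_mul_eq_zero h2N hrel (by linear_combination a * (h.ac + h.bc))
  rw [h.halfSum_sq, mul_smul_comm, mul_add, hfix, ← mul_assoc,
    pow_mul_eq_zero_of_mul_eq_zero h.ac h2N, zero_mul, add_zero]

section Endomorphism

variable {φ : B →ₐ[k] B} {s : ℕ}

lemma pow_mul_halfSum_sq_add_smul [NeZero (2 : k)] (h : SuzukiRelations a b c d) (hN : N ≠ 0)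
    (hrel : a ^ (2 * N) + μ • c ^ (2 * N) = 1)
    (hφa : φ a ^ 2 = (a ^ 2 + c ^ 2) ^ (2 * s) * halfSum k a b c d ^ 2)
    (hφc : φ c ^ 2 = (a ^ 2 + c ^ 2) ^ (2 * s) * halfSum k a (-b) c (-d) ^ 2) :
    (a ^ 2 + c ^ 2) ^ ((2 * s + 1) * N)
      * (halfSum k a b c d ^ 2 + μ • halfSum k a (-b) c (-d) ^ 2) = a ^ 2 + c ^ 2 := by
  have hsum := h.halfSum_sq_add_halfSum_neg_sq (k := k)
  have horth : halfSum k a b c d ^ 2 * halfSum k a (-b) c (-d) ^ 2 = 0 := by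
    rw [← mul_pow, h.halfSum_mul_halfSum_neg, zero_pow two_ne_zero]
  set z := a ^ 2 + c ^ 2
  set p := halfSum k a b c d ^ 2
  set q := halfSum k a (-b) c (-d) ^ 2
  have hp : z * p ^ N = z ^ N * p := hsum ▸ add_mul_pow_of_mul_eq_zero horth hN
  have hq : z * q ^ N = z ^ N * q := by
    rw [← hsum, add_comm, add_mul_pow_of_mul_eq_zero (mul_comm p q ▸ horth) hN]
  have hφrel : (z ^ (2 * s) * p) ^ N + μ • (z ^ (2 * s) * q) ^ N = 1 := by
    rw [← hφa, ← hφc, ← pow_mul, ← pow_mul, ← map_pow, ← map_pow, ← map_smul, ← map_add, hrel,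
      map_one]
  calc z ^ ((2 * s + 1) * N) * (p + μ • q)
      = z ^ (2 * s * N) * (z ^ N * p) + μ • (z ^ (2 * s * N) * (z ^ N * q)) := by
        simp only [Algebra.smul_def]; ring
    _ = z * ((z ^ (2 * s) * p) ^ N + μ • (z ^ (2 * s) * q) ^ N) := by
        rw [← hp, ← hq]; simp only [Algebra.smul_def]; ring
    _ = z := by rw [hφrel, mul_one]

lemma eq_one_of_map_sq [NeZero (2 : k)] (h : SuzukiRelations a b c d) (hN : N ≠ 0)
    (hrel : a ^ (2 * N) + μ • c ^ (2 * N) = 1) (hab : a * b ≠ a ^ 2)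
    (hφa : φ a ^ 2 = (a ^ 2 + c ^ 2) ^ (2 * s) * halfSum k a b c d ^ 2)
    (hφc : φ c ^ 2 = (a ^ 2 + c ^ 2) ^ (2 * s) * halfSum k a (-b) c (-d) ^ 2) : μ = 1 := by
  have h2N : 2 * N ≠ 0 := mul_ne_zero two_ne_zero hN
  have hleft : a ^ (2 * N) * (a ^ 2 + c ^ 2) = a ^ 2 := by
    rw [mul_add, pow_mul_eq_self_of_mul_eq_zero h2N hrel (by rw [sq, mul_assoc, h.ac, mul_zero]),
      sq c, ← mul_assoc, pow_mul_eq_zero_of_mul_eq_zero h.ac h2N, zero_mul, add_zero]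
  have hright : a ^ (2 * N) * (halfSum k a b c d ^ 2 + μ • halfSum k a (-b) c (-d) ^ 2)
      = (2 : k)⁻¹ • (a * (a + b)) + μ • (2 : k)⁻¹ • (a * (a + -b)) := by
    rw [mul_add, mul_smul_comm, h.pow_mul_halfSum_sq hN hrel, h.neg.pow_mul_halfSum_sq hN hrel]
  have hkey : (2 : k)⁻¹ • (a * (a + b)) + μ • (2 : k)⁻¹ • (a * (a + -b)) = a ^ 2 := by
    rw [← hright, ← hleft, ← h.pow_mul_halfSum_sq_add_smul hN hrel hφa hφc, ← mul_assoc,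
      pow_mul_sq_add_sq_pow h.ac hN hrel]
  have hsmul : (1 - μ) • (a * b - a ^ 2) = 0 := by
    have hdouble : a * (a + b) + μ • (a * (a + -b)) = (2 : k) • a ^ 2 := by
      rw [← inv_smul_eq_iff₀ two_ne_zero, smul_add, smul_comm _ μ, hkey]
    rw [ofNat_smul_eq_nsmul, nsmul_eq_mul, Algebra.smul_def] at hdouble
    push_cast at hdouble
    rw [Algebra.smul_def, map_sub, map_one]
    linear_combination hdouble
  exact (sub_eq_zero.mp ((smul_eq_zero_iff_left (sub_ne_zero.mpr hab)).mp hsmul)).symm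

lemma map_sq_add_sq [NeZero (2 : k)] (h : SuzukiRelations a b c d)
    (hφa : φ a ^ 2 = (a ^ 2 + c ^ 2) ^ (2 * s) * halfSum k a b c d ^ 2)
    (hφc : φ c ^ 2 = (a ^ 2 + c ^ 2) ^ (2 * s) * halfSum k a (-b) c (-d) ^ 2) :
    φ (a ^ 2 + c ^ 2) = (a ^ 2 + c ^ 2) ^ (2 * s + 1) := by
  rw [map_add, map_pow, map_pow, hφa, hφc, ← mul_add, h.halfSum_sq_add_halfSum_neg_sq,
    ← pow_succ]

end Endomorphism

end SuzukiRelations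

namespace Suzuki

variable {k A : Type*} [Field k] [CharZero k] [IsAlgClosed k] [Ring A] [HopfAlgebra k A]

lemma suzukiRelations (S : Suzuki k A) :
    SuzukiRelations (S.x 0 0) (S.x 1 1) (S.x 0 1) (S.x 1 0) where
  sq_eq_left := S.rel_sq1
  sq_eq_right := S.rel_sq2
  ac := S.rel_odd _ _ _ _ (by decide)
  ad := S.rel_odd _ _ _ _ (by decide)
  bc := S.rel_odd _ _ _ _ (by decide)
  bd := S.rel_odd _ _ _ _ (by decide)

lemma x_mul_comm (S : Suzuki k A) (hn : S.n = 2) (hlam : S.lam = 1) (i j i' j' : Fin 2) :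
    S.x i j * S.x i' j' = S.x i' j' * S.x i j := by
  have hdiag : S.x 0 0 * S.x 1 1 = S.x 1 1 * S.x 0 0 := by
    simpa [hn, chi] using S.rel_chi2
  have hoff : S.x 1 0 * S.x 0 1 = S.x 0 1 * S.x 1 0 := by
    simpa [hn, hlam, chi] using S.rel_chi1
  by_cases hodd : Odd ((i : ℕ) + j + i' + j')
  · rw [S.rel_odd _ _ _ _ hodd, S.rel_odd]
    convert hodd using 1
    omega
  · fin_cases i <;> fin_cases j <;> fin_cases i' <;> fin_cases j' <;>
      first
      | rfl
      | exact hdiag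
      | exact hdiag.symm
      | exact hoff
      | exact hoff.symm
      | exact absurd (by decide) hodd

lemma mul_comm_of_two (S : Suzuki k A) (hn : S.n = 2) (hlam : S.lam = 1) (u v : A) :
    u * v = v * u := by
  have hgen (w : A) : w ∈ Algebra.adjoin k (Set.range fun p : Fin 2 × Fin 2 => S.x p.1 p.2) :=
    S.gen ▸ Algebra.mem_top
  have hcomm : IsMulCommutative
      (Algebra.adjoin k (Set.range fun p : Fin 2 × Fin 2 => S.x p.1 p.2)) := by
    refine Algebra.isMulCommutative_adjoin k ?_
    rintro _ ⟨p, rfl⟩ _ ⟨q, rfl⟩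
    exact S.x_mul_comm hn hlam ..
  exact setLike_mul_comm (hgen u) (hgen v)

lemma x_mul_x_ne_sq (S : Suzuki k A) : S.x 0 0 * S.x 1 1 ≠ S.x 0 0 ^ 2 := by
  intro heq
  have hN := S.hN
  have hn := S.hn
  have hinj := S.basis_indep.injective
  have hidx := @hinj (0, ⟨0, by omega⟩, ⟨1, by omega⟩) (0, ⟨1, by omega⟩, ⟨0, by omega⟩)
    (by simpa [chi] using heq)
  simp at hidx

lemma injOn_pow (S : Suzuki k A) : Set.InjOn (S.x 0 0 ^ ·) (Set.Icc 1 (2 * S.N)) := by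
  rintro i ⟨hi, hiN⟩ j ⟨hj, hjN⟩ heq
  have hn := S.hn
  have hinj := S.basis_indep.injective
  have hidx := @hinj (0, ⟨i - 1, by omega⟩, ⟨0, by omega⟩)
    (0, ⟨j - 1, by omega⟩, ⟨0, by omega⟩)
    (by simpa [chi, Nat.sub_add_cancel hi, Nat.sub_add_cancel hj] using heq)
  have hpred : i - 1 = j - 1 := congrArg (fun p => (p.2.1 : ℕ)) hidx
  omega

end Suzuki

theorem stmt15_general {k A : Type*} [Field k] [CharZero k] [IsAlgClosed k]
    [Ring A] [HopfAlgebra k A] (S : Suzuki k A) (hn : S.n = 2) (hlam : S.lam = 1)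
    {θ1 θ2 : k} (hθ1 : θ1 = 1 ∨ θ1 = -1) (hθ2 : θ2 = 1 ∨ θ2 = -1) {s : ℕ}
    (φ : A →ₐ[k] A) (hφ : Function.Injective φ)
    (h11 : φ (S.x 0 0) = (2 : k)⁻¹ •
        (S.x 0 0 ^ (2 * s) * (S.x 0 0 + S.x 1 1)
          + θ2 • (S.x 0 1 ^ (2 * s) * (S.x 0 1 + S.x 1 0))))
    (h12 : φ (S.x 0 1) = (θ1 * (2 : k)⁻¹) •
        (S.x 0 0 ^ (2 * s) * (S.x 0 0 - S.x 1 1)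
          - θ2 • (S.x 0 1 ^ (2 * s) * (S.x 0 1 - S.x 1 0)))) :
    S.μ = 1 ∧ Nat.gcd (2 * s + 1) S.N = 1 := by
  let _ : CommRing A := { ‹Ring A› with mul_comm := S.mul_comm_of_two hn hlam }
  have hS := S.suzukiRelations
  have hN : S.N ≠ 0 := Nat.one_le_iff_ne_zero.mp S.hN
  have hsq11 := congrArg (· ^ 2) h11 |>.trans (hS.sq_smul_add (sq_eq_one_iff.mpr hθ2) _)
  have hsq12 := congrArg (· ^ 2) h12 |>.trans
    (hS.sq_smul_sub (sq_eq_one_iff.mpr hθ1) (sq_eq_one_iff.mpr hθ2) _)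
  have hμ : S.μ = 1 := hS.eq_one_of_map_sq hN S.rel_mu S.x_mul_x_ne_sq hsq11 hsq12
  have horder : orderOf (S.x 0 0 ^ 2 + S.x 0 1 ^ 2) = S.N := by
    refine orderOf_sq_add_sq hS.ac hN (by simpa only [hμ, one_smul] using S.rel_mu) ?_
    intro M hMN hM heq
    have hM1 : 2 * M + 1 = 1 := S.injOn_pow (Set.mem_Icc.mpr (by omega))
      (Set.mem_Icc.mpr (by omega)) (by simpa only [pow_one] using heq)
    omega
  have hcoprime := coprime_orderOf_of_map_eq_pow (φ := (φ : A →* A)) hφ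
    (orderOf_pos_iff.mp (horder ▸ S.hN)) (hS.map_sq_add_sq hsq11 hsq12)
  exact ⟨hμ, Nat.coprime_comm.mp (horder ▸ hcoprime)⟩

/-- if a Hopf algebra automorphism of `A_{N2}^{μ+}` has the form
`Γ_{θ₁,θ₂,s}`, then `μ = 1` and `gcd(2s+1, N) = 1`. -/
theorem stmt15 (k A : Type*) [Field k] [CharZero k] [IsAlgClosed k]
    [Ring A] [HopfAlgebra k A] (S : Suzuki k A)
    (hn : S.n = 2) (hlam : S.lam = 1)
    (θ1 θ2 : k) (hθ1 : θ1 = 1 ∨ θ1 = -1) (hθ2 : θ2 = 1 ∨ θ2 = -1)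
    (s : ℕ) (hs1 : 1 ≤ s) (hs2 : s ≤ S.N)
    (φ : A ≃ₗ[k] A) (hφ : IsHopfAut k φ)
    (h11 : φ (S.x 0 0) = (2 : k)⁻¹ •
        (S.x 0 0 ^ (2 * s) * (S.x 0 0 + S.x 1 1)
          + θ2 • (S.x 0 1 ^ (2 * s) * (S.x 0 1 + S.x 1 0))))
    (h22 : φ (S.x 1 1) = (2 : k)⁻¹ •
        (S.x 0 0 ^ (2 * s) * (S.x 0 0 + S.x 1 1)
          - θ2 • (S.x 0 1 ^ (2 * s) * (S.x 0 1 + S.x 1 0))))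
    (h12 : φ (S.x 0 1) = (θ1 * (2 : k)⁻¹) •
        (S.x 0 0 ^ (2 * s) * (S.x 0 0 - S.x 1 1)
          - θ2 • (S.x 0 1 ^ (2 * s) * (S.x 0 1 - S.x 1 0))))
    (h21 : φ (S.x 1 0) = (θ1 * (2 : k)⁻¹) •
        (S.x 0 0 ^ (2 * s) * (S.x 0 0 - S.x 1 1)
          + θ2 • (S.x 0 1 ^ (2 * s) * (S.x 0 1 - S.x 1 0)))) :
    S.μ = 1 ∧ Nat.gcd (2 * s + 1) S.N = 1 :=
  stmt15_general S hn hlam hθ1 hθ2 (AlgHom.ofLinearMap φ.toLinearMap hφ.2.1 hφ.1) φ.injective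
    h11 h12
end
end

section
/- Assume n > 2. A bijective k-linear map φ : A → A on A = A_{Nn}^{μλ} is a Hopf algebra automorphism if and only if there exist integers s, t with 1 ≤ s ≤ N, 1 ≤ t ≤ n − 1, t odd, 2t ≠ n, gcd(2s + t, N) = 1, and a scalar ξ ∈ k with ξ^{2N} = 1 if n is even and ξ² = 1 if n is odd, such that φ is the algebra automorphism determined by either φ(x11) = x11^{2s}χ11^t, φ(x22) = x11^{2s}χ22^t, φ(x12) = ξ·x12^{2s}χ12^t, φ(x21) = ξ^{−1}·x12^{2s}χ21^t (the automorphism Ψ_ξ^{s,t}), or φ(x11) = x11^{2s}χ22^t, φ(x22) = x11^{2s}χ11^t, φ(x12) = ξ·x12^{2s}χ21^t, φ(x21) = ξ^{−1}·x12^{2s}χ12^t (the automorphism Φ_ξ^{s,t}). -/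
/-!
The arrays `c(s, t) = (x_{ij}^{2s} χ_{ij}^t)`, with indices `i, j` in `ℤ/2`, satisfy
`Δ c_{ij} = ∑ c_{il} ⊗ c_{lj}`, and for `1 ≤ s ≤ N`, `0 ≤ t ≤ n` their spans decompose `A` into a
direct sum of subcoalgebras, so the projections onto these blocks commute with both coactions.

For a Hopf automorphism `φ` the array `y = φ(x)` is linearly independent and again satisfies
`Δ y_{ij} = ∑ y_{il} ⊗ y_{lj}`. By Schur's lemma each block projection acts on it by a scalar, hence
`y` lies in a single block, and there it is a conjugate `P c Q` of `c = c(s, t)`, `P Q = 1`, because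
its coordinates are matrix units. If `t` is even, `t = n` or `2t = n`, then `c₁₁` and `c₂₂` commute,
hence so do `y₁₁` and `y₂₂`; but `x₁₁` and `x₂₂` do not commute when `n > 2`. For the remaining `t`
the relations `y₁₁ y₁₂ = y₂₂ y₁₂ = 0` and their transposes force `P` and `Q` to be monomial, and
`y` is `c` up to conjugation by `diag(ξ, 1)` and the exchange of the two indices: this gives `Ψ`
and `Φ`.

The parameters are constrained by the relations: `φ(x₁₁²) = x₁₁^{2(2s + t)}`, where `x₁₁²` generates
a cyclic group of order `N`, so `2s + t` is prime to `N`; the relation `x₁₁^{2N} + μ x₁₂^{2N} = 1`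
yields `ξ^{2N} = 1`; and for odd `n` the relation `χ₂₁ⁿ = λ χ₁₂ⁿ` yields `ξ² = 1`. Conversely, an
algebra map onto such an array respects `Δ` and `ε` on the generators, hence everywhere.
-/

open scoped TensorProduct

noncomputable section

section Comatrix

variable {R C D ι κ : Type*} [CommSemiring R] [AddCommMonoid C] [Module R C] [Coalgebra R C]
  [AddCommMonoid D] [Module R D] [Coalgebra R D]
  [Fintype ι] [DecidableEq ι] [Fintype κ] [DecidableEq κ]

/-- A square array of elements of a coalgebra on which `Δ` and `ε` act as on the coordinate
functions of a matrix algebra; equivalently, the matrix coefficients of a comodule with basis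
indexed by `ι`. -/
structure IsComatrix (R : Type*) {C ι : Type*} [CommSemiring R] [AddCommMonoid C] [Module R C]
    [Coalgebra R C] [Fintype ι] [DecidableEq ι] (y : ι → ι → C) : Prop where
  comul_apply : ∀ i j, Coalgebra.comul (R := R) (y i j) = ∑ l, y i l ⊗ₜ[R] y l j
  counit_apply : ∀ i j, Coalgebra.counit (R := R) (y i j) = if i = j then (1 : R) else 0

/-- An endomorphism of a coalgebra `C` commuting with the left and right coactions of `C` on
itself. -/
structure IsBicomoduleMap (π : C →ₗ[R] C) : Prop where
  comul_left : ∀ c, Coalgebra.comul (R := R) (π c) = π.rTensor C (Coalgebra.comul c)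
  comul_right : ∀ c, Coalgebra.comul (R := R) (π c) = π.lTensor C (Coalgebra.comul c)

namespace IsComatrix

variable {y : ι → ι → C}

lemma map (hy : IsComatrix R y) (f : C →ₗc[R] D) : IsComatrix R fun i j => f (y i j) where
  comul_apply i j := by
    rw [← CoalgHomClass.map_comp_comul_apply, hy.comul_apply, map_sum]
    simp only [TensorProduct.map_tmul, LinearMap.coe_coe]
  counit_apply i j := by
    rw [CoalgHomClass.counit_comp_apply, hy.counit_apply]

lemma reindex (hy : IsComatrix R y) (e : κ ≃ ι) : IsComatrix R fun i j => y (e i) (e j) where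
  comul_apply i j := by
    rw [hy.comul_apply, ← e.sum_comp]
  counit_apply i j := by
    simp only [hy.counit_apply, e.injective.eq_iff]

lemma smul_of_cocycle (hy : IsComatrix R y) {g : ι → ι → R} (hmul : ∀ i l j, g i l * g l j = g i j)
    (hone : ∀ i, g i i = 1) : IsComatrix R fun i j => g i j • y i j where
  comul_apply i j := by
    simp only [map_smul, hy.comul_apply, Finset.smul_sum, TensorProduct.smul_tmul_smul, hmul]
  counit_apply i j := by
    rcases eq_or_ne i j with rfl | h
    · simp [hy.counit_apply, hone]
    · simp [hy.counit_apply, h]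

lemma hadamard {B : Type*} [Semiring B] [Bialgebra R B] {y w : ι → ι → B}
    (hy : IsComatrix R y) (hw : IsComatrix R w)
    (h : ∀ i l l', l ≠ l' → y i l * w i l' = 0) : IsComatrix R fun i j => y i j * w i j where
  comul_apply i j := by
    rw [Bialgebra.comul_mul, hy.comul_apply, hw.comul_apply, Finset.sum_mul_sum]
    refine Finset.sum_congr rfl fun l _ => ?_
    rw [Finset.sum_eq_single l]
    · rw [Algebra.TensorProduct.tmul_mul_tmul]
    · intro l' _ hl
      rw [Algebra.TensorProduct.tmul_mul_tmul, h i l l' hl.symm, TensorProduct.zero_tmul]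
    · simp
  counit_apply i j := by
    rw [Bialgebra.counit_mul, hy.counit_apply, hw.counit_apply]
    split_ifs <;> simp

lemma comul_map_of_adjoin_eq_top {A B : Type*} [Semiring A] [Bialgebra R A]
    [Semiring B] [Bialgebra R B] {x : ι → ι → A} (f : A →ₐ[R] B)
    (hx : IsComatrix R x) (hfx : IsComatrix R fun i j => f (x i j))
    (hgen : Algebra.adjoin R (Set.range fun p : ι × ι => x p.1 p.2) = ⊤) (a : A) :
    Coalgebra.comul (R := R) (f a)
      = TensorProduct.map f.toLinearMap f.toLinearMap (Coalgebra.comul a) := by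
  have h : (Bialgebra.comulAlgHom R B).comp f
      = (Algebra.TensorProduct.map f f).comp (Bialgebra.comulAlgHom R A) := by
    refine AlgHom.ext_of_adjoin_eq_top hgen ?_
    rintro _ ⟨⟨i, j⟩, rfl⟩
    simp [hx.comul_apply, hfx.comul_apply]
  exact DFunLike.congr_fun h a

lemma counit_map_of_adjoin_eq_top {A B : Type*} [Semiring A] [Bialgebra R A]
    [Semiring B] [Bialgebra R B] {x : ι → ι → A} (f : A →ₐ[R] B)
    (hx : IsComatrix R x) (hfx : IsComatrix R fun i j => f (x i j))
    (hgen : Algebra.adjoin R (Set.range fun p : ι × ι => x p.1 p.2) = ⊤) (a : A) :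
    Coalgebra.counit (R := R) (f a) = Coalgebra.counit (R := R) a := by
  have h : (Bialgebra.counitAlgHom R B).comp f = Bialgebra.counitAlgHom R A := by
    refine AlgHom.ext_of_adjoin_eq_top hgen ?_
    rintro _ ⟨⟨i, j⟩, rfl⟩
    simp [hx.counit_apply, hfx.counit_apply]
  exact DFunLike.congr_fun h a

lemma map_eq_sum_counit_smul_left (hy : IsComatrix R y) {π : C →ₗ[R] C} (hπ : IsBicomoduleMap π)
    (i j : ι) : π (y i j) = ∑ l, Coalgebra.counit (R := R) (π (y i l)) • y l j := by
  have h := Coalgebra.rTensor_counit_comul (R := R) (π (y i j))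
  rw [hπ.comul_left, hy.comul_apply] at h
  simpa using (congrArg (TensorProduct.lid R C) h).symm

lemma map_eq_sum_counit_smul_right (hy : IsComatrix R y) {π : C →ₗ[R] C} (hπ : IsBicomoduleMap π)
    (i j : ι) : π (y i j) = ∑ l, Coalgebra.counit (R := R) (π (y l j)) • y i l := by
  have h := Coalgebra.lTensor_counit_comul (R := R) (π (y i j))
  rw [hπ.comul_right, hy.comul_apply] at h
  simpa using (congrArg (TensorProduct.rid R C) h).symm

end IsComatrix

end Comatrix

section Field

variable {K V C β ι : Type*} [Field K] [AddCommGroup V] [Module K V]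

lemma exists_dual_family [DecidableEq ι] {v : ι → V} (hv : LinearIndependent K v) :
    ∃ f : ι → V →ₗ[K] K, ∀ i j, f i (v j) = if i = j then 1 else 0 := by
  obtain ⟨g, hg⟩ := LinearMap.exists_extend hv.repr
  refine ⟨fun i => Finsupp.lapply i ∘ₗ g, fun i j => ?_⟩
  have hgv : g (v j) = Finsupp.single j 1 := by
    rw [← hv.repr_eq_single j ⟨v j, Submodule.subset_span ⟨j, rfl⟩⟩ rfl, ← hg]
    rfl
  simp [hgv, Finsupp.single_apply, eq_comm]

lemma linearIndependent_of_forall_mem_span [Finite ι] {v w : ι → V} (hv : LinearIndependent K v)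
    (h : ∀ i, v i ∈ Submodule.span K (Set.range w)) : LinearIndependent K w := by
  have := Fintype.ofFinite ι
  have := Module.Finite.span_of_finite K (Set.finite_range w)
  rw [linearIndependent_iff_card_le_finrank_span, ← finrank_span_eq_card hv]
  exact Submodule.finrank_mono (Submodule.span_le.mpr (Set.range_subset_iff.mpr h))

variable [Fintype ι]

lemma sum_diag_eq_of_conjugate [DecidableEq ι] {y c : ι → ι → V} {P Q : Matrix ι ι K}
    (hPQ : P * Q = 1)
    (hy : ∀ i j, y i j = ∑ a, ∑ b, (P i a * Q b j) • c a b) : ∑ i, y i i = ∑ a, c a a := by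
  have hQP (b a) : ∑ i, P i a * Q b i = if b = a then 1 else 0 := by
    simpa [Matrix.mul_apply, Matrix.one_apply, mul_comm]
      using congrFun₂ (mul_eq_one_comm (a := P).mp hPQ) b a
  calc ∑ i, y i i = ∑ a, ∑ b, (∑ i, P i a * Q b i) • c a b := by
        simp only [hy, Finset.sum_smul]
        rw [Finset.sum_comm]
        exact Finset.sum_congr rfl fun _ _ => Finset.sum_comm
    _ = ∑ a, c a a := by simp [hQP]

variable [DecidableEq ι] [AddCommGroup C] [Module K C] [Coalgebra K C] {y c : ι → ι → C}

namespace IsComatrix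

lemma exists_forall_eq_smul [Nonempty ι] (hy : IsComatrix K y)
    (hli : LinearIndependent K fun p : ι × ι => y p.1 p.2) {π : C →ₗ[K] C}
    (hπ : IsBicomoduleMap π) : ∃ γ : K, ∀ i j, π (y i j) = γ • y i j := by
  obtain ⟨f, hf⟩ := exists_dual_family hli
  have hfy (p q i j : ι) : f (p, q) (y i j) = if p = i ∧ q = j then 1 else 0 := by
    simpa using hf (p, q) (i, j)
  set F : ι → ι → K := fun i j => Coalgebra.counit (R := K) (π (y i j)) with hF
  have hcoef (i j p q : ι) : (if q = j then F i p else 0) = if p = i then F q j else 0 := by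
    have h := congrArg (f (p, q)) ((hy.map_eq_sum_counit_smul_left hπ i j).symm.trans
      (hy.map_eq_sum_counit_smul_right hπ i j))
    simpa [hfy, ite_and, hF] using h
  obtain ⟨o⟩ := ‹Nonempty ι›
  refine ⟨F o o, fun i j => ?_⟩
  have hFi (l : ι) : F i l = if l = i then F o o else 0 := by simpa using hcoef i o l o
  rw [hy.map_eq_sum_counit_smul_left hπ]
  change ∑ l, F i l • y l j = _
  simp [hFi]

lemma exists_forall_mem_range [Nonempty ι] (hy : IsComatrix K y)
    (hli : LinearIndependent K fun p : ι × ι => y p.1 p.2) {s : Finset β} {π : β → C →ₗ[K] C}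
    (hπ : ∀ b ∈ s, IsBicomoduleMap (π b)) (hsum : ∑ b ∈ s, π b = LinearMap.id) :
    ∃ b ∈ s, ∀ i j, y i j ∈ LinearMap.range (π b) := by
  by_contra! hcon
  have hzero (b) (hb : b ∈ s) (i j : ι) : π b (y i j) = 0 := by
    obtain ⟨γ, hγ⟩ := hy.exists_forall_eq_smul hli (hπ b hb)
    obtain ⟨i', j', hmem⟩ := hcon b hb
    have hγ0 : γ = 0 := by
      by_contra hne
      exact hmem ⟨γ⁻¹ • y i' j', by rw [map_smul, hγ, inv_smul_smul₀ hne]⟩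
    rw [hγ, hγ0, zero_smul]
  obtain ⟨o⟩ := ‹Nonempty ι›
  refine hli.ne_zero (o, o) ?_
  calc y o o = (∑ b ∈ s, π b) (y o o) := by rw [hsum, LinearMap.id_apply]
    _ = 0 := by rw [LinearMap.sum_apply, Finset.sum_eq_zero fun b hb => hzero b hb o o]

end IsComatrix

open Matrix in
lemma exists_eq_mul_of_matrixUnits [Nonempty ι] {E : ι → ι → Matrix ι ι K}
    (hmul : ∀ a b c d, E a b * E c d = if b = c then E a d else 0) (hone : ∑ a, E a a = 1) :
    ∃ P Q : Matrix ι ι K, P * Q = 1 ∧ ∀ a b i j, E a b i j = P i a * Q b j := by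
  obtain ⟨o, -, ho⟩ := Finset.exists_ne_zero_of_sum_ne_zero (hone.trans_ne one_ne_zero)
  obtain ⟨p, q, hpq⟩ : ∃ p q, E o o p q ≠ 0 := by
    by_contra! h
    exact ho (Matrix.ext h)
  let P : Matrix ι ι K := of fun i a => E a o i q
  let Q : Matrix ι ι K := of fun b j => (E o o p q)⁻¹ * E o b p j
  have hQP : Q * P = 1 := by
    ext b a
    calc (Q * P) b a = (E o o p q)⁻¹ * (E o b * E a o) p q := by
          simp only [Q, P, mul_apply, of_apply, Finset.mul_sum, mul_assoc]
      _ = (1 : Matrix ι ι K) b a := by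
          rw [hmul, one_apply]
          split_ifs <;> simp [hpq]
  have hPQ : P * Q = 1 := mul_eq_one_comm.mp hQP
  have hEP (a b i d) : (E a b * P) i d = if b = d then P i a else 0 := by
    calc (E a b * P) i d = (E a b * E d o) i q := rfl
      _ = if b = d then P i a else 0 := by
          rw [hmul]
          split_ifs <;> rfl
  refine ⟨P, Q, hPQ, fun a b i j => ?_⟩
  calc E a b i j = (E a b * P * Q) i j := by rw [Matrix.mul_assoc, hPQ, Matrix.mul_one]
    _ = P i a * Q b j := by simp [mul_apply (N := Q), hEP]

namespace IsComatrix

/-- Comparing `Δ (y i j)` with its expansion in `c` shows that the coordinate matrices of `y`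
multiply like matrix units. -/
lemma exists_conjugate [Nonempty ι] (hy : IsComatrix K y) (hc : IsComatrix K c)
    (hli : LinearIndependent K fun p : ι × ι => y p.1 p.2)
    (hspan : ∀ i j, y i j ∈ Submodule.span K (Set.range fun p : ι × ι => c p.1 p.2)) :
    ∃ P Q : Matrix ι ι K, P * Q = 1 ∧ ∀ i j, y i j = ∑ a, ∑ b, (P i a * Q b j) • c a b := by
  obtain ⟨f, hf⟩ := exists_dual_family
    (linearIndependent_of_forall_mem_span hli fun p => hspan p.1 p.2)
  have hfc (p q a b : ι) : f (p, q) (c a b) = if p = a ∧ q = b then 1 else 0 := by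
    simpa using hf (p, q) (a, b)
  let E : ι → ι → Matrix ι ι K := fun a b => Matrix.of fun i j => f (a, b) (y i j)
  have hyE (i j) : y i j = ∑ a, ∑ b, E a b i j • c a b := by
    obtain ⟨r, hr⟩ := (Submodule.mem_span_range_iff_exists_fun K).mp (hspan i j)
    have hE (a b) : E a b i j = r (a, b) := by
      simp [E, ← hr, hfc, Fintype.sum_prod_type, ite_and]
    simp only [hE, ← hr, Fintype.sum_prod_type]
  have hmul (a b p q) : E a b * E p q = if b = p then E a q else 0 := by
    ext i j
    have hΔ := congrArg (LinearMap.mul' K K ∘ₗ TensorProduct.map (f (a, b)) (f (p, q)))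
      ((congrArg (Coalgebra.comul (R := K)) (hyE i j)).symm.trans (hy.comul_apply i j))
    have hΔE : (E a b * E p q) i j = if b = p then E a q i j else 0 := by
      simpa [Matrix.mul_apply, E, hc.comul_apply, hfc, ite_and] using hΔ.symm
    rw [hΔE]
    split_ifs <;> rfl
  have hone : ∑ a, E a a = 1 := by
    ext i j
    have hε := congrArg (Coalgebra.counit (R := K)) (hyE i j)
    simpa [hy.counit_apply, hc.counit_apply, Matrix.sum_apply, Matrix.one_apply] using hε.symm
  obtain ⟨P, Q, hPQ, hE⟩ := exists_eq_mul_of_matrixUnits hmul hone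
  exact ⟨P, Q, hPQ, fun i j => by simpa only [hE] using hyE i j⟩

end IsComatrix

end Field

section Checkered

lemma fin_two_add_self (a : Fin 2) : a + a = 0 := by decide +revert

lemma fin_two_nsmul_of_odd {t : ℕ} (ht : Odd t) (a : Fin 2) : t • a = a := by
  obtain ⟨r, rfl⟩ := ht
  rw [add_nsmul, mul_comm, mul_nsmul, two_nsmul, fin_two_add_self]
  simp

lemma fin_two_nsmul_of_even {t : ℕ} (ht : Even t) (a : Fin 2) : t • a = 0 := by
  obtain ⟨r, rfl⟩ := ht
  rw [add_nsmul, fin_two_add_self]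

lemma fin_two_add_add_add (i j e : Fin 2) : (i + e) + (j + e) = i + j := by
  rw [add_add_add_comm, fin_two_add_self, add_zero]

lemma fin_two_add_one_add_one (i : Fin 2) : i + 1 + 1 = i := by
  rw [add_assoc, fin_two_add_self, add_zero]

variable {A : Type*} [Ring A] {x : Fin 2 → Fin 2 → A}

lemma chi_one (x : Fin 2 → Fin 2 → A) (i j : Fin 2) : chi x i j 1 = x i j := mul_one _

lemma chi_succ (x : Fin 2 → Fin 2 → A) (i j : Fin 2) (m : ℕ) :
    chi x i j (m + 1) = x i j * chi x (i + 1) (j + 1) m := rfl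

lemma chi_add (x : Fin 2 → Fin 2 → A) (i j : Fin 2) (m n : ℕ) :
    chi x i j (m + n) = chi x i j m * chi x (i + m • 1) (j + m • 1) n := by
  induction m generalizing i j with
  | zero => simp [chi]
  | succ m ih =>
    rw [Nat.add_right_comm, chi_succ, ih, chi_succ, succ_nsmul', mul_assoc, add_assoc, add_assoc]

lemma chi_odd_add (x : Fin 2 → Fin 2 → A) {m : ℕ} (hm : Odd m) (i j : Fin 2) (n : ℕ) :
    chi x i j (m + n) = chi x i j m * chi x (i + 1) (j + 1) n := by
  rw [chi_add, fin_two_nsmul_of_odd hm]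

lemma map_chi {B F : Type*} [Ring B] [FunLike F A B] [MonoidHomClass F A B] (f : F)
    (x : Fin 2 → Fin 2 → A) (i j : Fin 2) (m : ℕ) :
    f (chi x i j m) = chi (fun i j => f (x i j)) i j m := by
  induction m generalizing i j with
  | zero => exact map_one f
  | succ m ih => rw [chi_succ, map_mul, ih, chi_succ]

/-- A `2 × 2` array in a ring in which entries with different `i + j` annihilate each other and
diagonally opposite entries have the same square. -/
structure IsCheckered (x : Fin 2 → Fin 2 → A) : Prop where
  mul_eq_zero : ∀ {i j i' j' : Fin 2}, i + j ≠ i' + j' → x i j * x i' j' = 0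
  sq_add_one : ∀ i j, x (i + 1) (j + 1) ^ 2 = x i j ^ 2

/-- The array with entries `x i j ^ (2 * s) * χ_{ij}^t`. For the generators `x` of a Suzuki
algebra and `1 ≤ s ≤ N`, `0 ≤ t ≤ n`, the entries of each of these arrays span a subcoalgebra, and
the algebra is the direct sum of these subcoalgebras. -/
def coeff (x : Fin 2 → Fin 2 → A) (s t : ℕ) (i j : Fin 2) : A := x i j ^ (2 * s) * chi x i j t

namespace IsCheckered

lemma pow_two_mul_add (hx : IsCheckered x) (i j e : Fin 2) (s : ℕ) :
    x (i + e) (j + e) ^ (2 * s) = x i j ^ (2 * s) := by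
  fin_cases e
  · simp
  · exact (pow_mul _ _ _).trans ((congrArg (· ^ s) (hx.sq_add_one i j)).trans (pow_mul _ _ _).symm)

lemma pow_mul_pow_eq_zero (hx : IsCheckered x) {i j i' j' : Fin 2} (h : i + j ≠ i' + j')
    {r s : ℕ} (hr : r ≠ 0) (hs : s ≠ 0) : x i j ^ r * x i' j' ^ s = 0 := by
  obtain ⟨r, rfl⟩ := Nat.exists_eq_succ_of_ne_zero hr
  obtain ⟨s, rfl⟩ := Nat.exists_eq_succ_of_ne_zero hs
  rw [pow_succ, pow_succ', mul_assoc, ← mul_assoc (x i j), hx.mul_eq_zero h, zero_mul, mul_zero]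

lemma pow_mul_chi_eq_zero (hx : IsCheckered x) {i j i' j' : Fin 2} (h : i + j ≠ i' + j')
    {r m : ℕ} (hr : r ≠ 0) (hm : m ≠ 0) : x i j ^ r * chi x i' j' m = 0 := by
  obtain ⟨m, rfl⟩ := Nat.exists_eq_succ_of_ne_zero hm
  rw [chi_succ, ← mul_assoc, ← pow_one (x i' j'), hx.pow_mul_pow_eq_zero h hr one_ne_zero, zero_mul]

lemma commute_pow_chi (hx : IsCheckered x) (i j : Fin 2) (s m : ℕ) :
    Commute (x i j ^ (2 * s)) (chi x i j m) := by
  induction m generalizing i j with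
  | zero => exact Commute.one_right _
  | succ m ih =>
    refine ((Commute.refl (x i j)).pow_left _).mul_right ?_
    rw [← hx.pow_two_mul_add i j 1]
    exact ih (i + 1) (j + 1)

lemma chi_mul_chi (hx : IsCheckered x) (i j : Fin 2) (m : ℕ) :
    chi x i j m * chi x (i + (m + 1) • 1) (j + (m + 1) • 1) m = x i j ^ (2 * m) := by
  induction m generalizing i j with
  | zero => simp [chi]
  | succ m ih =>
    have hlast (a : Fin 2) : a + (m + 1 + 1) • 1 + m • 1 = a := by
      rw [add_assoc, ← add_nsmul, fin_two_nsmul_of_even ⟨m + 1, by ring⟩, add_zero]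
    have hshift (a : Fin 2) : a + (m + 1 + 1) • 1 = a + 1 + (m + 1) • 1 := by
      rw [succ_nsmul' _ (m + 1), add_assoc]
    calc chi x i j (m + 1) * chi x (i + (m + 1 + 1) • 1) (j + (m + 1 + 1) • 1) (m + 1)
        = x i j * (chi x (i + 1) (j + 1) m
            * chi x (i + 1 + (m + 1) • 1) (j + 1 + (m + 1) • 1) m) * x i j := by
          rw [chi_add x (i + _) (j + _) m 1, chi_succ, hlast, hlast, chi_one, hshift, hshift]
          simp only [mul_assoc]
      _ = x i j ^ (2 * (m + 1)) := by
          rw [ih, hx.pow_two_mul_add i j 1, ← pow_succ', ← pow_succ]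
          rfl

lemma chi_sq_of_odd (hx : IsCheckered x) {t : ℕ} (ht : Odd t) (i j : Fin 2) :
    chi x i j t ^ 2 = x i j ^ (2 * t) := by
  have h := hx.chi_mul_chi i j t
  rwa [fin_two_nsmul_of_even ht.add_one, add_zero, add_zero, ← sq] at h

lemma chi_mul_chi_of_even (hx : IsCheckered x) {t : ℕ} (ht : Even t) (i j : Fin 2) :
    chi x i j t * chi x (i + 1) (j + 1) t = x i j ^ (2 * t) := by
  have h := hx.chi_mul_chi i j t
  rwa [fin_two_nsmul_of_odd ht.add_one] at h

lemma coeff_mul_coeff (hx : IsCheckered x) (s t : ℕ) (i j e : Fin 2) :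
    coeff x s t i j * coeff x s t (i + e) (j + e)
      = x i j ^ (2 * (2 * s)) * (chi x i j t * chi x (i + e) (j + e) t) := by
  rw [coeff, coeff, hx.pow_two_mul_add, mul_assoc, ← mul_assoc (chi x i j t),
    ← (hx.commute_pow_chi i j s t).eq, ← mul_assoc, ← mul_assoc, ← pow_add, mul_assoc, ← mul_add,
    ← two_mul]

lemma coeff_sq (hx : IsCheckered x) (s : ℕ) {t : ℕ} (ht : Odd t) (i j : Fin 2) :
    coeff x s t i j ^ 2 = x i j ^ (2 * (2 * s + t)) := by
  have h := hx.coeff_mul_coeff s t i j 0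
  rw [add_zero, add_zero, ← sq, ← sq, hx.chi_sq_of_odd ht, ← pow_add] at h
  rw [h, mul_add]

lemma coeff_mul_coeff_of_odd (hx : IsCheckered x) (s : ℕ) {t : ℕ} (ht : Odd t) (i j : Fin 2) :
    coeff x s t i j * coeff x s t (i + 1) (j + 1) = x i j ^ (2 * (2 * s)) * chi x i j (2 * t) := by
  rw [hx.coeff_mul_coeff, ← chi_odd_add x ht, ← two_mul]

lemma coeff_mul_coeff_of_even (hx : IsCheckered x) (s : ℕ) {t : ℕ} (ht : Even t) (i j : Fin 2) :
    coeff x s t i j * coeff x s t (i + 1) (j + 1) = x i j ^ (2 * (2 * s + t)) := by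
  rw [hx.coeff_mul_coeff, hx.chi_mul_chi_of_even ht, ← pow_add, mul_add]

lemma commute_coeff_of_even (hx : IsCheckered x) (s : ℕ) {t : ℕ} (ht : Even t) (i j : Fin 2) :
    Commute (coeff x s t i j) (coeff x s t (i + 1) (j + 1)) := by
  have h := hx.coeff_mul_coeff_of_even s ht (i + 1) (j + 1)
  rw [fin_two_add_one_add_one, fin_two_add_one_add_one, hx.pow_two_mul_add i j 1] at h
  exact (hx.coeff_mul_coeff_of_even s ht i j).trans h.symm

lemma chi_coeff (hx : IsCheckered x) (s : ℕ) {t : ℕ} (ht : Odd t) (i j : Fin 2) (m : ℕ) :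
    chi (coeff x s t) i j m = x i j ^ (2 * (m * s)) * chi x i j (m * t) := by
  induction m generalizing i j with
  | zero => simp [chi]
  | succ m ih =>
    rw [chi_succ, ih, hx.pow_two_mul_add i j 1, Nat.succ_mul m t, add_comm (m * t),
      chi_odd_add x ht, coeff, mul_assoc, ← mul_assoc (chi x i j t),
      ← (hx.commute_pow_chi i j _ t).eq, ← mul_assoc, ← mul_assoc, ← pow_add, mul_assoc, ← mul_add,
      add_comm s, ← Nat.succ_mul]

lemma coeff_mul_coeff_eq_zero (hx : IsCheckered x) {s : ℕ} (hs : s ≠ 0) (t : ℕ)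
    {i j i' j' : Fin 2} (h : i + j ≠ i' + j') : coeff x s t i j * coeff x s t i' j' = 0 := by
  have h2s : 2 * s ≠ 0 := by omega
  rw [coeff, (hx.commute_pow_chi i j s t).eq, coeff, mul_assoc, ← mul_assoc (x i j ^ _),
    hx.pow_mul_pow_eq_zero h h2s h2s, zero_mul, mul_zero]

lemma isCheckered_coeff (hx : IsCheckered x) {s t : ℕ} (hs : s ≠ 0) (ht : Odd t) :
    IsCheckered (coeff x s t) where
  mul_eq_zero := hx.coeff_mul_coeff_eq_zero hs t
  sq_add_one i j := by rw [hx.coeff_sq s ht, hx.coeff_sq s ht, hx.pow_two_mul_add i j 1]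

section Bialgebra

variable {R B : Type*} [CommSemiring R] [Ring B] [Bialgebra R B] {x : Fin 2 → Fin 2 → B}

lemma isComatrix_pow (hx : IsCheckered x) (h : IsComatrix R x) {m : ℕ} (hm : m ≠ 0) :
    IsComatrix R fun i j => x i j ^ m := by
  induction m, Nat.one_le_iff_ne_zero.mpr hm using Nat.le_induction with
  | base => simpa using h
  | succ m hm ih =>
    simp only [pow_succ]
    refine (ih (by omega)).hadamard h fun i l l' hl => ?_
    rw [← pow_one (x i l'), hx.pow_mul_pow_eq_zero (by simpa using hl) (by omega) one_ne_zero]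

lemma isComatrix_chi (hx : IsCheckered x) (h : IsComatrix R x) {m : ℕ} (hm : m ≠ 0) :
    IsComatrix R fun i j => chi x i j m := by
  induction m, Nat.one_le_iff_ne_zero.mpr hm using Nat.le_induction with
  | base => simpa only [chi_one] using h
  | succ m hm ih =>
    simp only [chi_succ]
    refine h.hadamard ((ih (by omega)).reindex (Equiv.addRight 1)) fun i l l' hl => ?_
    rw [← pow_one (x i l)]
    refine hx.pow_mul_chi_eq_zero ?_ one_ne_zero (by omega)
    simpa [fin_two_add_add_add] using hl

lemma isComatrix_coeff (hx : IsCheckered x) (h : IsComatrix R x) {s : ℕ} (hs : s ≠ 0) (t : ℕ) :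
    IsComatrix R (coeff x s t) := by
  have h2s : 2 * s ≠ 0 := by omega
  rcases eq_or_ne t 0 with rfl | ht
  · convert hx.isComatrix_pow h h2s using 3 with i j
    exact mul_one _
  · exact (hx.isComatrix_pow h h2s).hadamard (hx.isComatrix_chi h ht) fun i l l' hl =>
      hx.pow_mul_chi_eq_zero (by simpa using hl) h2s ht

end Bialgebra

end IsCheckered

section Twist

variable {k M A : Type*} [Field k] [AddCommGroup M] [Module k M] [Ring A] [Algebra k A]
  {ξ : k} {y c : Fin 2 → Fin 2 → A}

/-- The scalars by which conjugation with `diag(ξ, 1)` multiplies the entries of a matrix. -/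
def gaugeFactor (ξ : k) (i j : Fin 2) : k := !![1, ξ; ξ⁻¹, 1] i j

lemma gaugeFactor_mul_gaugeFactor (hξ : ξ ≠ 0) (i l j : Fin 2) :
    gaugeFactor ξ i l * gaugeFactor ξ l j = gaugeFactor ξ i j := by
  fin_cases i <;> fin_cases l <;> fin_cases j <;> simp [gaugeFactor, hξ]

lemma gaugeFactor_self (ξ : k) (i : Fin 2) : gaugeFactor ξ i i = 1 := by
  fin_cases i <;> simp [gaugeFactor]

lemma gaugeFactor_mul_gaugeFactor_add_one (hξ : ξ ≠ 0) (i j : Fin 2) :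
    gaugeFactor ξ i j * gaugeFactor ξ (i + 1) (j + 1) = 1 := by
  fin_cases i <;> fin_cases j <;> simp [gaugeFactor, hξ]

/-- The array `c` conjugated by `diag(ξ, 1)` and, for `e = 1`, by the transposition of the two
indices. The automorphisms `Ψ_ξ^{s,t}` and `Φ_ξ^{s,t}` send the generators to the twists of
`coeff x s t` with `e = 0` and `e = 1`. -/
def twist (ξ : k) (e : Fin 2) (c : Fin 2 → Fin 2 → M) (i j : Fin 2) : M :=
  gaugeFactor ξ i j • c (i + e) (j + e)

lemma chi_twist_of_odd (hξ : ξ ≠ 0) (e : Fin 2) (c : Fin 2 → Fin 2 → A) (i j : Fin 2) {m : ℕ}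
    (hm : Odd m) : chi (twist ξ e c) i j m = twist ξ e (fun i j => chi c i j m) i j := by
  obtain ⟨r, rfl⟩ := hm
  induction r generalizing i j with
  | zero => simp [chi_one, twist]
  | succ r ih =>
    have h2 : 2 * (r + 1) + 1 = 2 * r + 1 + 1 + 1 := rfl
    simp only [twist] at ih
    simp only [twist, h2, chi_succ _ _ _ (2 * r + 1 + 1), chi_succ _ _ _ (2 * r + 1),
      fin_two_add_one_add_one, ih, smul_mul_smul_comm, gaugeFactor_mul_gaugeFactor_add_one hξ,
      add_right_comm _ (1 : Fin 2) e, ← mul_assoc, one_mul]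

lemma IsComatrix.twist {C : Type*} [AddCommGroup C] [Module k C] [Coalgebra k C]
    {c : Fin 2 → Fin 2 → C} (hc : IsComatrix k c) (hξ : ξ ≠ 0) (e : Fin 2) :
    IsComatrix k (twist ξ e c) :=
  (hc.reindex (Equiv.addRight e)).smul_of_cocycle (gaugeFactor_mul_gaugeFactor hξ)
    (gaugeFactor_self ξ)

/-- The diagonal sum is invariant under conjugation, and it commutes with every entry of `c`. -/
lemma commute_diag_of_conjugate {P Q : Matrix (Fin 2) (Fin 2) k} (hPQ : P * Q = 1)
    (hy : ∀ i j, y i j = ∑ a, ∑ b, (P i a * Q b j) • c a b)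
    (hc : ∀ {i j i' j' : Fin 2}, i + j ≠ i' + j' → c i j * c i' j' = 0)
    (hcomm : Commute (c 0 0) (c 1 1)) : Commute (y 0 0) (y 1 1) := by
  have hsum : c 0 0 + c 1 1 = y 0 0 + y 1 1 := by
    simpa [Fin.sum_univ_two] using (sum_diag_eq_of_conjugate hPQ hy).symm
  have hcentral (a b) : Commute (c 0 0 + c 1 1) (c a b) := by
    fin_cases a <;> fin_cases b
    · exact (Commute.refl _).add_left hcomm.symm
    · simp [commute_iff_eq, add_mul, mul_add, hc]
    · simp [commute_iff_eq, add_mul, mul_add, hc]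
    · exact hcomm.add_left (Commute.refl _)
  have hy0 : Commute (y 0 0) (y 0 0 + y 1 1) := by
    rw [← hsum, hy]
    exact Commute.sum_left _ _ _ fun a _ => Commute.sum_left _ _ _ fun b _ =>
      (hcentral a b).symm.smul_left _
  simpa using hy0.sub_right (Commute.refl (y 0 0))

/-- The diagonal sum of `c` is that of `y`, hence annihilates the off-diagonal entries of `y`. -/
lemma mul_eq_zero_of_conjugate {P Q : Matrix (Fin 2) (Fin 2) k} (hPQ : P * Q = 1)
    (hy : ∀ i j, y i j = ∑ a, ∑ b, (P i a * Q b j) • c a b) (hc : IsCheckered c)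
    (hy0 : ∀ {i j i' j' : Fin 2}, i + j ≠ i' + j' → y i j * y i' j' = 0)
    (hcomm : ¬ Commute (c 0 0) (c 1 1)) {i j : Fin 2} (hij : i ≠ j) (a : Fin 2) :
    P i a * Q a j = 0 := by
  have hsum : y 0 0 + y 1 1 = c 0 0 + c 1 1 := by
    simpa [Fin.sum_univ_two] using sum_diag_eq_of_conjugate hPQ hy
  have hγ : P i 0 * Q 0 j + P i 1 * Q 1 j = 0 := by
    simpa [Matrix.mul_apply, hij] using congrFun₂ hPQ i j
  have hsq : c 1 1 * c 1 1 = c 0 0 * c 0 0 := by simpa [sq] using hc.sq_add_one 0 0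
  have hleft : (y 0 0 + y 1 1) * y i j = 0 := by
    have hij0 (a : Fin 2) : a + a ≠ i + j := by
      rw [fin_two_add_self, ← fin_two_add_self j]
      exact fun h => hij (add_right_cancel h).symm
    rw [add_mul, hy0 (hij0 0), hy0 (hij0 1), add_zero]
  have hexpand : (c 0 0 + c 1 1) * y i j
      = (P i 0 * Q 0 j) • (c 1 1 * c 0 0 - c 0 0 * c 1 1) := by
    have hc0 {a b : Fin 2} (h : 0 ≠ a + b) : (c 0 0 + c 1 1) * c a b = 0 := by
      rw [add_mul, hc.mul_eq_zero h, hc.mul_eq_zero (i := 1) (j := 1) h, add_zero]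
    simp only [hy, Fin.sum_univ_two, mul_add, mul_smul_comm, eq_neg_of_add_eq_zero_right hγ,
      hc0 (a := 0) (b := 1) (by decide), hc0 (a := 1) (b := 0) (by decide), add_mul, hsq]
    module
  have hprod : (P i 0 * Q 0 j) • (c 1 1 * c 0 0 - c 0 0 * c 1 1) = 0 := by
    rw [← hexpand, ← hsum, hleft]
  have hzero : P i 0 * Q 0 j = 0 := (smul_eq_zero.mp hprod).resolve_right fun h =>
    hcomm (sub_eq_zero.mp h).symm
  fin_cases a
  · exact hzero
  · simpa [hzero] using hγ

lemma exists_forall_eq_zero_of_mul_eq_zero {P Q : Matrix (Fin 2) (Fin 2) k} (hPQ : P * Q = 1)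
    (hoff : ∀ {i j}, i ≠ j → ∀ a, P i a * Q a j = 0) :
    ∃ e, (∀ i a, a ≠ i + e → P i a = 0) ∧ ∀ j b, b ≠ j + e → Q b j = 0 := by
  have h01 (a : Fin 2) : P 0 a = 0 ∨ Q a 1 = 0 := mul_eq_zero.mp (hoff (by decide) a)
  have h10 (a : Fin 2) : P 1 a = 0 ∨ Q a 0 = 0 := mul_eq_zero.mp (hoff (by decide) a)
  have hdiag (i e : Fin 2) : P i e * Q e i + P i (e + 1) * Q (e + 1) i = 1 := by
    have h : P i 0 * Q 0 i + P i 1 * Q 1 i = 1 := by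
      simpa [Matrix.mul_apply] using congrFun₂ hPQ i i
    fin_cases e
    · exact h
    · exact (add_comm _ _).trans h
  obtain ⟨e, he⟩ : ∃ e, P 0 e ≠ 0 := by
    by_contra! h
    simpa [h] using hdiag 0 0
  have hQe1 : Q e 1 = 0 := (h01 e).resolve_left he
  have hPQ1 : P 1 (e + 1) * Q (e + 1) 1 = 1 := by simpa [hQe1] using hdiag 1 e
  have hPe0 : P 0 (e + 1) = 0 := (h01 _).resolve_right (right_ne_zero_of_mul_eq_one hPQ1)
  have hQe0 : Q (e + 1) 0 = 0 := (h10 _).resolve_left (left_ne_zero_of_mul_eq_one hPQ1)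
  have hPQ0 : P 0 e * Q e 0 = 1 := by simpa [hPe0] using hdiag 0 e
  have hPe1 : P 1 e = 0 := (h10 _).resolve_right (right_ne_zero_of_mul_eq_one hPQ0)
  refine ⟨e, ?_, ?_⟩ <;> fin_cases e <;> simp_all [Fin.forall_fin_two]

lemma exists_eq_twist_of_conjugate {P Q : Matrix (Fin 2) (Fin 2) k} (hPQ : P * Q = 1)
    (hy : ∀ i j, y i j = ∑ a, ∑ b, (P i a * Q b j) • c a b)
    (hoff : ∀ {i j}, i ≠ j → ∀ a, P i a * Q a j = 0) :
    ∃ ξ : k, ξ ≠ 0 ∧ ∃ e, y = twist ξ e c := by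
  obtain ⟨e, hP, hQ⟩ := exists_forall_eq_zero_of_mul_eq_zero hPQ hoff
  have hone (i : Fin 2) : P i (i + e) * Q (i + e) i = 1 := by
    rw [← Matrix.one_apply_eq (α := k) i, ← hPQ, Matrix.mul_apply, Fintype.sum_eq_single (i + e)]
    exact fun a ha => by rw [hP i a ha, zero_mul]
  have hmonomial (i j : Fin 2) : y i j = (P i (i + e) * Q (j + e) j) • c (i + e) (j + e) := by
    rw [hy, Fintype.sum_eq_single (i + e), Fintype.sum_eq_single (j + e)]
    · exact fun b hb => by rw [hQ j b hb, mul_zero, zero_smul]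
    · exact fun a ha => Finset.sum_eq_zero fun b _ => by rw [hP i a ha, zero_mul, zero_smul]
  have hinv : (P 0 (0 + e) * Q (1 + e) 1) * (P 1 (1 + e) * Q (0 + e) 0) = 1 := by
    linear_combination P 1 (1 + e) * Q (1 + e) 1 * hone 0 + hone 1
  refine ⟨P 0 (0 + e) * Q (1 + e) 1, left_ne_zero_of_mul_eq_one hinv, e, funext₂ fun i j => ?_⟩
  rw [hmonomial, twist]
  congr 1
  fin_cases i <;> fin_cases j
  · exact hone 0
  · rfl
  · exact eq_inv_of_mul_eq_one_right hinv
  · exact hone 1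

end Twist

end Checkered

lemma IsHopfAut.isComatrix_map {k A ι : Type*} [Field k] [Ring A] [HopfAlgebra k A] [Fintype ι]
    [DecidableEq ι] {ψ : A ≃ₗ[k] A} (h : IsHopfAut k ψ) {y : ι → ι → A} (hy : IsComatrix k y) :
    IsComatrix k fun i j => ψ (y i j) :=
  hy.map { ψ.toLinearMap with
    counit_comp := LinearMap.ext h.2.2.2
    map_comp_comul := LinearMap.ext fun a => (h.2.2.1 a).symm }

namespace Suzuki

variable {k A : Type*} [Field k] [CharZero k] [IsAlgClosed k] [Ring A] [HopfAlgebra k A]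
  (S : Suzuki k A)

/-- The scalar by which `x i j ^ (2 * N)`, `i + j = a`, acts on the entries `x i j`. -/
def signMu (a : Fin 2) : k := if a = 0 then 1 else S.μ

/-- The scalar relating `χ_{ij}^n` and `χ_{i+1,j+1}^n`, `i + j = a`. -/
def signLam (a : Fin 2) : k := if a = 0 then 1 else S.lam

lemma signMu_mul_self (a : Fin 2) : S.signMu a * S.signMu a = 1 := by
  rcases S.hμ with h | h <;> by_cases ha : a = 0 <;> simp [signMu, h, ha]

lemma signLam_mul_self (a : Fin 2) : S.signLam a * S.signLam a = 1 := by
  rcases S.hlam with h | h <;> by_cases ha : a = 0 <;> simp [signLam, h, ha]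

lemma signMu_ne_zero (a : Fin 2) : S.signMu a ≠ 0 :=
  left_ne_zero_of_mul_eq_one (S.signMu_mul_self a)

lemma signLam_ne_zero (a : Fin 2) : S.signLam a ≠ 0 :=
  left_ne_zero_of_mul_eq_one (S.signLam_mul_self a)

lemma N_ne_zero : S.N ≠ 0 := Nat.one_le_iff_ne_zero.mp S.hN

lemma n_pos : 0 < S.n := two_pos.trans_le S.hn

lemma isCheckered_x : IsCheckered S.x where
  mul_eq_zero {i j i' j'} h := S.rel_odd i j i' j' (by decide +revert)
  sq_add_one i j := by
    fin_cases i <;> fin_cases j <;> simp [S.rel_sq1, S.rel_sq2]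

lemma isComatrix_x : IsComatrix k S.x where
  comul_apply i j := by
    simpa only [chi_one, Fin.sum_univ_two] using S.comul_chi i j 1 le_rfl
  counit_apply := S.counit_x

lemma isComatrix_coeff {s : ℕ} (hs : s ≠ 0) (t : ℕ) : IsComatrix k (coeff S.x s t) :=
  S.isCheckered_x.isComatrix_coeff S.isComatrix_x hs t

lemma chi_n (i j : Fin 2) : chi S.x i j S.n = S.signLam (i + j) • chi S.x (i + 1) (j + 1) S.n := by
  have hlam : S.lam * S.lam = 1 := S.signLam_mul_self 1
  fin_cases i <;> fin_cases j <;> simp [signLam, S.rel_chi2, S.rel_chi1, smul_smul, hlam]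

lemma coeff_n (s : ℕ) (i j : Fin 2) :
    coeff S.x s S.n i j = S.signLam (i + j) • coeff S.x s S.n (i + 1) (j + 1) := by
  rw [coeff, coeff, S.chi_n, mul_smul_comm, S.isCheckered_x.pow_two_mul_add]

lemma x_pow_two_mul (i j : Fin 2) (s : ℕ) : S.x i j ^ (2 * s) = S.x 0 (i + j) ^ (2 * s) := by
  simpa [add_right_comm i j i, fin_two_add_self] using
    S.isCheckered_x.pow_two_mul_add 0 (i + j) i s

lemma pow_two_mul_N_mul_x (i j : Fin 2) :
    S.x i j ^ (2 * S.N) * S.x i j = S.signMu (i + j) • S.x i j := by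
  have hzero {a : Fin 2} (ha : a ≠ i + j) : S.x 0 a ^ (2 * S.N) * S.x i j = 0 := by
    simpa using S.isCheckered_x.pow_mul_pow_eq_zero (i := 0) (by rwa [zero_add])
      (mul_ne_zero two_ne_zero S.N_ne_zero) one_ne_zero
  have hone : S.x 0 0 ^ (2 * S.N) * S.x i j + S.μ • (S.x 0 1 ^ (2 * S.N) * S.x i j) = S.x i j := by
    rw [← smul_mul_assoc, ← add_mul, S.rel_mu, one_mul]
  rw [x_pow_two_mul]
  generalize i + j = a at hzero ⊢
  fin_cases a
  · rw [hzero (a := 1) (by decide), smul_zero, add_zero] at hone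
    exact hone.trans (one_smul _ _).symm
  · rw [hzero (a := 0) (by decide), zero_add] at hone
    have hμ : S.μ * S.μ = 1 := S.signMu_mul_self 1
    calc S.x 0 1 ^ (2 * S.N) * S.x i j
        = S.μ • (S.μ • (S.x 0 1 ^ (2 * S.N) * S.x i j)) := by rw [smul_smul, hμ, one_smul]
      _ = S.μ • S.x i j := by rw [hone]

lemma coeff_N_succ (t : ℕ) (i j : Fin 2) :
    coeff S.x S.N (t + 1) i j = S.signMu (i + j) • chi S.x i j (t + 1) := by
  rw [coeff, chi_succ, ← mul_assoc, pow_two_mul_N_mul_x, smul_mul_assoc]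

lemma chi_succ_eq_signMu_smul_coeff (t : ℕ) (i j : Fin 2) :
    chi S.x i j (t + 1) = S.signMu (i + j) • coeff S.x S.N (t + 1) i j := by
  rw [coeff_N_succ, smul_smul, signMu_mul_self, one_smul]

/-- The index set of `S.basis`. -/
abbrev Index : Type := Fin 2 × Fin 2 × Fin S.N × Fin S.n

/-- The pair `(s, t)` for which the basis vector with this index is an entry of `coeff x s t`. Row
`0` carries the exponents `1 ≤ t ≤ n` and row `1` the exponents `0 ≤ t < n`. -/
def block (q : S.Index) : ℕ × ℕ := (q.2.2.1 + 1, q.2.2.2 + q.1.rev)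

/-- The entry of `coeff x s t` that `S.basis` has at the index `q`. -/
def basisVec (q : S.Index) : A := coeff S.x (S.block q).1 (S.block q).2 q.1 q.2.1

lemma mem_span_basisVec_of_row_zero {s t : ℕ} (hs : s ≠ 0) (hsN : s ≤ S.N) (ht : t < S.n)
    (j : Fin 2) : coeff S.x s (t + 1) 0 j ∈ Submodule.span k (Set.range S.basisVec) := by
  obtain ⟨s, rfl⟩ := Nat.exists_eq_succ_of_ne_zero hs
  exact Submodule.subset_span ⟨(0, j, ⟨s, hsN⟩, ⟨t, ht⟩), rfl⟩

lemma top_le_span_basisVec : ⊤ ≤ Submodule.span k (Set.range S.basisVec) := by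
  have hmem (a : Fin 2) (σ τ : ℕ) (hσ : σ < 2 * S.N) (hτ : τ < S.n) :
      S.x 0 a ^ (σ + 1) * chi S.x 1 (a + 1) τ ∈ Submodule.span k (Set.range S.basisVec) := by
    rcases Nat.even_or_odd' σ with ⟨r, rfl | rfl⟩
    · have hchi : S.x 0 a ^ (2 * r + 1) * chi S.x 1 (a + 1) τ = coeff S.x r (τ + 1) 0 a := by
        rw [pow_succ, mul_assoc]
        rfl
      rw [hchi]
      rcases eq_or_ne r 0 with rfl | hr
      · have h0 : coeff S.x 0 (τ + 1) 0 a = S.signMu (0 + a) • coeff S.x S.N (τ + 1) 0 a := by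
          rw [← chi_succ_eq_signMu_smul_coeff, coeff, mul_zero, pow_zero, one_mul]
        rw [h0]
        exact Submodule.smul_mem _ _ (S.mem_span_basisVec_of_row_zero
          S.N_ne_zero le_rfl hτ a)
      · exact S.mem_span_basisVec_of_row_zero hr (by omega) hτ a
    · have hcoeff : S.x 0 a ^ (2 * r + 1 + 1) * chi S.x 1 (a + 1) τ
          = coeff S.x (r + 1) τ 1 (a + 1) := by
        exact congrArg (· * _) (S.isCheckered_x.pow_two_mul_add 0 a 1 (r + 1)).symm
      rw [hcoeff]
      exact Submodule.subset_span ⟨(1, a + 1, ⟨r, by omega⟩, ⟨τ, hτ⟩), rfl⟩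
  rw [← S.basis_span, Submodule.span_le]
  rintro _ ⟨⟨a, σ, τ⟩, rfl⟩
  fin_cases a
  · exact hmem 0 σ τ σ.2 τ.2
  · exact hmem 1 σ τ σ.2 τ.2

lemma card_index : Fintype.card S.Index = Module.finrank k A := by
  rw [Module.finrank_eq_card_basis (Module.Basis.mk S.basis_indep S.basis_span.ge)]
  simp only [Fintype.card_prod, Fintype.card_fin]
  ring

/-- The basis of `A` made of entries of the arrays `coeff x s t`, `1 ≤ s ≤ N`. Up to signs it is the
basis in the definition of `Suzuki`, reindexed so that each array occupies a block. -/
def basis : Module.Basis S.Index k A :=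
  basisOfTopLeSpanOfCardEqFinrank S.basisVec S.top_le_span_basisVec S.card_index

lemma basis_apply (q : S.Index) : S.basis q = coeff S.x (S.block q).1 (S.block q).2 q.1 q.2.1 :=
  congrFun (coe_basisOfTopLeSpanOfCardEqFinrank _ _ _) q

lemma exists_coeff_eq_smul_basis {s t : ℕ} (hs : s ≠ 0) (hsN : s ≤ S.N) (ht : t ≤ S.n)
    (i j : Fin 2) :
    ∃ u : k, u ≠ 0 ∧ ∃ q, S.block q = (s, t) ∧ coeff S.x s t i j = u • S.basis q := by
  obtain ⟨s, rfl⟩ := Nat.exists_eq_succ_of_ne_zero hs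
  fin_cases i
  · rcases t with - | t
    · refine ⟨1, one_ne_zero, (1, j + 1, ⟨s, hsN⟩, ⟨0, S.n_pos⟩), rfl, ?_⟩
      rw [one_smul, basis_apply]
      exact congrArg (· * 1) (S.isCheckered_x.pow_two_mul_add 0 j 1 _).symm
    · exact ⟨1, one_ne_zero, (0, j, ⟨s, hsN⟩, ⟨t, ht⟩), rfl, by rw [one_smul, basis_apply]; rfl⟩
  · rcases ht.lt_or_eq with ht | rfl
    · exact ⟨1, one_ne_zero, (1, j, ⟨s, hsN⟩, ⟨t, ht⟩), rfl, by rw [one_smul, basis_apply]; rfl⟩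
    · have hn : S.n - 1 + 1 = S.n := Nat.sub_add_cancel S.n_pos
      have hblock : S.block (0, j + 1, ⟨s, hsN⟩, ⟨S.n - 1, by omega⟩) = (s + 1, S.n) :=
        Prod.ext rfl hn
      refine ⟨S.signLam (1 + j), S.signLam_ne_zero _, _, hblock, ?_⟩
      rw [basis_apply, hblock]
      exact S.coeff_n (s + 1) 1 j

lemma coeff_ne_zero {s t : ℕ} (hs : s ≠ 0) (hsN : s ≤ S.N) (ht : t ≤ S.n) (i j : Fin 2) :
    coeff S.x s t i j ≠ 0 := by
  obtain ⟨u, hu, q, -, hq⟩ := S.exists_coeff_eq_smul_basis hs hsN ht i j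
  rw [hq]
  exact smul_ne_zero hu (S.basis.ne_zero q)

lemma linearIndependent_coeff {s t : ℕ} (hs : s ≠ 0) (hsN : s ≤ S.N) (ht : t ≠ 0) (htn : t < S.n) :
    LinearIndependent k fun p : Fin 2 × Fin 2 => coeff S.x s t p.1 p.2 := by
  let g (p : Fin 2 × Fin 2) : S.Index :=
    (p.1, p.2, ⟨s - 1, by omega⟩, ⟨t - (p.1.rev : ℕ), by omega⟩)
  have hg : Function.Injective g := fun p p' h =>
    Prod.ext (congrArg (·.1) h) (congrArg (·.2.1) h)
  convert S.basis.linearIndependent.comp g hg with p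
  have hrev : (p.1.rev : ℕ) ≤ t := by omega
  have hblock : S.block (g p) = (s, t) :=
    Prod.ext (Nat.sub_add_cancel (Nat.one_le_iff_ne_zero.mpr hs)) (Nat.sub_add_cancel hrev)
  rw [Function.comp_apply, basis_apply, hblock]

lemma x_pow_two_mul_injOn : Set.InjOn (fun r => S.x 0 0 ^ (2 * r)) (Set.Icc 1 S.N) := by
  have hpow (r : Fin S.N) : S.x 0 0 ^ (2 * (r + 1 : ℕ)) = S.basis (1, 1, r, ⟨0, S.n_pos⟩) := by
    rw [basis_apply, ← S.isCheckered_x.pow_two_mul_add 0 0 1]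
    exact (mul_one _).symm
  rintro (- | r) ⟨hr, hrN⟩ (- | r') ⟨hr', hrN'⟩ h
  any_goals omega
  have hind := S.basis.injective ((hpow ⟨r, hrN⟩).symm.trans (h.trans (hpow ⟨r', hrN'⟩)))
  exact congrArg (fun q : S.Index => (q.2.2.1 : ℕ) + 1) hind

lemma linearIndependent_x : LinearIndependent k fun p : Fin 2 × Fin 2 => S.x p.1 p.2 := by
  convert (S.linearIndependent_coeff S.N_ne_zero le_rfl one_ne_zero S.hn).units_smul
    fun p => Units.mk0 _ (S.signMu_ne_zero (p.1 + p.2)) with p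
  rw [← chi_one S.x]
  exact S.chi_succ_eq_signMu_smul_coeff 0 p.1 p.2

lemma not_commute_x (hn : 2 < S.n) : ¬ Commute (S.x 0 0) (S.x 1 1) := by
  have hcoeff (i : Fin 2) : coeff S.x S.N 2 i i = S.x i i * S.x (i + 1) (i + 1) := by
    rw [coeff_N_succ, fin_two_add_self, chi_succ, chi_one]
    exact one_smul _ _
  intro h
  have heq : coeff S.x S.N 2 0 0 = coeff S.x S.N 2 1 1 := by
    rw [hcoeff, hcoeff]
    exact h
  simpa using (S.linearIndependent_coeff S.N_ne_zero le_rfl two_ne_zero hn).injective (a₁ := (0, 0))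
    (a₂ := (1, 1)) heq

/-- The projection onto the span of `coeff x b.1 b.2` along the remaining vectors of `S.basis`. -/
def blockProj (b : ℕ × ℕ) : A →ₗ[k] A :=
  S.basis.constr k fun q => if S.block q = b then S.basis q else 0

lemma blockProj_basis (b : ℕ × ℕ) (q : S.Index) :
    S.blockProj b (S.basis q) = if S.block q = b then S.basis q else 0 :=
  S.basis.constr_basis k _ q

lemma block_bounds (q : S.Index) :
    (S.block q).1 ≠ 0 ∧ (S.block q).1 ≤ S.N ∧ (S.block q).2 ≤ S.n := by
  obtain ⟨i, j, s, t⟩ := q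
  simp only [block]
  omega

lemma blockProj_coeff {s t : ℕ} (hs : s ≠ 0) (hsN : s ≤ S.N) (ht : t ≤ S.n) (i j : Fin 2)
    (b : ℕ × ℕ) :
    S.blockProj b (coeff S.x s t i j) = if (s, t) = b then coeff S.x s t i j else 0 := by
  obtain ⟨u, -, q, hq, hcoeff⟩ := S.exists_coeff_eq_smul_basis hs hsN ht i j
  rw [hcoeff, map_smul, blockProj_basis, hq, smul_ite, smul_zero]

lemma isBicomoduleMap_blockProj (b : ℕ × ℕ) : IsBicomoduleMap (S.blockProj b) := by
  have hproj (q : S.Index) (i j : Fin 2) :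
      S.blockProj b (coeff S.x (S.block q).1 (S.block q).2 i j)
        = if S.block q = b then coeff S.x (S.block q).1 (S.block q).2 i j else 0 :=
    S.blockProj_coeff (S.block_bounds q).1 (S.block_bounds q).2.1 (S.block_bounds q).2.2 i j b
  have hcomul (q : S.Index) := (S.isComatrix_coeff (S.block_bounds q).1 (S.block q).2).comul_apply
  constructor
  · refine LinearMap.congr_fun (S.basis.ext (f₁ := Coalgebra.comul ∘ₗ S.blockProj b)
      (f₂ := (S.blockProj b).rTensor A ∘ₗ Coalgebra.comul) fun q => ?_)
    simp only [LinearMap.comp_apply, basis_apply, hproj, apply_ite, hcomul, map_zero, map_sum,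
      LinearMap.rTensor_tmul]
    split_ifs <;> simp
  · refine LinearMap.congr_fun (S.basis.ext (f₁ := Coalgebra.comul ∘ₗ S.blockProj b)
      (f₂ := (S.blockProj b).lTensor A ∘ₗ Coalgebra.comul) fun q => ?_)
    simp only [LinearMap.comp_apply, basis_apply, hproj, apply_ite, hcomul, map_zero, map_sum,
      LinearMap.lTensor_tmul]
    split_ifs <;> simp

lemma sum_blockProj : ∑ b ∈ Finset.univ.image S.block, S.blockProj b = LinearMap.id := by
  refine S.basis.ext fun q => ?_
  simp [LinearMap.sum_apply, blockProj_basis]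

lemma range_blockProj_le (b : ℕ × ℕ) : LinearMap.range (S.blockProj b)
    ≤ Submodule.span k (Set.range fun p : Fin 2 × Fin 2 => coeff S.x b.1 b.2 p.1 p.2) := by
  rw [blockProj, Module.Basis.constr_range, Submodule.span_le]
  rintro _ ⟨q, rfl⟩
  dsimp only
  split_ifs with hq
  · rw [basis_apply, hq]
    exact Submodule.subset_span ⟨(q.1, q.2.1), rfl⟩
  · exact Submodule.zero_mem _

lemma commute_coeff (s : ℕ) {t : ℕ} (ht : Even t ∨ t = S.n ∨ 2 * t = S.n) :
    Commute (coeff S.x s t 0 0) (coeff S.x s t 1 1) := by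
  rcases Nat.even_or_odd t with heven | hodd
  · exact S.isCheckered_x.commute_coeff_of_even s heven 0 0
  rcases ht with h | rfl | h
  · exact absurd h (Nat.not_even_iff_odd.mpr hodd)
  · rw [S.coeff_n s 0 0]
    exact (Commute.refl _).smul_left _
  · have h0 := S.isCheckered_x.coeff_mul_coeff_of_odd s hodd 0 0
    have h1 := S.isCheckered_x.coeff_mul_coeff_of_odd s hodd 1 1
    rw [h, S.rel_chi2, ← S.isCheckered_x.pow_two_mul_add 0 0 1] at h0
    rw [h] at h1
    exact h0.trans h1.symm

lemma exists_eq_twist {y : Fin 2 → Fin 2 → A} (hy : IsComatrix k y)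
    (hli : LinearIndependent k fun p : Fin 2 × Fin 2 => y p.1 p.2)
    (hy0 : ∀ {i j i' j' : Fin 2}, i + j ≠ i' + j' → y i j * y i' j' = 0)
    (hcomm : ¬ Commute (y 0 0) (y 1 1)) :
    ∃ s t : ℕ, (s ≠ 0 ∧ s ≤ S.N) ∧ t < S.n ∧ Odd t ∧ 2 * t ≠ S.n ∧
      ∃ ξ : k, ξ ≠ 0 ∧ ∃ e, y = twist ξ e (coeff S.x s t) := by
  obtain ⟨b, hb, hmem⟩ := hy.exists_forall_mem_range hli
    (fun b _ => S.isBicomoduleMap_blockProj b) S.sum_blockProj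
  obtain ⟨q, -, rfl⟩ := Finset.mem_image.mp hb
  obtain ⟨hs, hsN, htn⟩ := S.block_bounds q
  generalize S.block q = b at hmem hs hsN htn
  obtain ⟨s, t⟩ := b
  obtain ⟨P, Q, hPQ, hconj⟩ := hy.exists_conjugate (S.isComatrix_coeff hs t) hli
    fun i j => S.range_blockProj_le _ (hmem i j)
  have hcoeff0 {i j i' j' : Fin 2} := S.isCheckered_x.coeff_mul_coeff_eq_zero hs t
    (i := i) (j := j) (i' := i') (j' := j')
  have hcoeff : ¬ Commute (coeff S.x s t 0 0) (coeff S.x s t 1 1) := fun h =>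
    hcomm (commute_diag_of_conjugate hPQ hconj hcoeff0 h)
  have ht : ¬ (Even t ∨ t = S.n ∨ 2 * t = S.n) := fun h => hcoeff (S.commute_coeff s h)
  rw [not_or, not_or, Nat.not_even_iff_odd] at ht
  refine ⟨s, t, ⟨hs, hsN⟩, htn.lt_of_ne ht.2.1, ht.1, ht.2.2, ?_⟩
  exact exists_eq_twist_of_conjugate hPQ hconj
    (mul_eq_zero_of_conjugate hPQ hconj (S.isCheckered_x.isCheckered_coeff hs ht.1) hy0 hcoeff)

lemma x_pow_two_mul_N_mul (i j : Fin 2) {r : ℕ} (hr : r ≠ 0) :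
    S.x i j ^ (2 * (S.N * r)) = S.signMu (i + j) ^ (r + 1) • S.x i j ^ (2 * S.N) := by
  have hstep : S.x i j ^ (2 * S.N) * S.x i j ^ (2 * S.N)
      = S.signMu (i + j) • S.x i j ^ (2 * S.N) := by
    obtain ⟨m, hm⟩ := Nat.exists_eq_succ_of_ne_zero (mul_ne_zero two_ne_zero S.N_ne_zero)
    nth_rw 2 [hm]
    rw [pow_succ', ← mul_assoc, pow_two_mul_N_mul_x, smul_mul_assoc, ← pow_succ', hm]
  induction r, Nat.one_le_iff_ne_zero.mpr hr using Nat.le_induction with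
  | base => rw [mul_one, sq, signMu_mul_self, one_smul]
  | succ r hr ih =>
    rw [mul_add_one, mul_add, pow_add, ih (by omega), smul_mul_assoc, hstep, smul_smul, ← pow_succ]

lemma chi_mul_n (hn : Odd S.n) (m : ℕ) (i j : Fin 2) :
    chi S.x i j (m * S.n) = S.signLam (i + j) ^ m • chi S.x (i + 1) (j + 1) (m * S.n) := by
  induction m generalizing i j with
  | zero => simp [chi]
  | succ m ih =>
    rw [Nat.succ_mul, add_comm, chi_odd_add _ hn, chi_odd_add _ hn, ih, S.chi_n,
      fin_two_add_add_add, smul_mul_smul_comm, ← pow_succ']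

lemma coeff_n_mul (hn : Odd S.n) (s : ℕ) {t : ℕ} (ht : Odd t) (i j : Fin 2) :
    coeff S.x s (S.n * t) i j
      = S.signLam (i + j) • coeff S.x s (S.n * t) (i + 1) (j + 1) := by
  obtain ⟨r, rfl⟩ := ht
  rw [coeff, coeff, mul_comm S.n, S.chi_mul_n hn, mul_smul_comm, S.isCheckered_x.pow_two_mul_add,
    pow_succ, pow_mul, sq, signLam_mul_self, one_pow, one_mul]

lemma chi_n_ne_zero (i j : Fin 2) : chi S.x i j S.n ≠ 0 := by
  rw [← Nat.sub_add_cancel S.n_pos, chi_succ_eq_signMu_smul_coeff, Nat.sub_add_cancel S.n_pos]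
  exact smul_ne_zero (S.signMu_ne_zero _) (S.coeff_ne_zero S.N_ne_zero le_rfl le_rfl i j)

section Parameters

variable {S} {s t : ℕ} {ξ : k} {e : Fin 2} {f : A →ₐ[k] A}

lemma map_x_pow_two (hf : ∀ i j, f (S.x i j) = twist ξ e (coeff S.x s t) i j) (ht : Odd t)
    (i j : Fin 2) :
    f (S.x i j ^ 2) = gaugeFactor ξ i j ^ 2 • S.x i j ^ (2 * (2 * s + t)) := by
  rw [map_pow, hf, twist, smul_pow, S.isCheckered_x.coeff_sq s ht, S.isCheckered_x.pow_two_mul_add]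

lemma map_x_pow_two_mul (hf : ∀ i j, f (S.x i j) = twist ξ e (coeff S.x s t) i j) (ht : Odd t)
    (i j : Fin 2) (r : ℕ) :
    f (S.x i j ^ (2 * r)) = gaugeFactor ξ i j ^ (2 * r) • S.x i j ^ (2 * (r * (2 * s + t))) := by
  rw [pow_mul, map_pow, map_x_pow_two hf ht, smul_pow, ← pow_mul, ← pow_mul]
  ring_nf

lemma gcd_eq_one (hinj : Function.Injective f)
    (hf : ∀ i j, f (S.x i j) = twist ξ e (coeff S.x s t) i j) (ht : Odd t) :
    Nat.gcd (2 * s + t) S.N = 1 := by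
  set d := Nat.gcd (2 * s + t) S.N
  obtain ⟨m, hm⟩ : d ∣ 2 * s + t := Nat.gcd_dvd_left _ _
  obtain ⟨N', hN'⟩ : d ∣ S.N := Nat.gcd_dvd_right _ _
  have hN'0 : N' ≠ 0 := right_ne_zero_of_mul (hN' ▸ S.N_ne_zero)
  have hodd : 2 * s + t ≠ 0 := (((even_two_mul s).add_odd ht).pos).ne'
  have hm0 : m ≠ 0 := right_ne_zero_of_mul (hm ▸ hodd)
  have hone {r : ℕ} (hr : r ≠ 0) : S.x 0 0 ^ (2 * (S.N * r)) = S.x 0 0 ^ (2 * S.N) := by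
    simpa [signMu] using S.x_pow_two_mul_N_mul 0 0 hr
  have hfpow (r : ℕ) : f (S.x 0 0 ^ (2 * r)) = S.x 0 0 ^ (2 * (r * (2 * s + t))) := by
    rw [map_x_pow_two_mul hf ht, gaugeFactor_self, one_pow, one_smul]
  have hpow : S.x 0 0 ^ (2 * N') = S.x 0 0 ^ (2 * S.N) := by
    apply hinj
    have hassoc : N' * (d * m) = S.N * m := by rw [hN']; ring
    rw [hfpow, hfpow, hone hodd, hm, hassoc, hone hm0]
  have hle : N' ≤ S.N := Nat.le_of_dvd S.hN (Dvd.intro_left d hN'.symm)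
  have heq : N' = S.N :=
    S.x_pow_two_mul_injOn ⟨Nat.one_le_iff_ne_zero.mpr hN'0, hle⟩ ⟨S.hN, le_rfl⟩ hpow
  exact Nat.eq_of_mul_eq_mul_right (Nat.pos_of_ne_zero hN'0) (by rw [← hN', one_mul, heq])

lemma pow_two_mul_N_eq_one (hf : ∀ i j, f (S.x i j) = twist ξ e (coeff S.x s t) i j) (ht : Odd t) :
    ξ ^ (2 * S.N) = 1 := by
  have hodd : Odd (2 * s + t) := (even_two_mul s).add_odd ht
  have hfpow (i j : Fin 2) :
      f (S.x i j ^ (2 * S.N)) = gaugeFactor ξ i j ^ (2 * S.N) • S.x i j ^ (2 * S.N) := by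
    obtain ⟨r, hr⟩ := hodd.add_one
    rw [map_x_pow_two_mul hf ht, S.x_pow_two_mul_N_mul i j hodd.pos.ne', hr, pow_add, ← mul_pow,
      signMu_mul_self, one_pow, one_smul]
  have hmap := congrArg f S.rel_mu
  rw [map_add, map_smul, hfpow, hfpow, map_one, gaugeFactor_self, one_pow, one_smul,
    ← S.rel_mu] at hmap
  have hμ : S.μ ≠ 0 := S.signMu_ne_zero 1
  have hx : S.x 0 1 ^ (2 * S.N) ≠ 0 := by
    simpa [coeff, chi] using S.coeff_ne_zero S.N_ne_zero le_rfl (Nat.zero_le _) 0 1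
  have hsmul : ξ ^ (2 * S.N) • S.x 0 1 ^ (2 * S.N) = (1 : k) • S.x 0 1 ^ (2 * S.N) := by
    rw [one_smul]
    exact smul_right_injective A hμ (add_left_cancel hmap)
  exact smul_left_injective k hx hsmul

lemma map_chi_n (hξ : ξ ≠ 0) (hf : ∀ i j, f (S.x i j) = twist ξ e (coeff S.x s t) i j)
    (ht : Odd t) (hn : Odd S.n) (i j : Fin 2) :
    f (chi S.x i j S.n) = twist ξ e (coeff S.x (S.n * s) (S.n * t)) i j := by
  simp only [map_chi, hf]
  rw [chi_twist_of_odd hξ e _ i j hn]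
  exact congrArg _ (S.isCheckered_x.chi_coeff s ht _ _ _)

lemma sq_eq_one_of_odd (hinj : Function.Injective f) (hξ : ξ ≠ 0)
    (hf : ∀ i j, f (S.x i j) = twist ξ e (coeff S.x s t) i j) (ht : Odd t) (hn : Odd S.n) :
    ξ ^ 2 = 1 := by
  set w := coeff S.x (S.n * s) (S.n * t) (1 + e) (0 + e) with hw
  have hfchi : f (chi S.x 1 0 S.n) = ξ⁻¹ • w := map_chi_n hξ hf ht hn 1 0
  have hswap : coeff S.x (S.n * s) (S.n * t) (0 + e) (1 + e) = S.signLam 1 • w := by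
    rw [S.coeff_n_mul hn _ ht, fin_two_add_add_add, add_right_comm, add_right_comm 1,
      fin_two_add_self, hw]
    rfl
  have hw0 : w ≠ 0 := by
    have hchi := (map_ne_zero_iff f hinj).mpr (S.chi_n_ne_zero 1 0)
    exact right_ne_zero_of_smul (hfchi ▸ hchi)
  have hmap : ξ • S.signLam 1 • w = S.signLam 1 • ξ⁻¹ • w := by
    rw [← hfchi, ← hswap, ← map_smul]
    exact (map_chi_n hξ hf ht hn 0 1).symm.trans (congrArg f (S.chi_n 0 1))
  rw [smul_comm] at hmap
  have hinv := smul_left_injective k hw0 (smul_right_injective A (S.signLam_ne_zero 1) hmap)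
  exact (sq ξ).trans (mul_eq_one_iff_eq_inv₀ hξ |>.mpr hinv)

end Parameters

lemma eq_twist_iff {y : Fin 2 → Fin 2 → A} {s t : ℕ} {ξ : k} :
    (∃ e, y = twist ξ e (coeff S.x s t)) ↔
      (y 0 0 = S.x 0 0 ^ (2 * s) * chi S.x 0 0 t ∧
        y 1 1 = S.x 0 0 ^ (2 * s) * chi S.x 1 1 t ∧
        y 0 1 = ξ • (S.x 0 1 ^ (2 * s) * chi S.x 0 1 t) ∧
        y 1 0 = ξ⁻¹ • (S.x 0 1 ^ (2 * s) * chi S.x 1 0 t)) ∨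
      (y 0 0 = S.x 0 0 ^ (2 * s) * chi S.x 1 1 t ∧
        y 1 1 = S.x 0 0 ^ (2 * s) * chi S.x 0 0 t ∧
        y 0 1 = ξ • (S.x 0 1 ^ (2 * s) * chi S.x 1 0 t) ∧
        y 1 0 = ξ⁻¹ • (S.x 0 1 ^ (2 * s) * chi S.x 0 1 t)) := by
  have h11 : S.x 1 1 ^ (2 * s) = S.x 0 0 ^ (2 * s) := S.x_pow_two_mul 1 1 s
  have h10 : S.x 1 0 ^ (2 * s) = S.x 0 1 ^ (2 * s) := S.x_pow_two_mul 1 0 s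
  simp only [funext_iff, twist, gaugeFactor, coeff, Fin.forall_fin_two, Fin.exists_fin_two,
    Matrix.of_apply, Matrix.cons_val', Matrix.cons_val_fin_one, Matrix.cons_val_zero,
    Matrix.cons_val_one, one_smul, zero_add, add_zero, Fin.reduceAdd, Fin.isValue, h10, h11]
  tauto

lemma exists_eq_twist_of_isHopfAut (hn : 2 < S.n) {φ : A ≃ₗ[k] A} (h : IsHopfAut k φ) :
    ∃ (s t : ℕ) (ξ : k), (s ≠ 0 ∧ s ≤ S.N) ∧ t < S.n ∧ Odd t ∧ 2 * t ≠ S.n ∧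
      Nat.gcd (2 * s + t) S.N = 1 ∧ (Even S.n → ξ ^ (2 * S.N) = 1) ∧ (Odd S.n → ξ ^ 2 = 1) ∧
      ∃ e, (fun i j => φ (S.x i j)) = twist ξ e (coeff S.x s t) := by
  let f : A →ₐ[k] A := AlgHom.ofLinearMap φ.toLinearMap h.2.1 h.1
  have hinj : Function.Injective f := φ.injective
  obtain ⟨s, t, hs, htn, ht, h2t, ξ, hξ, e, he⟩ := S.exists_eq_twist
    (h.isComatrix_map S.isComatrix_x) (S.linearIndependent_x.map' _ φ.ker)
    (fun hij => by rw [← h.1, S.isCheckered_x.mul_eq_zero hij, map_zero])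
    fun hcomm => S.not_commute_x hn (hinj ((h.1 _ _).trans (hcomm.trans (h.1 _ _).symm)))
  have hf (i j) : f (S.x i j) = twist ξ e (coeff S.x s t) i j := congrFun₂ he i j
  exact ⟨s, t, ξ, hs, htn, ht, h2t, gcd_eq_one hinj hf ht, fun _ => pow_two_mul_N_eq_one hf ht,
    sq_eq_one_of_odd hinj hξ hf ht, e, he⟩

lemma isHopfAut_of_eq_twist {φ : A ≃ₗ[k] A} (hmul : ∀ a b, φ (a * b) = φ a * φ b)
    (hone : φ 1 = 1) {s t : ℕ} {ξ : k} {e : Fin 2} (hs : s ≠ 0) (hξ : ξ ≠ 0)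
    (he : (fun i j => φ (S.x i j)) = twist ξ e (coeff S.x s t)) : IsHopfAut k φ := by
  let f : A →ₐ[k] A := AlgHom.ofLinearMap φ.toLinearMap hone hmul
  have hfx : IsComatrix k fun i j => f (S.x i j) :=
    he ▸ (S.isComatrix_coeff hs t).twist hξ e
  exact ⟨hmul, hone, S.isComatrix_x.comul_map_of_adjoin_eq_top f hfx S.gen,
    S.isComatrix_x.counit_map_of_adjoin_eq_top f hfx S.gen⟩

end Suzuki

/-- for `n > 2`, a bijective `k`-linear map `φ` is a Hopf algebra
automorphism of `A_{Nn}^{μλ}` iff it is the algebra map `Ψ_ξ^{s,t}` or `Φ_ξ^{s,t}`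
for suitable `s, t, ξ`. -/
theorem stmt17 (k A : Type*) [Field k] [CharZero k] [IsAlgClosed k]
    [Ring A] [HopfAlgebra k A] (S : Suzuki k A) (hn : 2 < S.n)
    (φ : A ≃ₗ[k] A) :
    IsHopfAut k φ
      ↔ (∀ a b : A, φ (a * b) = φ a * φ b) ∧ φ 1 = 1 ∧
        ∃ (s t : ℕ) (ξ : k),
          1 ≤ s ∧ s ≤ S.N ∧ 1 ≤ t ∧ t ≤ S.n - 1 ∧ Odd t ∧ 2 * t ≠ S.n ∧
          Nat.gcd (2 * s + t) S.N = 1 ∧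
          (Even S.n → ξ ^ (2 * S.N) = 1) ∧ (Odd S.n → ξ ^ 2 = 1) ∧
          ((φ (S.x 0 0) = S.x 0 0 ^ (2 * s) * chi S.x 0 0 t ∧
            φ (S.x 1 1) = S.x 0 0 ^ (2 * s) * chi S.x 1 1 t ∧
            φ (S.x 0 1) = ξ • (S.x 0 1 ^ (2 * s) * chi S.x 0 1 t) ∧
            φ (S.x 1 0) = ξ⁻¹ • (S.x 0 1 ^ (2 * s) * chi S.x 1 0 t))
          ∨ (φ (S.x 0 0) = S.x 0 0 ^ (2 * s) * chi S.x 1 1 t ∧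
            φ (S.x 1 1) = S.x 0 0 ^ (2 * s) * chi S.x 0 0 t ∧
            φ (S.x 0 1) = ξ • (S.x 0 1 ^ (2 * s) * chi S.x 1 0 t) ∧
            φ (S.x 1 0) = ξ⁻¹ • (S.x 0 1 ^ (2 * s) * chi S.x 0 1 t))) := by
  constructor
  · intro h
    obtain ⟨s, t, ξ, ⟨hs, hsN⟩, htn, ht, h2t, hgcd, heven, hodd, he⟩ :=
      S.exists_eq_twist_of_isHopfAut hn h
    exact ⟨h.1, h.2.1, s, t, ξ, Nat.one_le_iff_ne_zero.mpr hs, hsN, ht.pos,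
      Nat.le_sub_one_of_lt htn, ht, h2t, hgcd, heven, hodd, S.eq_twist_iff.mp he⟩
  · rintro ⟨hmul, hone, s, t, ξ, hs, -, -, -, -, -, -, heven, hodd, hφ⟩
    obtain ⟨e, he⟩ := S.eq_twist_iff (y := fun i j => φ (S.x i j)) |>.mpr hφ
    have hξ : ξ ≠ 0 := (Nat.even_or_odd S.n).elim
      (fun h => (IsUnit.of_pow_eq_one (heven h) (mul_ne_zero two_ne_zero S.N_ne_zero)).ne_zero)
      fun h => (IsUnit.of_pow_eq_one (hodd h) two_ne_zero).ne_zero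
    exact S.isHopfAut_of_eq_twist hmul hone (Nat.one_le_iff_ne_zero.mp hs) hξ he
end
end
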